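/- arXiv:2210.00711 — 6 statements merged into one kernel-verified Lean document; each statement's English description precedes it below -/
import Mathlib

section
/- Let R be a commutative noetherian ring, n ≥ 2, C an (n−1)-semidualizing finitely generated R-module, and x ∈ R a nonzerodivisor on R. Then C/xC is an (n−2)-semidualizing module over R/xR. -/
open CategoryTheory

/-- A finitely generated module `C` over a commutative ring `R` is `m`-semidualizing if the
natural homothety map `R → Hom_R(C,C)` is an isomorphism and `Ext^i_R(C,C) = 0` for
all `0 < i ≤ m`. -/
def IsSemidualizing (R : Type) [CommRing R] (C : Type) [AddCommGroup C] [Module R C]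
    (m : ℕ) : Prop :=
  Module.Finite R C ∧ Function.Bijective (LinearMap.lsmul R C) ∧
    ∀ i : ℕ, 0 < i → i ≤ m →
      Subsingleton (((Ext R (ModuleCat R) i).obj
        (Opposite.op (ModuleCat.of R C))).obj (ModuleCat.of R C))


section bridge
variable {R : Type} [CommRing R] 

theorem oldExt_subsingleton_iff {X Y : ModuleCat.{0} R} (P : ProjectiveResolution X) (i : ℕ) :
    Subsingleton (((Ext R (ModuleCat.{0} R) (i+1)).obj (Opposite.op X)).obj Y) ↔
    ∀ f : P.complex.X (i+1) ⟶ Y, P.complex.d (i+2) (i+1) ≫ f = 0 → 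
      ∃ g : P.complex.X i ⟶ Y, P.complex.d (i+1) i ≫ g = f := by
  rw [← ModuleCat.isZero_iff_subsingleton, (P.isoExt (i+1) Y).isZero_iff, ← HomologicalComplex.exactAt_iff_isZero_homology,
    HomologicalComplex.exactAt_iff' _ i (i+1) (i+2) (by simp) (by simp),
    ShortComplex.moduleCat_exact_iff]
  rfl

theorem newExt_subsingleton_iff {X Y : ModuleCat.{0} R} (P : ProjectiveResolution X) (i : ℕ) :
    Subsingleton (Abelian.Ext X Y (i+1)) ↔
    ∀ f : P.complex.X (i+1) ⟶ Y, P.complex.d (i+2) (i+1) ≫ f = 0 → 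
      ∃ g : P.complex.X i ⟶ Y, P.complex.d (i+1) i ≫ g = f := by
  constructor
  · intro h f hf
    exact (P.extMk_eq_zero_iff f (i+2) rfl hf i rfl).1 (Subsingleton.elim _ _)
  · intro h
    refine subsingleton_of_forall_eq 0 fun α => ?_
    obtain ⟨f, hf, rfl⟩ := P.extMk_surjective α (i+2) rfl
    exact (P.extMk_eq_zero_iff f (i+2) rfl hf i rfl).2 (h f hf)

theorem ext_bridge (X Y : ModuleCat.{0} R) (i : ℕ) (hi : 0 < i) :
    Subsingleton (((Ext R (ModuleCat.{0} R) i).obj (Opposite.op X)).obj Y) ↔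
      Subsingleton (Abelian.Ext X Y i) := by
  obtain ⟨i, rfl⟩ : ∃ j, i = j + 1 := ⟨i - 1, by omega⟩
  have P := projectiveResolution X
  rw [oldExt_subsingleton_iff P, newExt_subsingleton_iff P]

end bridge

section shift
variable {R : Type} [CommRing R] {F M N : Type} [AddCommGroup F] [Module R F] [AddCommGroup M]
  [Module R M] [AddCommGroup N] [Module R N]

abbrev ExtVan (R : Type) [CommRing R] (M N : Type) [AddCommGroup M]
    [Module R M] [AddCommGroup N] [Module R N] (i : ℕ) : Prop :=
  Subsingleton (Abelian.Ext (ModuleCat.of R M) (ModuleCat.of R N) i)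

theorem extVan_one_iff [Module.Projective R F] (π : F →ₗ[R] M) (hπ : Function.Surjective π) :
    ExtVan R M N 1 ↔ ∀ φ : LinearMap.ker π →ₗ[R] N, ∃ ψ : F →ₗ[R] N, ∀ k : LinearMap.ker π,
      ψ k = φ k := by
  have hS := LinearMap.shortExact_shortComplexKer hπ
  have : Projective (ModuleCat.of R F) := (IsProjective.iff_projective F).1 inferInstance
  constructor
  · intro h φ
    obtain ⟨y, hy⟩ := Abelian.Ext.contravariant_sequence_exact₁ hS (Y := ModuleCat.of R N)
      (Abelian.Ext.mk₀ (ModuleCat.ofHom φ)) (n₁ := 1) rfl (Subsingleton.elim _ _)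
    obtain ⟨ψ, rfl⟩ := (Abelian.Ext.mk₀_bijective _ _).2 y
    rw [Abelian.Ext.mk₀_comp_mk₀, (Abelian.Ext.mk₀_bijective _ _).1.eq_iff] at hy
    exact ⟨ψ.hom, fun k => LinearMap.congr_fun (congrArg ModuleCat.Hom.hom hy) k⟩
  · intro h
    refine subsingleton_of_forall_eq 0 fun α => ?_
    obtain ⟨y, rfl⟩ := Abelian.Ext.contravariant_sequence_exact₃ hS (Y := ModuleCat.of R N)
      α (Abelian.Ext.eq_zero_of_projective _) (n₀ := 0) rfl
    obtain ⟨φ, rfl⟩ := (Abelian.Ext.mk₀_bijective _ _).2 y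
    obtain ⟨ψ, hψ⟩ := h φ.hom
    have : φ = (LinearMap.shortComplexKer π).f ≫ ModuleCat.ofHom ψ := by
      ext k
      exact (hψ k).symm
    rw [this, ← Abelian.Ext.mk₀_comp_mk₀]
    exact hS.extClass_comp_assoc _

theorem extVan_succ_iff [Module.Projective R F] (π : F →ₗ[R] M) (hπ : Function.Surjective π)
    (i : ℕ) :
    ExtVan R M N (i + 2) ↔ ExtVan R (LinearMap.ker π) N (i + 1) := by
  have hS := LinearMap.shortExact_shortComplexKer hπ
  have : Projective (ModuleCat.of R F) := (IsProjective.iff_projective F).1 inferInstance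
  constructor
  · intro h
    refine subsingleton_of_forall_eq 0 fun α => ?_
    obtain ⟨y, rfl⟩ := Abelian.Ext.contravariant_sequence_exact₁ hS (Y := ModuleCat.of R N)
      α (n₁ := i + 2) (by omega) (Subsingleton.elim _ _)
    rw [Abelian.Ext.eq_zero_of_projective y]
    simp
  · intro h
    refine subsingleton_of_forall_eq 0 fun α => ?_
    obtain ⟨y, rfl⟩ := Abelian.Ext.contravariant_sequence_exact₃ hS (Y := ModuleCat.of R N)
      α (Abelian.Ext.eq_zero_of_projective _) (n₀ := i + 1) (by omega)
    have : y = 0 := Subsingleton.elim (h := h) _ _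
    rw [this]
    simp

/-- The second-variable vanishing along a short exact sequence. -/
theorem extVan_of_exact {A B D : Type} [AddCommGroup A] [Module R A] [AddCommGroup B] [Module R B]
    [AddCommGroup D] [Module R D] (f : A →ₗ[R] B) (g : B →ₗ[R] D) (hf : Function.Injective f)
    (hg : Function.Surjective g) (hfg : Function.Exact f g) (i : ℕ)
    (hB : ExtVan R M B i) (hA : ExtVan R M A (i + 1)) : ExtVan R M D i := by
  have hS := ModuleCat.shortComplex_shortExact
    (ModuleCat.shortComplexOfCompEqZero f g (hfg.linearMap_comp_eq_zero)) hfg hf hg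
  refine subsingleton_of_forall_eq 0 fun α => ?_
  obtain ⟨y, rfl⟩ := Abelian.Ext.covariant_sequence_exact₃ (ModuleCat.of R M) hS
      α (n₁ := i + 1) rfl (Subsingleton.elim (h := hA) _ _)
  have : y = 0 := Subsingleton.elim (h := hB) _ _
  rw [this]
  simp

theorem lift_of_extVan_one {A B D : Type} [AddCommGroup A] [Module R A] [AddCommGroup B]
    [Module R B]
    [AddCommGroup D] [Module R D] (f : A →ₗ[R] B) (g : B →ₗ[R] D) (hf : Function.Injective f)
    (hg : Function.Surjective g) (hfg : Function.Exact f g)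
    (hA : ExtVan R M A 1) (φ : M →ₗ[R] D) : ∃ ψ : M →ₗ[R] B, g ∘ₗ ψ = φ := by
  have hS := ModuleCat.shortComplex_shortExact
    (ModuleCat.shortComplexOfCompEqZero f g (hfg.linearMap_comp_eq_zero)) hfg hf hg
  obtain ⟨y, hy⟩ := Abelian.Ext.covariant_sequence_exact₃ (ModuleCat.of R M) hS
      (Abelian.Ext.mk₀ (ModuleCat.ofHom φ)) (n₁ := 1) rfl (Subsingleton.elim (h := hA) _ _)
  obtain ⟨ψ, rfl⟩ := (Abelian.Ext.mk₀_bijective _ _).2 y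
  rw [Abelian.Ext.mk₀_comp_mk₀, (Abelian.Ext.mk₀_bijective _ _).1.eq_iff] at hy
  exact ⟨ψ.hom, congrArg ModuleCat.Hom.hom hy⟩

end shift

section change

theorem extVan_change (R S : Type) [CommRing R] [CommRing S] [Algebra R S] (x : R)
    (hx : IsSMulRegular R x) (hS : Function.Surjective (algebraMap R S))
    (hker : ∀ r : R, algebraMap R S r = 0 → ∃ s, r = x * s) (hx0 : algebraMap R S x = 0)
    (N : Type) [AddCommGroup N] [Module R N] [Module S N] [IsScalarTower R S N] (i : ℕ) :
    ∀ (M M' : Type) [AddCommGroup M] [Module R M] [AddCommGroup M'] [Module R M'] [Module S M']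
      [IsScalarTower R S M'] (q : M →ₗ[R] M') (_ : Function.Surjective q)
      (_ : ∀ m, q m = 0 → ∃ m', m = x • m') (_ : IsSMulRegular M x),
      ExtVan R M N (i + 1) → ExtVan S M' N (i + 1) := by
  have key : ∀ (M M' : Type) [AddCommGroup M] [Module R M] [AddCommGroup M'] [Module R M']
      [Module S M']
      [IsScalarTower R S M'] (q : M →ₗ[R] M') (_ : Function.Surjective q)
      (_ : ∀ m, q m = 0 → ∃ m', m = x • m') (_ : IsSMulRegular M x),
      ∃ (π : (M →₀ R) →ₗ[R] M) (π' : (M →₀ S) →ₗ[S] M')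
        (qK : LinearMap.ker π →ₗ[R] LinearMap.ker π'), Function.Surjective π ∧
        Function.Surjective π' ∧ Function.Surjective qK ∧
        (∀ k, ((qK k : LinearMap.ker π') : M →₀ S) =
          Finsupp.mapRange.linearMap (Algebra.linearMap R S) (k : M →₀ R)) ∧
        (∀ k, qK k = 0 → ∃ k', k = x • k') ∧ IsSMulRegular (LinearMap.ker π) x := by
    intro M M' _ _ _ _ _ _ q hq hqk hxM
    let π : (M →₀ R) →ₗ[R] M := Finsupp.linearCombination R id
    let π' : (M →₀ S) →ₗ[S] M' := Finsupp.linearCombination S q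
    let qF : (M →₀ R) →ₗ[R] (M →₀ S) := Finsupp.mapRange.linearMap (Algebra.linearMap R S)
    have hπ : Function.Surjective π := fun m => ⟨Finsupp.single m 1, by simp [π]⟩
    have hπ' : Function.Surjective π' := fun m' => by
      obtain ⟨m, rfl⟩ := hq m'
      exact ⟨Finsupp.single m 1, by simp [π']⟩
    have hcomm : ∀ f, π' (qF f) = q (π f) := by
      have : (π'.restrictScalars R) ∘ₗ qF = q ∘ₗ π := by
        ext m
        simp [π, π', qF]
      exact fun f => LinearMap.congr_fun this f
    have hqF : Function.Surjective qF := fun f => by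
      obtain ⟨g, hg⟩ := Finsupp.mapRange_surjective (α := M) (algebraMap R S) (map_zero _) hS f
      exact ⟨g, by rw [← hg]; rfl⟩
    have hqF0 : ∀ f, qF f = 0 → ∃ f', f = x • f' := by
      intro f hf
      have h1 : ∀ m, ∃ s, f m = x * s := fun m => hker _ (by
        have := DFunLike.congr_fun hf m
        simpa [qF] using this)
      choose s hs using h1
      refine ⟨Finsupp.onFinset f.support s fun m hm => ?_, ?_⟩
      · rw [Finsupp.mem_support_iff]
        intro h0
        rw [hs m] at h0
        exact hm (hx (by simpa using h0))
      · ext m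
        simp [hs m]
    have hxF : IsSMulRegular (M →₀ R) x := by
      intro a b hab
      ext m
      exact hx (by simpa using DFunLike.congr_fun hab m)
    have hxS : ∀ f : M →₀ S, x • f = 0 := fun f => by
      rw [← algebraMap_smul S x f, hx0, zero_smul]
    let qK : LinearMap.ker π →ₗ[R] LinearMap.ker π' :=
      { toFun := fun k => ⟨qF k, by
          rw [LinearMap.mem_ker, hcomm, LinearMap.mem_ker.1 k.2, map_zero]⟩
        map_add' := fun a b => Subtype.ext (by simp)
        map_smul' := fun a b => Subtype.ext (by simp) }
    refine ⟨π, π', qK, hπ, hπ', ?_, fun k => rfl, ?_, ?_⟩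
    · rintro ⟨k', hk'⟩
      obtain ⟨f, rfl⟩ := hqF k'
      rw [LinearMap.mem_ker, hcomm] at hk'
      obtain ⟨m, hm⟩ := hqk _ hk'
      obtain ⟨g, rfl⟩ := hπ m
      refine ⟨⟨f - x • g, by simp [hm]⟩, Subtype.ext ?_⟩
      change qF (f - x • g) = qF f
      rw [map_sub, map_smul, hxS, sub_zero]
    · rintro ⟨k, hk⟩ h0
      obtain ⟨f, rfl⟩ := hqF0 k (congrArg Subtype.val h0)
      rw [LinearMap.mem_ker, map_smul] at hk
      exact ⟨⟨f, LinearMap.mem_ker.2 (hxM (by simpa using hk))⟩, rfl⟩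
    · intro a b hab
      exact Subtype.ext (hxF (congrArg Subtype.val hab))
  induction i with
  | zero =>
    intro M M' _ _ _ _ _ _ q hq hqk hxM h
    obtain ⟨π, π', qK, hπ, hπ', hqK, hval, hqK0, hxK⟩ := key M M' q hq hqk hxM
    refine (extVan_one_iff π' hπ').2 fun φ => ?_
    obtain ⟨ψ, hψ⟩ := (extVan_one_iff π hπ).1 h ((φ.restrictScalars R) ∘ₗ qK)
    let ψ' : (M →₀ S) →ₗ[S] N := Finsupp.linearCombination S fun m => ψ (Finsupp.single m 1)
    have hψ' : ∀ f, ψ' (Finsupp.mapRange.linearMap (Algebra.linearMap R S) f) = ψ f := by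
      have : (ψ'.restrictScalars R) ∘ₗ (Finsupp.mapRange.linearMap (Algebra.linearMap R S))
          = ψ := by
        ext m
        simp [ψ']
      exact fun f => LinearMap.congr_fun this f
    refine ⟨ψ', fun k' => ?_⟩
    obtain ⟨k, rfl⟩ := hqK k'
    rw [hval, hψ', hψ]
    rfl
  | succ i ih =>
    intro M M' _ _ _ _ _ _ q hq hqk hxM h
    obtain ⟨π, π', qK, hπ, hπ', hqK, hval, hqK0, hxK⟩ := key M M' q hq hqk hxM
    exact (extVan_succ_iff π' hπ' i).2 (ih _ _ qK hqK hqK0 hxK ((extVan_succ_iff π hπ i).1 h))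

end change

theorem isSMulRegular_of_homothety {R : Type} [CommRing R] [IsNoetherianRing R]
    {C : Type} [AddCommGroup C] [Module R C] [Module.Finite R C]
    (h : Function.Bijective (LinearMap.lsmul R C)) (x : R) (hx : IsSMulRegular R x) :
    IsSMulRegular C x := by
  let K : Submodule R C := LinearMap.ker (LinearMap.lsmul R C x)
  have hxK : ∀ k : K, x • (k : C) = 0 := fun k => k.2
  have hsub : Subsingleton (C →ₗ[R] K) := by
    refine subsingleton_of_forall_eq 0 fun f => ?_
    obtain ⟨r, hr⟩ := h.2 (K.subtype ∘ₗ f)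
    have hr' : ∀ c, r • c = (f c : C) := fun c => LinearMap.congr_fun hr c
    have : x * r = 0 := h.1 (by
      ext c
      simp [mul_smul, hr', hxK])
    have hr0 : r = 0 := hx (by simpa using this)
    ext c
    rw [← hr', hr0]
    simp
  obtain ⟨r, hr, hreg⟩ := IsSMulRegular.subsingleton_linearMap_iff.1 hsub
  have hr0 : r = 0 := h.1 (by
    ext c
    simpa using Module.mem_annihilator.1 hr c)
  intro a b hab
  have hmem : a - b ∈ K := by
    change x • (a - b) = 0
    rw [smul_sub, sub_eq_zero]
    exact hab
  have : (⟨a - b, hmem⟩ : K) = 0 := hreg (by simp [hr0])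
  exact sub_eq_zero.1 (congrArg Subtype.val this)

theorem quotient_isSemidualizing_of_isSemidualizing
    (R : Type) [CommRing R] [IsNoetherianRing R]
    (C : Type) [AddCommGroup C] [Module R C] [Module.Finite R C]
    (n : ℕ) (hn : 2 ≤ n)
    (hC : IsSemidualizing R C (n - 1))
    (x : R) (hx : IsSMulRegular R x) :
    IsSemidualizing (R ⧸ Ideal.span {x})
      (C ⧸ (Ideal.span {x} • ⊤ : Submodule R C)) (n - 2) := by
  obtain ⟨-, hbij, hext⟩ := hC
  have hxC := isSMulRegular_of_homothety hbij x hx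
  have hext' : ∀ i, 0 < i → i ≤ n - 1 → ExtVan R C C i := fun i h0 hi =>
    (ext_bridge _ _ i h0).1 (hext i h0 hi)
  let q : C →ₗ[R] (C ⧸ (Ideal.span {x} • ⊤ : Submodule R C)) := Submodule.mkQ _
  have hq : Function.Surjective q := Submodule.mkQ_surjective _
  have hq0 : ∀ c, q c = 0 ↔ ∃ c', c = x • c' := fun c => by
    rw [Submodule.mkQ_apply, Submodule.Quotient.mk_eq_zero, Submodule.ideal_span_singleton_smul,
      Submodule.mem_smul_pointwise_iff_exists]
    simp [eq_comm]
  have hf : Function.Injective (LinearMap.lsmul R C x) := hxC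
  have hfq : Function.Exact (LinearMap.lsmul R C x) q := fun c => by
    rw [hq0]
    simp [eq_comm]
  refine ⟨?_, ⟨?_, ?_⟩, ?_⟩
  · exact Module.Finite.of_restrictScalars_finite R _ _
  · rw [injective_iff_map_eq_zero]
    intro a ha
    obtain ⟨r, rfl⟩ := Ideal.Quotient.mk_surjective a
    have h1 : ∀ c, ∃ c', r • c = x • c' := fun c => (hq0 _).1 (by
      have := LinearMap.congr_fun ha (q c)
      rw [map_smul]
      exact this)
    choose g hg using h1
    let φ : C →ₗ[R] C :=
      { toFun := g
        map_add' := fun a b => hxC (by simp only [smul_add, ← hg])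
        map_smul' := fun s b => hxC (by
          simp only [RingHom.id_apply]
          rw [← hg, smul_comm x s, ← hg, smul_comm]) }
    obtain ⟨s, hs⟩ := hbij.2 φ
    have hrs : r = x * s := hbij.1 (by
      ext c
      have : s • c = g c := LinearMap.congr_fun hs c
      simp [mul_smul, this, hg])
    rw [Ideal.Quotient.eq_zero_iff_mem, Ideal.mem_span_singleton]
    exact ⟨s, hrs⟩
  · intro f
    obtain ⟨ψ, hψ⟩ := lift_of_extVan_one _ q hf hq hfq (hext' 1 one_pos (by omega))
      ((f.restrictScalars R) ∘ₗ q)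
    obtain ⟨r, rfl⟩ := hbij.2 ψ
    refine ⟨Ideal.Quotient.mk _ r, ?_⟩
    refine LinearMap.ext fun c => ?_
    obtain ⟨c, rfl⟩ := hq c
    have : q (r • c) = f (q c) := LinearMap.congr_fun hψ c
    rw [← this, map_smul]
    rfl
  · intro i h0 hi
    refine (ext_bridge _ _ i h0).2 ?_
    have h1 : ExtVan R C (C ⧸ (Ideal.span {x} • ⊤ : Submodule R C)) i :=
      extVan_of_exact _ q hf hq hfq i (hext' i h0 (by omega)) (hext' (i + 1) (by omega) (by omega))
    obtain ⟨i, rfl⟩ : ∃ j, i = j + 1 := ⟨i - 1, by omega⟩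
    have hk : ∀ r : R, algebraMap R (R ⧸ Ideal.span {x}) r = 0 → ∃ s, r = x * s := fun r hr =>
      Ideal.mem_span_singleton.1 (Ideal.Quotient.eq_zero_iff_mem.1 hr)
    have hx0 : algebraMap R (R ⧸ Ideal.span {x}) x = 0 :=
      Ideal.Quotient.eq_zero_iff_mem.2 (Ideal.mem_span_singleton_self x)
    have hsurj : Function.Surjective (algebraMap R (R ⧸ Ideal.span {x})) :=
      Ideal.Quotient.mk_surjective
    exact extVan_change R (R ⧸ Ideal.span {x}) x hx hsurj hk hx0
      (C ⧸ (Ideal.span {x} • ⊤ : Submodule R C)) i C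
      (C ⧸ (Ideal.span {x} • ⊤ : Submodule R C)) q hq (fun m hm => (hq0 m).1 hm) hxC h1
end

section
/- Let R be a commutative noetherian ring and C an (n−1)-semidualizing finitely generated R-module with n ≥ 1. Then a sequence x_1, …, x_n of elements of R is a regular sequence on C if and only if it is a regular sequence on R. -/
open CategoryTheory

/-- Vanishing of `Ext^(i+1)(Z, M)` computed with a given projective resolution. -/
def ExtVanish {R : Type} [CommRing R] {Z : ModuleCat.{0} R} (P : ProjectiveResolution Z)
    (i : ℕ) (M : ModuleCat.{0} R) : Prop :=
  ∀ φ : P.complex.X (i + 1) ⟶ M, P.complex.d (i + 2) (i + 1) ≫ φ = 0 →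
    ∃ η : P.complex.X i ⟶ M, P.complex.d (i + 1) i ≫ η = φ

lemma extVanish_of_subsingleton {R : Type} [CommRing R] {Z : ModuleCat.{0} R}
    (P : ProjectiveResolution Z) (i : ℕ) (M : ModuleCat.{0} R)
    (h : Subsingleton (((Ext R (ModuleCat.{0} R) (i + 1)).obj (Opposite.op Z)).obj M)) :
    ExtVanish P i M := by
  have h0 := (ModuleCat.isZero_of_subsingleton
    (((Ext R (ModuleCat.{0} R) (i + 1)).obj (Opposite.op Z)).obj M)).of_iso
      (P.isoExt (R := R) (i + 1) M).symm
  rw [← HomologicalComplex.exactAt_iff_isZero_homology,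
    HomologicalComplex.exactAt_iff' _ i (i + 1) (i + 2) (by simp) (by simp),
    ShortComplex.moduleCat_exact_iff] at h0
  intro φ hφ
  exact h0 φ hφ

lemma extVanish_shift {R : Type} [CommRing R] {Z : ModuleCat.{0} R}
    (P : ProjectiveResolution Z) (i : ℕ) {S : ShortComplex (ModuleCat.{0} R)}
    (hS : S.ShortExact) (h2 : ExtVanish P i S.X₂) (h1 : ExtVanish P (i + 1) S.X₁) :
    ExtVanish P i S.X₃ := by
  intro φ hφ
  have := hS.epi_g
  have := hS.mono_f
  let φ' := Projective.factorThru φ S.g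
  have hφ' : φ' ≫ S.g = φ := Projective.factorThru_comp _ _
  have hz : (P.complex.d (i + 2) (i + 1) ≫ φ') ≫ S.g = 0 := by
    rw [Category.assoc, hφ', hφ]
  let ψ := hS.exact.lift _ hz
  have hψ : ψ ≫ S.f = P.complex.d (i + 2) (i + 1) ≫ φ' := hS.exact.lift_f _ hz
  obtain ⟨θ, hθ⟩ := h1 ψ (by
    rw [← cancel_mono S.f, Category.assoc, hψ]; simp)
  obtain ⟨η, hη⟩ := h2 (φ' - θ ≫ S.f) (by
    rw [Preadditive.comp_sub, ← Category.assoc, hθ, hψ, sub_self])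
  refine ⟨η ≫ S.g, ?_⟩
  rw [← Category.assoc, hη, Preadditive.sub_comp, hφ', Category.assoc, S.zero]
  simp

lemma exists_lift_of_extVanish {R : Type} [CommRing R] {Z : ModuleCat.{0} R}
    (P : ProjectiveResolution Z) {S : ShortComplex (ModuleCat.{0} R)}
    (hS : S.ShortExact) (h1 : ExtVanish P 0 S.X₁) (f : Z ⟶ S.X₃) :
    ∃ g : Z ⟶ S.X₂, g ≫ S.g = f := by
  have := hS.epi_g
  have := hS.mono_f
  let p : P.complex.X 0 ⟶ Z := P.π.f 0
  have hp : P.complex.d 1 0 ≫ p = 0 := P.complex_d_comp_π_f_zero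
  have hpe : Epi p := inferInstanceAs (Epi (P.π.f 0))
  let φ' := Projective.factorThru (p ≫ f) S.g
  have hφ' : φ' ≫ S.g = p ≫ f := Projective.factorThru_comp _ _
  have hz : (P.complex.d 1 0 ≫ φ') ≫ S.g = 0 := by
    rw [Category.assoc, hφ', ← Category.assoc, hp, Limits.zero_comp]
  let ψ := hS.exact.lift _ hz
  have hψ : ψ ≫ S.f = P.complex.d 1 0 ≫ φ' := hS.exact.lift_f _ hz
  obtain ⟨θ, hθ⟩ := h1 ψ (by
    rw [← cancel_mono S.f, Category.assoc, hψ]; simp)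
  have hk : P.complex.d 1 0 ≫ (φ' - θ ≫ S.f) = 0 := by
    rw [Preadditive.comp_sub, ← Category.assoc, hθ, hψ, sub_self]
  obtain ⟨g, hg⟩ := Limits.CokernelCofork.IsColimit.desc' P.isColimitCokernelCofork _ hk
  obtain ⟨g, hg⟩ : ∃ g : Z ⟶ S.X₂, p ≫ g = φ' - θ ≫ S.f := ⟨g, hg⟩
  refine ⟨g, ?_⟩
  rw [← cancel_epi p, ← Category.assoc, hg, Preadditive.sub_comp, hφ', Category.assoc, S.zero]
  simp

open Pointwise in
/-- Reduction of `Hom(C, M)` modulo a regular element. -/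
lemma exists_quot_equiv {R : Type} [CommRing R] {C M N : Type}
    [AddCommGroup C] [Module R C] [AddCommGroup M] [Module R M] [AddCommGroup N] [Module R N]
    (e : N ≃ₗ[R] (C →ₗ[R] M)) (x : R) (hx : IsSMulRegular M x)
    (hl : ∀ f : C →ₗ[R] QuotSMulTop x M, ∃ g : C →ₗ[R] M,
      (x • (⊤ : Submodule R M)).mkQ ∘ₗ g = f) :
    Nonempty (QuotSMulTop x N ≃ₗ[R] (C →ₗ[R] QuotSMulTop x M)) := by
  let F : N →ₗ[R] (C →ₗ[R] QuotSMulTop x M) :=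
    (LinearMap.compRight R (x • (⊤ : Submodule R M)).mkQ) ∘ₗ e.toLinearMap
  have hF : ∀ a, F a = (x • (⊤ : Submodule R M)).mkQ ∘ₗ (e a) := fun _ => rfl
  have hs : Function.Surjective F := by
    intro f
    obtain ⟨g, hg⟩ := hl f
    exact ⟨e.symm g, by rw [hF, e.apply_symm_apply, hg]⟩
  have hker : x • (⊤ : Submodule R N) = LinearMap.ker F := by
    ext a
    rw [LinearMap.mem_ker, hF, Submodule.mem_smul_pointwise_iff_exists]
    constructor
    · rintro ⟨b, -, rfl⟩
      ext c
      simp only [map_smul, LinearMap.comp_apply, LinearMap.smul_apply, LinearMap.zero_apply]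
      rw [← map_smul, Submodule.mkQ_apply, Submodule.Quotient.mk_eq_zero]
      exact Submodule.smul_mem_pointwise_smul _ _ _ trivial
    · intro h
      have h' : ∀ c, ∃ m, x • m = e a c := by
        intro c
        have := LinearMap.congr_fun h c
        rw [LinearMap.comp_apply, Submodule.mkQ_apply, LinearMap.zero_apply,
          Submodule.Quotient.mk_eq_zero, Submodule.mem_smul_pointwise_iff_exists] at this
        obtain ⟨m, -, hm⟩ := this
        exact ⟨m, hm⟩
      choose g hg using h'
      let G : C →ₗ[R] M :=
        { toFun := g
          map_add' := fun c d => hx (by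
            change x • _ = x • _
            rw [smul_add, hg, hg, hg, map_add])
          map_smul' := fun r c => hx (by
            change x • _ = x • _
            rw [RingHom.id_apply, smul_comm, hg, hg, map_smul]) }
      refine ⟨e.symm G, trivial, e.injective ?_⟩
      rw [map_smul, e.apply_symm_apply]
      ext c
      exact hg c
  exact ⟨(Submodule.quotEquivOfEq _ _ hker).trans (F.quotKerEquivOfSurjective hs)⟩

lemma isSMulRegular_iff_hom {R : Type} [CommRing R] [IsNoetherianRing R] {C M : Type}
    [AddCommGroup C] [Module R C] [AddCommGroup M] [Module R M] [Module.Finite R C]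
    [Module.Finite R M] (hann : Module.annihilator R C = ⊥) (x : R) :
    IsSMulRegular M x ↔ IsSMulRegular (C →ₗ[R] M) x := by
  constructor
  · intro h f g hfg
    ext c
    exact h (LinearMap.congr_fun hfg c)
  · intro h
    let K : Submodule R M := LinearMap.ker (LinearMap.lsmul R M x)
    have hK : Subsingleton (C →ₗ[R] K) := by
      refine subsingleton_of_forall_eq 0 fun f => ?_
      have h0 : K.subtype ∘ₗ f = 0 := by
        apply h
        ext c
        have h1 : x • (f c : M) = 0 := LinearMap.mem_ker.mp (f c).2
        simpa using h1
      ext c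
      exact LinearMap.congr_fun h0 c
    obtain ⟨r, hr, hreg⟩ := IsSMulRegular.subsingleton_linearMap_iff.mp hK
    rw [hann, Ideal.mem_bot] at hr
    subst hr
    have hKs : Subsingleton K := ⟨fun a b => hreg (by simp)⟩
    have : K = ⊥ := (Submodule.subsingleton_iff_eq_bot).mp hKs
    exact LinearMap.ker_eq_bot.mp this

theorem weaklyRegular_iff_aux {R : Type} [CommRing R] [IsNoetherianRing R]
    {C : Type} [AddCommGroup C] [Module R C] [Module.Finite R C]
    (hann : Module.annihilator R C = ⊥) (P : ProjectiveResolution (ModuleCat.of R C))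
    (xs : List R) : ∀ (M N : Type) [AddCommGroup M] [Module R M] [AddCommGroup N] [Module R N]
    [Module.Finite R M] (_ : N ≃ₗ[R] (C →ₗ[R] M))
    (_ : ∀ i, i + 1 < xs.length → ExtVanish P i (ModuleCat.of R M)),
    RingTheory.Sequence.IsWeaklyRegular M xs ↔ RingTheory.Sequence.IsWeaklyRegular N xs := by
  induction xs with
  | nil => intros; simp
  | cons x xs ih =>
    intro M N _ _ _ _ _ e hE
    rw [RingTheory.Sequence.isWeaklyRegular_cons_iff,
      RingTheory.Sequence.isWeaklyRegular_cons_iff, e.isSMulRegular_congr x,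
      ← isSMulRegular_iff_hom hann]
    refine and_congr_right fun hx => ?_
    cases hxs : xs with
    | nil => simp
    | cons y ys =>
      rw [← hxs]
      have hS := IsSMulRegular.smulShortComplex_shortExact (M := ModuleCat.of R M) hx
      have hlen : 0 < xs.length := by simp [hxs]
      obtain ⟨e'⟩ := exists_quot_equiv e x hx (fun f => by
        obtain ⟨g, hg⟩ := exists_lift_of_extVanish P hS
          (hE 0 (by simpa using hlen)) (ModuleCat.ofHom f)
        exact ⟨g.hom, congrArg ModuleCat.Hom.hom hg⟩)
      exact ih _ _ e' (fun i hi => extVanish_shift P i hS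
        (hE i (by simp; omega)) (hE (i + 1) (by simpa using hi)))

theorem isRegular_iff_isRegular_of_isSemidualizing
    (R : Type) [CommRing R] [IsNoetherianRing R]
    (C : Type) [AddCommGroup C] [Module R C] [Module.Finite R C]
    (n : ℕ) (hn : 1 ≤ n)
    (hC : IsSemidualizing R C (n - 1))
    (xs : List R) (hlen : xs.length = n) :
    RingTheory.Sequence.IsRegular C xs ↔ RingTheory.Sequence.IsRegular R xs := by
  obtain ⟨_, hbij, hext⟩ := hC
  have hann : Module.annihilator R C = ⊥ := by
    rw [eq_bot_iff]
    intro r hr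
    rw [Module.mem_annihilator] at hr
    refine hbij.1 ?_
    ext c
    simpa using hr c
  let P := projectiveResolution (ModuleCat.of R C)
  have hw := weaklyRegular_iff_aux hann P xs C R
    (LinearEquiv.ofBijective (LinearMap.lsmul R C) hbij)
    (fun i hi => extVanish_of_subsingleton P i _ (hext (i + 1) (by omega) (by omega)))
  rw [RingTheory.Sequence.isRegular_iff, RingTheory.Sequence.isRegular_iff, hw]
  refine and_congr_right fun _ => not_congr ?_
  rw [smul_eq_mul, Ideal.mul_top]
  constructor
  · intro h
    obtain ⟨r, hr1, hr2⟩ := Submodule.exists_sub_one_mem_and_smul_eq_zero_of_fg_of_le_smul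
      (Ideal.ofList xs) (⊤ : Submodule R C) Module.Finite.fg_top h.le
    have hr0 : r ∈ Module.annihilator R C :=
      Module.mem_annihilator.mpr fun c => hr2 c trivial
    rw [hann, Ideal.mem_bot] at hr0
    subst hr0
    symm
    rw [Ideal.eq_top_iff_one]
    simpa using hr1
  · intro h
    rw [← h, Submodule.top_smul]
end

section
/- Let R be a noetherian normal domain and C a finitely generated R-module that is 1-semidualizing, i.e., Hom_R(C,C) ≅ R and Ext^1_R(C,C) = 0. Then C is a reflexive R-module (the natural map C → Hom_R(Hom_R(C,R),R) is an isomorphism) of rank 1. -/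
open CategoryTheory
open scoped TensorProduct

namespace OneSemidualizing

/-- A finitely generated faithful module over a noetherian ring has a nonzero map to `R/p`. -/
lemma exists_hom_ne_zero {R : Type} [CommRing R] [IsNoetherianRing R]
    {C : Type} [AddCommGroup C] [Module R C] [Module.Finite R C]
    (hf : Module.annihilator R C = ⊥) (p : Ideal R) [p.IsPrime] :
    ∃ g : C →ₗ[R] (R ⧸ p), g ≠ 0 := by
  by_contra! h
  have hs : Subsingleton (C →ₗ[R] (R ⧸ p)) := ⟨fun a b => by rw [h a, h b]⟩
  obtain ⟨r, hr, hreg⟩ := IsSMulRegular.subsingleton_linearMap_iff.mp hs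
  rw [hf, Ideal.mem_bot] at hr
  subst hr
  have : (1 : R ⧸ p) = 0 := hreg (by simp)
  exact one_ne_zero this

/-- Vanishing of `Ext¹` gives exactness on a projective resolution. -/
lemma factor_of_ext {R : Type} [CommRing R] {X Y : ModuleCat.{0} R}
    (P : ProjectiveResolution X)
    (hext : Subsingleton (((Ext R (ModuleCat R) 1).obj (Opposite.op X)).obj Y))
    (k : P.complex.X 1 ⟶ Y) (hk : P.complex.d 2 1 ≫ k = 0) :
    ∃ l : P.complex.X 0 ⟶ Y, P.complex.d 1 0 ≫ l = k := by
  have h0 : Limits.IsZero (((Ext R (ModuleCat R) 1).obj (Opposite.op X)).obj Y) :=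
    ModuleCat.isZero_of_subsingleton _
  have h1 := h0.of_iso (P.isoExt (R := R) 1 Y).symm
  rw [← HomologicalComplex.exactAt_iff_isZero_homology,
    HomologicalComplex.exactAt_iff' _ 0 1 2 (by simp) (by simp)] at h1
  rw [ShortComplex.moduleCat_exact_iff] at h1
  obtain ⟨l, hl⟩ := h1 k hk
  exact ⟨l, hl⟩

lemma lift_of_ext {R : Type} [CommRing R]
    {C : Type} [AddCommGroup C] [Module R C]
    (hext : Subsingleton (((Ext R (ModuleCat R) 1).obj
      (Opposite.op (ModuleCat.of R C))).obj (ModuleCat.of R C)))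
    (x : R) (hx : ∀ c : C, x • c = 0 → c = 0)
    (N : Submodule R C) (hN : ∀ c, c ∈ N ↔ ∃ d, x • d = c)
    (h : C →ₗ[R] C ⧸ N) : ∃ f : C →ₗ[R] C, ∀ c, h c = N.mkQ (f c) := by
  let P := projectiveResolution (ModuleCat.of R C)
  let π : P.complex.X 0 →ₗ[R] C := (P.π.f 0).hom
  let d1 : P.complex.X 1 →ₗ[R] P.complex.X 0 := (P.complex.d 1 0).hom
  let d2 : P.complex.X 2 →ₗ[R] P.complex.X 1 := (P.complex.d 2 1).hom
  have hproj : Module.Projective R (P.complex.X 0) := by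
    have := P.projective 0
    exact (IsProjective.iff_projective _).mpr this
  have hπ : Function.Surjective π := (ModuleCat.epi_iff_surjective (P.π.f 0)).mp inferInstance
  have hex : ∀ y, π y = 0 → ∃ z, d1 z = y :=
    (ShortComplex.moduleCat_exact_iff _).mp P.exact₀
  have hπd : ∀ z, π (d1 z) = 0 := fun z =>
    LinearMap.congr_fun (congrArg ModuleCat.Hom.hom P.complex_d_comp_π_f_zero) z
  have hdd : ∀ z, d1 (d2 z) = 0 := fun z =>
    LinearMap.congr_fun (congrArg ModuleCat.Hom.hom (P.complex.d_comp_d 2 1 0)) z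
  obtain ⟨h0, hh0⟩ := Module.projective_lifting_property N.mkQ (h ∘ₗ π) N.mkQ_surjective
  have hh0' : ∀ y, N.mkQ (h0 y) = h (π y) := fun y => LinearMap.congr_fun hh0 y
  have hmem : ∀ z, ∃ c, x • c = h0 (d1 z) := by
    intro z
    rw [← hN, ← Submodule.Quotient.mk_eq_zero]
    have := hh0' (d1 z)
    rwa [hπd, map_zero] at this
  choose k hk using hmem
  have inj : ∀ a b : C, x • a = x • b → a = b := fun a b hab =>
    sub_eq_zero.mp (hx _ (by rw [smul_sub, hab, sub_self]))
  let k' : P.complex.X 1 →ₗ[R] C :=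
    { toFun := k
      map_add' := fun a b => inj _ _ (by simp [hk, smul_add])
      map_smul' := fun r a => inj _ _ (by simp [hk, smul_comm x r]) }
  obtain ⟨l, hl⟩ := factor_of_ext P hext (ModuleCat.ofHom k') (by
    ext z
    apply hx
    change x • k (d2 z) = 0
    rw [hk, hdd, map_zero])
  have hl' : ∀ z, l.hom (d1 z) = k z := fun z =>
    LinearMap.congr_fun (congrArg ModuleCat.Hom.hom hl) z
  let m : P.complex.X 0 →ₗ[R] C := h0 - x • (l.hom : P.complex.X 0 →ₗ[R] C)
  have hm : ∀ y, π y = 0 → m y = 0 := by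
    intro y hy
    obtain ⟨z, rfl⟩ := hex y hy
    change h0 (d1 z) - x • (l.hom (d1 z)) = 0
    rw [hl', hk, sub_self]
  choose s hs using hπ
  have key : ∀ y, m (s (π y)) = m y := fun y => by
    rw [← sub_eq_zero, ← map_sub]
    exact hm _ (by rw [map_sub, hs, sub_self])
  have key2 : ∀ y c, π y = c → m (s c) = m y := fun y c hc => by rw [← hc, key]
  refine ⟨{ toFun := fun c => m (s c)
            map_add' := fun a b => ?_
            map_smul' := fun r a => ?_ }, fun c => ?_⟩
  · rw [← map_add]; exact key2 _ _ (by rw [map_add, hs, hs])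
  · rw [RingHom.id_apply, ← map_smul]; exact key2 _ _ (by rw [map_smul, hs])
  · change h c = N.mkQ (h0 (s c) - x • (l.hom (s c)))
    rw [map_sub, hh0', hs]
    have : N.mkQ (x • (l.hom (s c))) = 0 := by
      rw [Submodule.mkQ_apply, Submodule.Quotient.mk_eq_zero, hN]
      exact ⟨_, rfl⟩
    rw [this, sub_zero]

/-- In an integrally closed noetherian domain, `r aⁿ ∈ (xⁿ)` for all `n` forces `a ∈ (x)`. -/
lemma dvd_of_forall_pow {R : Type} [CommRing R] [IsNoetherianRing R] [IsDomain R]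
    [IsIntegrallyClosed R] (a x r : R) (hx : x ≠ 0) (hr : r ≠ 0)
    (h : ∀ n : ℕ, ∃ b, x ^ n * b = a ^ n * r) : x ∣ a := by
  let K := FractionRing R
  have hxK : algebraMap R K x ≠ 0 := by simpa using hx
  have : IsAlmostIntegral R (algebraMap R K a / algebraMap R K x) := by
    refine ⟨r, mem_nonZeroDivisors_of_ne_zero hr, fun n => ?_⟩
    obtain ⟨b, hb⟩ := h n
    refine ⟨b, ?_⟩
    have hb' := congrArg (algebraMap R K) hb
    simp only [map_mul, map_pow] at hb'
    rw [Algebra.smul_def, div_pow]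
    rw [← mul_div_assoc, eq_div_iff (pow_ne_zero n hxK)]
    linear_combination hb'
  obtain ⟨y, hy⟩ := IsIntegrallyClosed.isIntegral_iff.mp this.isIntegral
  refine ⟨y, ?_⟩
  apply IsFractionRing.injective R K
  rw [map_mul, hy]
  exact (mul_div_cancel₀ _ hxK).symm

end OneSemidualizing

open OneSemidualizing

theorem isReflexive_rank_one_of_one_semidualizing
    (R : Type) [CommRing R] [IsNoetherianRing R] [IsDomain R] [IsIntegrallyClosed R]
    (C : Type) [AddCommGroup C] [Module R C] [Module.Finite R C]
    (hhom : Function.Bijective (LinearMap.lsmul R C))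
    (hext : Subsingleton (((Ext R (ModuleCat R) 1).obj
      (Opposite.op (ModuleCat.of R C))).obj (ModuleCat.of R C))) :
    Module.IsReflexive R C ∧
      Module.rank (FractionRing R) (FractionRing R ⊗[R] C) = 1 := by
  have faith : ∀ r : R, (∀ c : C, r • c = 0) → r = 0 := fun r hr =>
    hhom.1 (by ext c; simpa using hr c)
  have hend : ∀ f : C →ₗ[R] C, ∃ a : R, ∀ c, f c = a • c := fun f => by
    obtain ⟨a, rfl⟩ := hhom.2 f
    exact ⟨a, fun c => rfl⟩
  have hann : Module.annihilator R C = ⊥ := by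
    rw [eq_bot_iff]
    intro r hr
    exact faith r (Module.mem_annihilator.mp hr)
  -- torsion-free
  have htf : ∀ (r : R) (c : C), r ≠ 0 → r • c = 0 → c = 0 := by
    intro r c hr hrc
    by_contra hc
    obtain ⟨p, hp, hle⟩ := exists_le_isAssociatedPrime_of_isNoetherianRing R c hc
    have hrp : r ∈ p := hle (by simpa [Submodule.mem_colon_singleton] using hrc)
    obtain ⟨hpp, i, hi⟩ := (isAssociatedPrime_iff_exists_injective_linearMap p C).mp hp
    obtain ⟨g, hg⟩ := exists_hom_ne_zero hann p
    obtain ⟨a, ha⟩ := hend (i ∘ₗ g)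
    have hr0 : ∀ z : R ⧸ p, r • z = 0 := fun z => by
      obtain ⟨z, rfl⟩ := Ideal.Quotient.mk_surjective z
      rw [Algebra.smul_def, Ideal.Quotient.algebraMap_eq, Ideal.Quotient.eq_zero_iff_mem.mpr hrp,
        zero_mul]
    have hra : r * a = 0 := faith _ fun d => by
      rw [mul_smul, ← ha, ← map_smul]
      simp only [LinearMap.comp_apply, map_smul, ← map_smul i, hr0, map_zero]
    have ha0 : a = 0 := (mul_eq_zero.mp hra).resolve_left hr
    apply hg
    ext d
    apply hi
    have := ha d
    rw [ha0, zero_smul] at this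
    simpa using this
  -- rank one identity
  have hcomm : ∀ (φ : C →ₗ[R] R) (c d : C), φ d • c = φ c • d := by
    intro φ c d
    by_cases hφ : φ = 0
    · simp [hφ]
    obtain ⟨e, he⟩ : ∃ e, φ e ≠ 0 := by
      by_contra! h
      exact hφ (LinearMap.ext h)
    obtain ⟨a, ha⟩ := hend (φ.smulRight c)
    simp only [LinearMap.smulRight_apply] at ha
    have h1 := congrArg φ (ha e)
    simp only [map_smul, smul_eq_mul] at h1
    have : φ c = a := mul_left_cancel₀ he (by rw [h1, mul_comm])
    rw [ha d, this]
  obtain ⟨φ₀, c₀, h₀⟩ : ∃ (φ : C →ₗ[R] R) (c : C), φ c ≠ 0 := by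
    obtain ⟨g, hg⟩ := exists_hom_ne_zero hann (⊥ : Ideal R)
    by_contra! h
    apply hg
    let e : (R ⧸ (⊥ : Ideal R)) ≃ₗ[R] R := Submodule.quotEquivOfEqBot _ rfl
    ext d
    apply e.injective
    simpa using h (e.toLinearMap ∘ₗ g) d
  have hinj₀ : Function.Injective φ₀ := by
    rw [injective_iff_map_eq_zero]
    intro d hd
    refine htf _ d h₀ ?_
    rw [← hcomm φ₀ c₀ d, hd, zero_smul]
  have hc₀ : c₀ ≠ 0 := fun h => h₀ (by rw [h, map_zero])
  -- image of the evaluation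
  have hev : ∀ (φ : C →ₗ[R] R) (c : C) (y : Module.Dual R (Module.Dual R C)),
      φ c • y = Module.Dual.eval R C (y φ • c) := by
    intro φ c y
    ext ψ
    have : φ c • ψ = ψ c • φ := by
      ext d
      have := congrArg ψ (hcomm φ c d)
      simp only [map_smul, smul_eq_mul] at this
      simp only [LinearMap.smul_apply, smul_eq_mul]
      rw [← this, mul_comm]
    have h2 := congrArg y this
    simp only [map_smul, smul_eq_mul] at h2
    simp [h2, mul_comm]
  have hevinj : Function.Injective (Module.Dual.eval R C) := by
    intro c d hcd
    apply hinj₀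
    have := LinearMap.congr_fun hcd φ₀
    simpa using this
  constructor
  · refine ⟨hevinj, ?_⟩
    rw [← LinearMap.range_eq_top]
    by_contra hne
    set E := LinearMap.range (Module.Dual.eval R C) with hE
    obtain ⟨y0, hy0⟩ : ∃ y0, y0 ∉ E := by
      by_contra! h
      exact hne (eq_top_iff.mpr fun y _ => h y)
    obtain ⟨p, hp, hle⟩ := exists_le_isAssociatedPrime_of_isNoetherianRing R
      (E.mkQ y0) (by simpa using hy0)
    obtain ⟨hpp, yb, hyb⟩ := isAssociatedPrime_iff.mp hp
    obtain ⟨y, rfl⟩ := E.mkQ_surjective yb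
    have hpy : ∀ r, r ∈ p ↔ r • y ∈ E := by
      intro r
      rw [hyb, Submodule.mem_colon_singleton, ← map_smul, Submodule.mem_bot, Submodule.mkQ_apply,
        Submodule.Quotient.mk_eq_zero]
    have hall : ∀ (φ : C →ₗ[R] R) c, φ c ∈ p := by
      intro φ c
      rw [hpy, hev]
      exact ⟨_, rfl⟩
    set x := φ₀ c₀ with hxdef
    have hxp : x ∈ p := hall _ _
    obtain ⟨z, hz⟩ := (hpy x).mp hxp
    -- the submodule x C
    let N : Submodule R C := LinearMap.range (LinearMap.lsmul R C x)
    have hN : ∀ c : C, c ∈ N ↔ ∃ d : C, x • d = c := fun c => Iff.rfl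
    have hpz : ∀ r, r ∈ p ↔ r • z ∈ N := by
      intro r
      rw [hpy, hN]
      constructor
      · rintro ⟨d, hd⟩
        refine ⟨d, hevinj ?_⟩
        rw [map_smul, map_smul, hd, hz, smul_comm]
      · rintro ⟨d, hd⟩
        refine ⟨d, ?_⟩
        have h1 := congrArg (Module.Dual.eval R C) hd
        rw [map_smul, map_smul, hz, smul_comm r x] at h1
        ext ψ
        have h2 := LinearMap.congr_fun h1 ψ
        simp only [LinearMap.smul_apply, smul_eq_mul] at h2 ⊢
        exact mul_left_cancel₀ h₀ h2
    let i : (R ⧸ p) →ₗ[R] C ⧸ N := Submodule.liftQ p (LinearMap.toSpanSingleton R _ (N.mkQ z)) (by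
      intro r hr
      rw [LinearMap.mem_ker, LinearMap.toSpanSingleton_apply, ← map_smul, Submodule.mkQ_apply,
        Submodule.Quotient.mk_eq_zero]
      exact (hpz r).mp hr)
    have hi : ∀ w, i w = 0 → w = 0 := by
      intro w hw
      obtain ⟨w, rfl⟩ := Submodule.mkQ_surjective p w
      have hw' : w • N.mkQ z = 0 := hw
      rw [← map_smul, Submodule.mkQ_apply, Submodule.Quotient.mk_eq_zero] at hw'
      rw [Submodule.mkQ_apply, Submodule.Quotient.mk_eq_zero]
      exact (hpz w).mpr hw'
    obtain ⟨g, hg⟩ := exists_hom_ne_zero hann p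
    obtain ⟨f, hf⟩ := lift_of_ext hext x (fun c => htf x c h₀) N hN (i ∘ₗ g)
    obtain ⟨a, ha⟩ := hend f
    have hig : ∀ c, i (g c) = N.mkQ (a • c) := fun c => by rw [← ha, ← hf]; rfl
    -- p a ⊆ (x)
    have hpa : ∀ r ∈ p, x ∣ r * a := by
      intro r hr
      have h1 : ∀ c, ∃ d : C, x • d = (r * a) • c := by
        intro c
        rw [← hN, ← Submodule.Quotient.mk_eq_zero, mul_smul, ← Submodule.mkQ_apply, map_smul,
          ← hig, ← map_smul]
        have : r • g c = 0 := by
          obtain ⟨w, hw⟩ := Ideal.Quotient.mk_surjective (g c)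
          rw [← hw, Algebra.smul_def, Ideal.Quotient.algebraMap_eq,
            Ideal.Quotient.eq_zero_iff_mem.mpr hr, zero_mul]
        rw [this, map_zero]
      choose k hk using h1
      have inj : ∀ a b : C, x • a = x • b → a = b := fun a b hab =>
        sub_eq_zero.mp (htf x _ h₀ (by rw [smul_sub, hab, sub_self]))
      obtain ⟨b, hb⟩ := hend
        { toFun := k
          map_add' := fun a b => inj _ _ (by simp only [hk, smul_add])
          map_smul' := fun s c => inj _ _ (by
            rw [hk, RingHom.id_apply, smul_comm x s, hk, smul_comm]) }
      refine ⟨b, ?_⟩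
      rw [← sub_eq_zero]
      apply faith
      intro c
      rw [sub_smul, ← hk, mul_smul]
      have : k c = b • c := hb c
      rw [this, sub_self]
    -- a ∉ (x)
    have hxa : ¬ x ∣ a := by
      rintro ⟨b, rfl⟩
      apply hg
      ext c
      apply hi
      rw [hig, Submodule.mkQ_apply, Submodule.Quotient.mk_eq_zero, hN]
      exact ⟨b • c, by rw [mul_smul]⟩
    -- multiplication by a/x on the dual
    have hstep : ∀ φ : C →ₗ[R] R, ∃ ψ : C →ₗ[R] R, ∀ c, x * ψ c = a * φ c := by
      intro φ
      have h1 : ∀ c, ∃ b, x * b = a * φ c := fun c => by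
        obtain ⟨b, hb⟩ := hpa _ (hall φ c)
        exact ⟨b, by rw [← hb, mul_comm]⟩
      choose k hk using h1
      exact ⟨{ toFun := k
               map_add' := fun c d => mul_left_cancel₀ h₀ (by
                change x * _ = x * _
                rw [mul_add, hk, hk, hk, map_add, mul_add])
               map_smul' := fun r c => mul_left_cancel₀ h₀ (by
                change x * _ = x * (r * _)
                rw [hk, mul_left_comm, hk, map_smul, smul_eq_mul, mul_left_comm]) }, hk⟩
    have hpow : ∀ n : ℕ, ∃ ψ : C →ₗ[R] R, ∀ c, x ^ n * ψ c = a ^ n * φ₀ c := by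
      intro n
      induction n with
      | zero => exact ⟨φ₀, fun c => by simp⟩
      | succ n ih =>
        obtain ⟨ψ, hψ⟩ := ih
        obtain ⟨ψ', hψ'⟩ := hstep ψ
        refine ⟨ψ', fun c => ?_⟩
        linear_combination x ^ n * hψ' c + a * hψ c
    exact hxa (dvd_of_forall_pow a x x h₀ h₀ fun n => by
      obtain ⟨ψ, hψ⟩ := hpow n
      exact ⟨ψ c₀, hψ c₀⟩)
  · rw [IsLocalization.rank_eq (R := R) (FractionRing R) (nonZeroDivisors R) le_rfl,
      IsLocalizedModule.rank_eq (nonZeroDivisors R) le_rfl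
        (TensorProduct.mk R (FractionRing R) C 1)]
    apply le_antisymm
    · have := LinearMap.rank_le_of_injective φ₀ hinj₀
      rwa [Module.rank_self] at this
    · have : LinearIndependent R (fun _ : Unit => c₀) := by
        rw [Fintype.linearIndependent_iff]
        intro g hg u
        by_contra hgu
        exact hc₀ (htf (g u) c₀ hgu (by simpa using hg))
      simpa using this.cardinal_le_rank
end

section
/- Let R be a local Gorenstein ring of Krull dimension d < ∞, and let C be a finitely generated R-module that is d-semidualizing, i.e., Hom_R(C,C) ≅ R and Ext^i_R(C,C) = 0 for all 0 < i ≤ d. Then C ≅ R. -/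
open CategoryTheory

/-- A commutative noetherian ring is Gorenstein (of finite Krull dimension) if it has finite
injective dimension as a module over itself, characterized by the eventual vanishing of
`Ext^i_R(M, R)` for all modules `M` and all sufficiently large `i`. -/
def IsGorensteinRing (R : Type) [CommRing R] : Prop :=
  IsNoetherianRing R ∧ ∃ d : ℕ, ∀ (M : ModuleCat R) (i : ℕ), d < i →
    Subsingleton (((Ext R (ModuleCat R) i).obj (Opposite.op M)).obj (ModuleCat.of R R))

namespace SDG

open scoped Pointwise


variable {R : Type} [CommRing R]

/-- Vanishing of the classical `Ext` implies vanishing of the derived category `Ext`. -/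
lemma ext_bridge (M Y : ModuleCat.{0} R) (i : ℕ) (hi : 0 < i)
    (h : Subsingleton (((Ext R (ModuleCat R) i).obj (Opposite.op M)).obj Y)) :
    Subsingleton (Abelian.Ext M Y i) := by
  obtain ⟨p, rfl⟩ : ∃ p, i = p + 1 := ⟨i - 1, by omega⟩
  let P := projectiveResolution M
  have hz : Limits.IsZero ((P.complex.linearYonedaObj R Y).homology (p + 1)) :=
    Limits.IsZero.of_iso (ModuleCat.isZero_of_subsingleton _) (P.isoExt (p + 1) Y).symm
  rw [← HomologicalComplex.exactAt_iff_isZero_homology,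
    HomologicalComplex.exactAt_iff' _ p (p + 1) (p + 2) (by simp) (by simp),
    ShortComplex.moduleCat_exact_iff] at hz
  refine subsingleton_of_forall_eq 0 fun α => ?_
  obtain ⟨f, hf, rfl⟩ := P.extMk_surjective α (p + 2) rfl
  rw [P.extMk_eq_zero_iff f (p + 2) rfl hf p rfl]
  exact hz f hf

lemma subsingleton_mid_contra {S : ShortComplex (ModuleCat.{0} R)} (hS : S.ShortExact)
    (Y : ModuleCat.{0} R) (n : ℕ) (h1 : Subsingleton (Abelian.Ext S.X₁ Y n))
    (h3 : Subsingleton (Abelian.Ext S.X₃ Y n)) : Subsingleton (Abelian.Ext S.X₂ Y n) := by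
  refine subsingleton_of_forall_eq 0 fun α => ?_
  obtain ⟨b, rfl⟩ := Abelian.Ext.contravariant_sequence_exact₂ hS Y α (Subsingleton.elim _ _)
  rw [Subsingleton.elim b 0]; simp

lemma subsingleton_left_contra {S : ShortComplex (ModuleCat.{0} R)} (hS : S.ShortExact)
    (Y : ModuleCat.{0} R) (n : ℕ) (h1 : Subsingleton (Abelian.Ext S.X₂ Y n))
    (h3 : Subsingleton (Abelian.Ext S.X₃ Y (n + 1))) : Subsingleton (Abelian.Ext S.X₁ Y n) := by
  refine subsingleton_of_forall_eq 0 fun α => ?_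
  obtain ⟨b, rfl⟩ := Abelian.Ext.contravariant_sequence_exact₁ hS Y α (add_comm 1 n)
    (Subsingleton.elim _ _)
  rw [Subsingleton.elim b 0]; simp

lemma subsingleton_right_contra {S : ShortComplex (ModuleCat.{0} R)} (hS : S.ShortExact)
    (Y : ModuleCat.{0} R) (n : ℕ) (h1 : Subsingleton (Abelian.Ext S.X₂ Y (n + 1)))
    (h3 : Subsingleton (Abelian.Ext S.X₁ Y n)) : Subsingleton (Abelian.Ext S.X₃ Y (n + 1)) := by
  refine subsingleton_of_forall_eq 0 fun α => ?_
  obtain ⟨b, rfl⟩ := Abelian.Ext.contravariant_sequence_exact₃ hS Y α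
    (Subsingleton.elim _ _) (add_comm 1 n)
  rw [Subsingleton.elim b 0]; simp

lemma subsingleton_right_co {S : ShortComplex (ModuleCat.{0} R)} (hS : S.ShortExact)
    (X : ModuleCat.{0} R) (n : ℕ) (h1 : Subsingleton (Abelian.Ext X S.X₂ n))
    (h3 : Subsingleton (Abelian.Ext X S.X₁ (n + 1))) : Subsingleton (Abelian.Ext X S.X₃ n) := by
  refine subsingleton_of_forall_eq 0 fun α => ?_
  obtain ⟨b, rfl⟩ := Abelian.Ext.covariant_sequence_exact₃ X hS α rfl
    (Subsingleton.elim _ _)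
  rw [Subsingleton.elim b 0]; simp

/-- The class in `Ext (N/xN) N 1` of `0 → N → N → N/xN → 0`. -/
noncomputable def del {N : ModuleCat.{0} R} {x : R} (reg : IsSMulRegular N x) :
    Abelian.Ext (ModuleCat.of R (QuotSMulTop x N)) N 1 :=
  reg.smulShortComplex_shortExact.extClass

/-- If `x` kills `S`, every class in `Ext S N (n+1)` comes from `Ext S (N/xN) n`. -/
lemma ext_lift {N S : ModuleCat.{0} R} {x : R} (reg : IsSMulRegular N x)
    (hx : x ∈ Module.annihilator R S) (n : ℕ) (η : Abelian.Ext S N (n + 1)) :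
    ∃ η' : Abelian.Ext S (ModuleCat.of R (QuotSMulTop x N)) n,
      η'.comp (del reg) rfl = η := by
  have h : η.comp (Abelian.Ext.mk₀ (x • 𝟙 N)) (add_zero (n + 1)) = 0 := by
    have h0 : x • 𝟙 S = 0 := by
      simp [← ModuleCat.lsmul_eq_smul_id, Module.mem_annihilator_iff_lsmul_eq_zero.mp hx]
    have h1 : x • η = (Abelian.Ext.mk₀ (x • 𝟙 S)).comp η (zero_add _) := by
      simp [Abelian.Ext.mk₀_smul]
    rw [← Abelian.Ext.smul_eq_comp_mk₀, h1, h0]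
    simp
  exact Abelian.Ext.covariant_sequence_exact₁ S reg.smulShortComplex_shortExact η h rfl

lemma co_inj {S : ShortComplex (ModuleCat.{0} R)} (hS : S.ShortExact)
    (X : ModuleCat.{0} R) (n : ℕ) (h1 : Subsingleton (Abelian.Ext X S.X₂ n))
    (η : Abelian.Ext X S.X₃ n) (h : η.comp hS.extClass rfl = 0) : η = 0 := by
  obtain ⟨b, rfl⟩ := Abelian.Ext.covariant_sequence_exact₃ X hS η rfl h
  rw [Subsingleton.elim b 0]; simp

lemma ext_del_inj {N S : ModuleCat.{0} R} {x : R} (reg : IsSMulRegular N x) (n : ℕ)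
    (hs : Subsingleton (Abelian.Ext S N n))
    (η : Abelian.Ext S (ModuleCat.of R (QuotSMulTop x N)) n)
    (h : η.comp (del reg) rfl = 0) : η = 0 :=
  co_inj reg.smulShortComplex_shortExact S n hs η h

variable [IsLocalRing R]

/-- `RegTo S n N` : `S` is the quotient of `N` by an `N`-regular sequence of length `n` in the
maximal ideal. -/
inductive RegTo (S : ModuleCat.{0} R) : ℕ → ModuleCat.{0} R → Prop
  | refl : RegTo S 0 S
  | step (n : ℕ) (N : ModuleCat.{0} R) (x : R) (hx : x ∈ IsLocalRing.maximalIdeal R)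
      (reg : IsSMulRegular N x) (h : RegTo S n (ModuleCat.of R (QuotSMulTop x N))) :
      RegTo S (n + 1) N

lemma RegTo.surj {S N : ModuleCat.{0} R} {n : ℕ} (h : RegTo S n N) :
    ∃ f : N →ₗ[R] S, Function.Surjective f := by
  induction h with
  | refl => exact ⟨LinearMap.id, Function.surjective_id⟩
  | step n N x hx reg h ih =>
    obtain ⟨f, hf⟩ := ih
    exact ⟨f.comp (Submodule.mkQ _), hf.comp (Submodule.mkQ_surjective _)⟩

lemma RegTo.ann {S N : ModuleCat.{0} R} {n : ℕ} {x : R}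
    (h : RegTo S n (ModuleCat.of R (QuotSMulTop x N))) : x ∈ Module.annihilator R S := by
  obtain ⟨f, hf⟩ := h.surj
  rw [Module.mem_annihilator]
  intro s
  obtain ⟨y, rfl⟩ := hf s
  obtain ⟨z, rfl⟩ := Submodule.mkQ_surjective _ y
  rw [← map_smul, ← map_smul]
  have : (x • (⊤ : Submodule R N)).mkQ (x • z) = 0 := by
    rw [Submodule.mkQ_apply, Submodule.Quotient.mk_eq_zero]
    exact Submodule.smul_mem_pointwise_smul _ _ _ trivial
  exact (congrArg f this).trans (map_zero f)

lemma RegTo.pd {S N : ModuleCat.{0} R} {n : ℕ} (h : RegTo S n N) (Y : ModuleCat.{0} R) (a : ℕ)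
    (hN : ∀ j, a < j → Subsingleton (Abelian.Ext N Y j)) :
    ∀ j, a + n < j → Subsingleton (Abelian.Ext S Y j) := by
  induction h generalizing a with
  | refl => exact hN
  | step n N x hx reg h ih =>
    intro j hj
    refine ih (a + 1) (fun j hj => ?_) j (by omega)
    obtain ⟨j, rfl⟩ : ∃ p, j = p + 1 := ⟨j - 1, by omega⟩
    exact subsingleton_right_contra reg.smulShortComplex_shortExact Y j
      (hN _ (by omega)) (hN _ (by omega))

/-- the residue field as a module -/
abbrev kk (R : Type) [CommRing R] [IsLocalRing R] : ModuleCat.{0} R :=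
  ModuleCat.of R (R ⧸ IsLocalRing.maximalIdeal R)

lemma mem_ann_kk {x : R} (hx : x ∈ IsLocalRing.maximalIdeal R) :
    x ∈ Module.annihilator R (kk R) := by
  rw [show Module.annihilator R (kk R) = IsLocalRing.maximalIdeal R from
    Ideal.annihilator_quotient]
  exact hx

lemma RegTo.ext_kk {S N : ModuleCat.{0} R} {n : ℕ} (h : RegTo S n N) :
    ∀ i < n, Subsingleton (Abelian.Ext (kk R) N i) := by
  induction h with
  | refl => simp
  | step n N x hx reg h ih =>
    intro i hi
    cases i with
    | zero =>
      have : Subsingleton (kk R →ₗ[R] N) :=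
        reg.linearMap_subsingleton_of_mem_annihilator (mem_ann_kk hx)
      exact (Abelian.Ext.addEquiv₀.trans ModuleCat.homAddEquiv).subsingleton
    | succ i =>
      refine subsingleton_of_forall_eq 0 fun α => ?_
      obtain ⟨b, rfl⟩ := ext_lift reg (mem_ann_kk hx) i α
      have := ih i (by omega)
      rw [Subsingleton.elim b 0]; simp

/-- A form of Rees' isomorphism. -/
lemma RegTo.rees {S N : ModuleCat.{0} R} {n : ℕ} (h : RegTo S n N) :
    ∃ ε : Abelian.Ext S N n,
      (∀ η : Abelian.Ext S N n, ∃ s : S ⟶ S,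
        (Abelian.Ext.mk₀ s).comp ε (zero_add n) = η) ∧
      (∀ v : kk R ⟶ S, (Abelian.Ext.mk₀ v).comp ε (zero_add n) = 0 → v = 0) := by
  induction h with
  | refl =>
    refine ⟨Abelian.Ext.mk₀ (𝟙 S), fun η => ?_, fun v hv => ?_⟩
    · obtain ⟨s, rfl⟩ := Abelian.Ext.addEquiv₀.symm.surjective η
      exact ⟨s, by simp⟩
    · simpa using hv
  | step n N x hx reg h ih =>
    obtain ⟨ε, h1, h2⟩ := ih
    refine ⟨ε.comp (del reg) rfl, fun η => ?_, fun v hv => ?_⟩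
    · obtain ⟨η', rfl⟩ := ext_lift reg h.ann n η
      obtain ⟨s, rfl⟩ := h1 η'
      refine ⟨s, ?_⟩
      rw [Abelian.Ext.comp_assoc (Abelian.Ext.mk₀ s) ε (del reg) (zero_add n) rfl (by omega)]
    · apply h2
      rw [← Abelian.Ext.comp_assoc (Abelian.Ext.mk₀ v) ε (del reg) (zero_add n) rfl
        (by omega)] at hv
      exact ext_del_inj reg n ((RegTo.step n N x hx reg h).ext_kk n (by omega)) _ hv

end SDG

namespace SDG

open scoped Pointwise

variable {R : Type} [CommRing R] [IsLocalRing R]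

lemma finite_quotSMulTop (N : Type) [AddCommGroup N] [Module R N] [Module.Finite R N] (x : R) :
    Module.Finite R (QuotSMulTop x N) :=
  Module.Finite.of_surjective (Submodule.mkQ _) (Submodule.mkQ_surjective _)

lemma exists_regular [IsNoetherianRing R] (A : ModuleCat.{0} R) [Module.Finite R A]
    (hcon : ¬ ∃ u : A, u ≠ 0 ∧ ∀ r ∈ IsLocalRing.maximalIdeal R, r • u = 0) :
    ∃ x ∈ IsLocalRing.maximalIdeal R, IsSMulRegular A x := by
  push Not at hcon
  have : Subsingleton (kk R →ₗ[R] A) := by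
    refine subsingleton_of_forall_eq 0 fun f => ?_
    by_contra hf
    have hu : f (Ideal.Quotient.mk _ 1) ≠ 0 := by
      intro h0
      apply hf
      ext
      simpa using h0
    obtain ⟨r, hr, hne⟩ := hcon _ hu
    apply hne
    rw [← map_smul]
    have : r • (Ideal.Quotient.mk (IsLocalRing.maximalIdeal R) 1) = 0 :=
      Module.mem_annihilator.mp (mem_ann_kk hr) _
    exact (congrArg f this).trans (map_zero f)
  obtain ⟨x, hx, reg⟩ := IsSMulRegular.subsingleton_linearMap_iff.mp this
  refine ⟨x, ?_, reg⟩
  rwa [show Module.annihilator R (kk R) = IsLocalRing.maximalIdeal R from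
    Ideal.annihilator_quotient] at hx

lemma nontrivial_quot (A : Type) [AddCommGroup A] [Module R A] [Module.Finite R A]
    [Nontrivial A] {x : R} (hx : x ∈ IsLocalRing.maximalIdeal R) :
    Nontrivial (QuotSMulTop x A) := by
  apply Submodule.Quotient.nontrivial_iff.mpr
  refine (Submodule.top_ne_pointwise_smul_of_mem_jacobson_annihilator ?_).symm
  exact IsLocalRing.maximalIdeal_le_jacobson _ hx

lemma exists_regTo [IsNoetherianRing R] (n : ℕ) : ∀ (A : ModuleCat.{0} R), Module.Finite R A →
    Nontrivial A → Module.supportDim R A ≤ n → ∃ t ≤ n, ∃ S : ModuleCat.{0} R, RegTo S t A ∧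
      ∃ u : S, u ≠ 0 ∧ ∀ r ∈ IsLocalRing.maximalIdeal R, r • u = 0 := by
  induction n with
  | zero =>
    intro A hA hnt hd
    by_cases hcon : ∃ u : A, u ≠ 0 ∧ ∀ r ∈ IsLocalRing.maximalIdeal R, r • u = 0
    · exact ⟨0, le_rfl, A, RegTo.refl, hcon⟩
    obtain ⟨x, hx, reg⟩ := exists_regular A hcon
    have hdd := Module.supportDim_quotSMulTop_succ_eq_supportDim reg hx
    have hnt' : Nontrivial (QuotSMulTop x A) := nontrivial_quot A hx
    have hb := Module.supportDim_ne_bot_of_nontrivial R (QuotSMulTop x A)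
    rw [← hdd] at hd
    obtain ⟨m, hm⟩ := WithBot.ne_bot_iff_exists.mp hb
    rw [← hm] at hd
    exfalso
    have h2 : m + 1 ≤ 0 := by exact_mod_cast hd
    simp at h2
  | succ n ih =>
    intro A hA hnt hd
    by_cases hcon : ∃ u : A, u ≠ 0 ∧ ∀ r ∈ IsLocalRing.maximalIdeal R, r • u = 0
    · exact ⟨0, by omega, A, RegTo.refl, hcon⟩
    obtain ⟨x, hx, reg⟩ := exists_regular A hcon
    have hdd := Module.supportDim_quotSMulTop_succ_eq_supportDim reg hx
    have hnt' : Nontrivial (QuotSMulTop x A) := nontrivial_quot A hx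
    have hb := Module.supportDim_ne_bot_of_nontrivial R (QuotSMulTop x A)
    rw [← hdd] at hd
    have hle : Module.supportDim R (QuotSMulTop x A) ≤ n := by
      obtain ⟨m, hm⟩ := WithBot.ne_bot_iff_exists.mp hb
      rw [← hm] at hd ⊢
      have h2 : m + 1 ≤ (n : ℕ∞) + 1 := by exact_mod_cast hd
      have h3 : m ≤ n := (ENat.add_le_add_iff_right ENat.one_ne_top).mp h2
      exact_mod_cast h3
    obtain ⟨t, ht, S, hS, hu⟩ := ih (ModuleCat.of R (QuotSMulTop x A))
      (finite_quotSMulTop A x) hnt' hle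
    exact ⟨t + 1, by omega, S, RegTo.step t A x hx reg hS, hu⟩

lemma hom_factor {S : ShortComplex (ModuleCat.{0} R)} (hS : S.ShortExact) (X : ModuleCat.{0} R)
    (h1 : Subsingleton (Abelian.Ext X S.X₁ 1)) (φ : X ⟶ S.X₃) : ∃ ψ : X ⟶ S.X₂, ψ ≫ S.g = φ := by
  obtain ⟨b, hb⟩ := Abelian.Ext.covariant_sequence_exact₃ X
    hS (Abelian.Ext.mk₀ φ) rfl (h1.elim _ _)
  obtain ⟨ψ, rfl⟩ := Abelian.Ext.addEquiv₀.symm.surjective b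
  refine ⟨ψ, ?_⟩
  apply Abelian.Ext.addEquiv₀.symm.injective
  simpa using hb

/-- transfer regularity along Hom -/
lemma regular_of_hom [IsNoetherianRing R] (C B : Type) [AddCommGroup C] [Module R C]
    [Module.Finite R C] [AddCommGroup B] [Module R B] [Module.Finite R B]
    (hC : Module.annihilator R C = ⊥) (x : R) (reg : IsSMulRegular (C →ₗ[R] B) x) :
    IsSMulRegular B x := by
  let N : Submodule R B := LinearMap.ker (LinearMap.lsmul R B x)
  have : Subsingleton (C →ₗ[R] N) := by
    refine subsingleton_of_forall_eq 0 fun f => ?_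
    have h0 : N.subtype.comp f = 0 := by
      apply reg
      ext c
      have h2 : x • (f c : B) = 0 := (f c).2
      simpa using h2
    ext c
    simpa using LinearMap.congr_fun h0 c
  obtain ⟨r, hr, hreg⟩ := IsSMulRegular.subsingleton_linearMap_iff.mp this
  rw [hC, Submodule.mem_bot] at hr
  subst hr
  have hN : ∀ y ∈ N, y = 0 := fun y hy => by
    have := @hreg ⟨y, hy⟩ 0 (by simp)
    simpa using this
  rw [isSMulRegular_iff_right_eq_zero_of_smul]
  exact fun y hy => hN y hy

lemma hom_step (C : Type) [AddCommGroup C] [Module R C]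
    (A B : ModuleCat.{0} R) (e : A ≃ₗ[R] (C →ₗ[R] B)) (x : R) (reg : IsSMulRegular B x)
    (h1 : Subsingleton (Abelian.Ext (ModuleCat.of R C) B 1)) :
    Nonempty (QuotSMulTop x A ≃ₗ[R] (C →ₗ[R] QuotSMulTop x B)) := by
  let g : A →ₗ[R] (C →ₗ[R] QuotSMulTop x B) :=
    (LinearMap.compRight R (Submodule.mkQ (x • (⊤ : Submodule R B)))).comp e.toLinearMap
  have hg : ∀ a c, g a c = Submodule.mkQ (x • (⊤ : Submodule R B)) (e a c) := fun a c => rfl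
  have hsurj : Function.Surjective g := by
    intro φ
    obtain ⟨ψ, h2⟩ := hom_factor reg.smulShortComplex_shortExact (ModuleCat.of R C) h1
      (ModuleCat.ofHom φ)
    let ψ' : C →ₗ[R] B := ψ.hom
    refine ⟨e.symm ψ', ?_⟩
    ext c
    rw [hg, LinearEquiv.apply_symm_apply]
    exact ConcreteCategory.congr_hom h2 c
  have hker : LinearMap.ker g = x • (⊤ : Submodule R A) := by
    ext a
    rw [LinearMap.mem_ker, Submodule.mem_smul_pointwise_iff_exists]
    constructor
    · intro h
      have : ∀ c, ∃ b, x • b = e a c := by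
        intro c
        have := LinearMap.congr_fun h c
        rw [hg] at this
        simpa [Submodule.mem_smul_pointwise_iff_exists] using this
      choose f hf using this
      let F : C →ₗ[R] B :=
        { toFun := f
          map_add' := fun c d => reg (by simp only [smul_add, hf, map_add])
          map_smul' := fun r c => reg (by
            simp only [hf, map_smul, RingHom.id_apply]
            rw [smul_comm, hf]) }
      refine ⟨e.symm F, trivial, ?_⟩
      apply e.injective
      ext c
      rw [map_smul, LinearEquiv.apply_symm_apply]
      exact hf c
    · rintro ⟨b, -, rfl⟩
      ext c
      rw [hg, map_smul, LinearMap.smul_apply, Submodule.mkQ_apply, LinearMap.zero_apply,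
        Submodule.Quotient.mk_eq_zero]
      exact Submodule.smul_mem_pointwise_smul _ _ _ trivial
  exact ⟨(Submodule.quotEquivOfEq _ _ hker.symm).trans (g.quotKerEquivOfSurjective hsurj)⟩

lemma RegTo.hom [IsNoetherianRing R] (C : Type) [AddCommGroup C] [Module R C]
    [Module.Finite R C] (hC : Module.annihilator R C = ⊥)
    {S A : ModuleCat.{0} R} {n : ℕ} (h : RegTo S n A) :
    ∀ (B : ModuleCat.{0} R), Module.Finite R B → Nonempty (A ≃ₗ[R] (C →ₗ[R] B)) →
    (∀ j, 0 < j → j ≤ n → Subsingleton (Abelian.Ext (ModuleCat.of R C) B j)) →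
    ∃ D : ModuleCat.{0} R, Nonempty (S ≃ₗ[R] (C →ₗ[R] D)) := by
  induction h with
  | refl => exact fun B _ he _ => ⟨B, he⟩
  | step n N x hx reg h ih =>
    rintro B hB ⟨e⟩ hE
    have regB : IsSMulRegular B x := by
      apply regular_of_hom C B hC
      exact (e.isSMulRegular_congr x).mp reg
    refine ih (ModuleCat.of R (QuotSMulTop x B)) (finite_quotSMulTop B x)
      (hom_step C N B e x regB (hE 1 one_pos (by omega))) (fun j hj hjn => ?_)
    exact subsingleton_right_co regB.smulShortComplex_shortExact _ j (hE j hj (by omega))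
      (hE (j + 1) (by omega) (by omega))

end SDG

namespace SDG

open scoped Pointwise

variable {R : Type} [CommRing R] [IsLocalRing R]

/-- The map from the residue field determined by a socle element. -/
noncomputable def soc {S : Type} [AddCommGroup S] [Module R S] (u : S)
    (hu : ∀ r ∈ IsLocalRing.maximalIdeal R, r • u = 0) :
    (R ⧸ IsLocalRing.maximalIdeal R) →ₗ[R] S :=
  Submodule.liftQ _ (LinearMap.toSpanSingleton R S u) (fun r hr => by simpa using hu r hr)

lemma soc_mk {S : Type} [AddCommGroup S] [Module R S] (u : S)
    (hu : ∀ r ∈ IsLocalRing.maximalIdeal R, r • u = 0) (r : R) :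
    soc u hu (Ideal.Quotient.mk _ r) = r • u := rfl

lemma soc_inj {S : Type} [AddCommGroup S] [Module R S] (u : S) (h0 : u ≠ 0)
    (hu : ∀ r ∈ IsLocalRing.maximalIdeal R, r • u = 0) : Function.Injective (soc u hu) := by
  rw [injective_iff_map_eq_zero]
  intro a ha
  obtain ⟨r, rfl⟩ := Ideal.Quotient.mk_surjective a
  rw [soc_mk] at ha
  rw [Ideal.Quotient.eq_zero_iff_mem, IsLocalRing.mem_maximalIdeal]
  intro hr
  exact h0 ((hr.smul_eq_zero).mp ha)

/-- the short complex `k → S → S/ku` -/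
noncomputable def socSC {S : ModuleCat.{0} R} (u : S)
    (hu : ∀ r ∈ IsLocalRing.maximalIdeal R, r • u = 0) : ShortComplex (ModuleCat.{0} R) :=
  ModuleCat.shortComplexOfCompEqZero (soc u hu) (LinearMap.range (soc u hu)).mkQ
    (LinearMap.range_mkQ_comp _)

lemma socSC_shortExact {S : ModuleCat.{0} R} (u : S) (h0 : u ≠ 0)
    (hu : ∀ r ∈ IsLocalRing.maximalIdeal R, r • u = 0) : (socSC u hu).ShortExact :=
  ModuleCat.shortComplex_shortExact _ (LinearMap.exact_map_mkQ_range _) (soc_inj u h0 hu)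
    (Submodule.mkQ_surjective _)

lemma ext_of_kk [IsNoetherianRing R] (Y : ModuleCat.{0} R) [Module.Finite R Y] (j : ℕ)
    (hk : Subsingleton (Abelian.Ext (kk R) Y j))
    (hM : ∀ M : ModuleCat.{0} R, Module.Finite R M → Subsingleton (Abelian.Ext M Y (j + 1)))
    (M : Type) [AddCommGroup M] [Module R M] (hfin : Module.Finite R M) :
    Subsingleton (Abelian.Ext (ModuleCat.of R M) Y j) := by
  induction hfin using IsNoetherianRing.induction_on_isQuotientEquivQuotientPrime R with
  | subsingleton N =>
    refine subsingleton_of_forall_eq 0 fun α => ?_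
    have h0 : 𝟙 (ModuleCat.of R N) = 0 := by
      ext x
      exact Subsingleton.elim (α := N) _ _
    rw [← Abelian.Ext.mk₀_id_comp α, h0]
    simp
  | quotient N p e =>
    by_cases hp : p.1 = IsLocalRing.maximalIdeal R
    · let i : ModuleCat.of R N ≅ kk R :=
        (e.trans (Submodule.quotEquivOfEq _ _ hp)).toModuleIso
      refine subsingleton_of_forall_eq 0 fun α => ?_
      have h1 : (Abelian.Ext.mk₀ i.inv).comp α (zero_add j) = 0 := hk.elim _ _
      have h2 : (Abelian.Ext.mk₀ i.hom).comp ((Abelian.Ext.mk₀ i.inv).comp α (zero_add j))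
        (zero_add j) = α := by simp
      rw [← h2, h1]; simp
    · have hle := IsLocalRing.le_maximalIdeal p.2.ne_top
      obtain ⟨x, hxm, hxp⟩ := Set.not_subset.mp
        (fun h : (IsLocalRing.maximalIdeal R : Set R) ⊆ p.1 => hp (le_antisymm hle h))
      have reg : IsSMulRegular (ModuleCat.of R N) x := by
        refine (e.isSMulRegular_congr x).mpr ?_
        rw [isSMulRegular_iff_right_eq_zero_of_smul]
        intro y hy
        obtain ⟨r, rfl⟩ := Ideal.Quotient.mk_surjective y
        have h3 : Ideal.Quotient.mk p.1 (x * r) = 0 := hy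
        rw [Ideal.Quotient.eq_zero_iff_mem] at h3 ⊢
        exact (p.2.mem_or_mem h3).resolve_left hxp
      have hfg := ModuleCat.finite_ext R (ModuleCat.of R N) Y j
      have hx3 : Subsingleton (Abelian.Ext (ModuleCat.of R (QuotSMulTop x N)) Y (j + 1)) :=
        hM _ (finite_quotSMulTop N x)
      have hdiv : ∀ α : Abelian.Ext (ModuleCat.of R N) Y j, ∃ β, α = x • β := by
        intro α
        obtain ⟨b, hb⟩ : ∃ b : Abelian.Ext (ModuleCat.of R N) Y j,
            (Abelian.Ext.mk₀ (x • 𝟙 (ModuleCat.of R N))).comp b (zero_add j) = α :=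
          Abelian.Ext.contravariant_sequence_exact₁
            reg.smulShortComplex_shortExact Y α (add_comm 1 j) (hx3.elim _ _)
        refine ⟨b, ?_⟩
        rw [← hb]
        simp [Abelian.Ext.mk₀_smul]
      have htop : (⊤ : Submodule R (Abelian.Ext (ModuleCat.of R N) Y j)) ≤
          IsLocalRing.maximalIdeal R • ⊤ := by
        intro α _
        obtain ⟨β, rfl⟩ := hdiv α
        exact Submodule.smul_mem_smul hxm trivial
      have := Submodule.eq_bot_of_le_smul_of_le_jacobson_bot _ _ hfg.fg_top htop
        (IsLocalRing.maximalIdeal_le_jacobson _)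
      exact (Submodule.subsingleton_iff R).mp (subsingleton_of_bot_eq_top this.symm)
  | exact N₁ N₂ N₃ f g hf hg hfg h1 h3 =>
    exact subsingleton_mid_contra (ModuleCat.shortComplex_shortExact
      (ModuleCat.shortComplexOfCompEqZero f g hfg.linearMap_comp_eq_zero) hfg hf hg) Y j h1 h3

lemma ext_self_free (Y : ModuleCat.{0} R) (j : ℕ) (hj : 0 < j) :
    Subsingleton (Abelian.Ext (ModuleCat.of R R) Y j) := by
  obtain ⟨j, rfl⟩ : ∃ p, j = p + 1 := ⟨j - 1, by omega⟩
  have : Projective (ModuleCat.of R R) := inferInstance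
  exact Abelian.Ext.subsingleton_of_projective _ _ _

lemma ext_vanish [IsNoetherianRing R] (e : ℕ)
    (hG : ∀ (M : ModuleCat.{0} R) (i : ℕ), e < i →
      Subsingleton (Abelian.Ext M (ModuleCat.of R R) i))
    {S : ModuleCat.{0} R} {t : ℕ} (hS : RegTo S t (ModuleCat.of R R)) (u : S) (h0 : u ≠ 0)
    (hu : ∀ r ∈ IsLocalRing.maximalIdeal R, r • u = 0) (n : ℕ) :
    ∀ j, t < j → e < j + n → ∀ M : ModuleCat.{0} R, Module.Finite R M →
      Subsingleton (Abelian.Ext M (ModuleCat.of R R) j) := by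
  induction n with
  | zero => exact fun j _ hj M _ => hG M j hj
  | succ n ih =>
    intro j hj hjn M hM
    have ih' := ih (j + 1) (by omega) (by omega)
    refine ext_of_kk (ModuleCat.of R R) j ?_ ih' M hM
    have hSf : Module.Finite R S := by
      obtain ⟨f, hf⟩ := hS.surj
      exact Module.Finite.of_surjective f hf
    refine subsingleton_left_contra (socSC_shortExact u h0 hu) _ j ?_ ?_
    · exact hS.pd _ 0 (fun j hj => ext_self_free _ j hj) j (by omega)
    · exact ih' _ (Module.Finite.of_surjective _ (Submodule.mkQ_surjective _))

lemma socle_one [IsNoetherianRing R] (e : ℕ)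
    (hG : ∀ (M : ModuleCat.{0} R) (i : ℕ), e < i →
      Subsingleton (Abelian.Ext M (ModuleCat.of R R) i))
    {S : ModuleCat.{0} R} {t : ℕ} (hS : RegTo S t (ModuleCat.of R R)) (u : S) (h0 : u ≠ 0)
    (hu : ∀ r ∈ IsLocalRing.maximalIdeal R, r • u = 0) (v : S)
    (hv : ∀ r ∈ IsLocalRing.maximalIdeal R, r • v = 0) : ∃ r : R, v = r • u := by
  obtain ⟨f, hf⟩ := hS.surj
  have hSf : Module.Finite R S := Module.Finite.of_surjective f hf
  have hvan : Subsingleton (Abelian.Ext (socSC u hu).X₃ (ModuleCat.of R R) (1 + t)) :=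
    ext_vanish e hG hS u h0 hu e (1 + t) (by omega) (by omega) _
      (Module.Finite.of_surjective _ (Submodule.mkQ_surjective _))
  obtain ⟨ε, h1, h2⟩ := hS.rees
  let vv : kk R ⟶ S := ModuleCat.ofHom (soc v hv)
  let uu : kk R ⟶ S := ModuleCat.ofHom (soc u hu)
  obtain ⟨η, hη⟩ : ∃ η : Abelian.Ext S (ModuleCat.of R R) t,
      (Abelian.Ext.mk₀ uu).comp η (zero_add t) =
        (Abelian.Ext.mk₀ vv).comp ε (zero_add t) :=
    Abelian.Ext.contravariant_sequence_exact₁ (socSC_shortExact u h0 hu) _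
      ((Abelian.Ext.mk₀ vv).comp ε (zero_add t)) rfl (hvan.elim _ _)
  obtain ⟨s, rfl⟩ := h1 η
  have h3 : vv - uu ≫ s = 0 := by
    apply h2
    rw [sub_eq_add_neg, Abelian.Ext.mk₀_add, Abelian.Ext.add_comp, ← hη, Abelian.Ext.mk₀_neg]
    simp
  have h4 : vv = uu ≫ s := sub_eq_zero.mp h3
  have h5 : (1 : R) • v = s.hom ((1 : R) • u) :=
    ConcreteCategory.congr_hom h4 (Ideal.Quotient.mk _ 1 : R ⧸ IsLocalRing.maximalIdeal R)
  rw [one_smul, one_smul] at h5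
  obtain ⟨r, hr⟩ := hf (s.hom (f (1 : R)))
  obtain ⟨a, ha⟩ := hf u
  refine ⟨r, ?_⟩
  have ha' : u = a • f (1 : R) := by
    rw [← map_smul, ← ha]; congr 1; exact (mul_one a).symm
  have hr' : s.hom (f (1 : R)) = r • f (1 : R) := by
    rw [← map_smul, ← hr]; congr 1; exact (mul_one r).symm
  rw [h5, ha', map_smul, hr', smul_comm]

end SDG

namespace SDG

open scoped Pointwise

variable {R : Type} [CommRing R] [IsLocalRing R]

lemma exists_lam (C : Type) [AddCommGroup C] [Module R C] (c : C)
    (hc : c ∉ IsLocalRing.maximalIdeal R • (⊤ : Submodule R C)) :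
    ∃ l : C →ₗ[R] (R ⧸ IsLocalRing.maximalIdeal R), l c ≠ 0 := by
  letI : Field (R ⧸ IsLocalRing.maximalIdeal R) := Ideal.Quotient.field _
  have h1 : (IsLocalRing.maximalIdeal R • (⊤ : Submodule R C)).mkQ c ≠ 0 := by
    simpa using hc
  obtain ⟨f, hf⟩ := Module.Projective.exists_dual_ne_zero (R ⧸ IsLocalRing.maximalIdeal R) h1
  exact ⟨(f.restrictScalars R).comp (Submodule.mkQ _), hf⟩

lemma cyclic (C : Type) [AddCommGroup C] [Module R C] [Module.Finite R C]
    {S D : Type} [AddCommGroup S] [Module R S] [AddCommGroup D] [Module R D]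
    (e : S ≃ₗ[R] (C →ₗ[R] D)) (u : S) (h0 : u ≠ 0)
    (hu : ∀ r ∈ IsLocalRing.maximalIdeal R, r • u = 0)
    (h1 : ∀ v : S, (∀ r ∈ IsLocalRing.maximalIdeal R, r • v = 0) → ∃ r : R, v = r • u) :
    ∃ c : C, Submodule.span R {c} = ⊤ := by
  have hφ : ∀ r ∈ IsLocalRing.maximalIdeal R, r • e u = 0 := fun r hr => by
    rw [← map_smul, hu r hr, map_zero]
  have hφ0 : e u ≠ 0 := by simpa using h0
  obtain ⟨c0, hc0⟩ : ∃ c, e u c ≠ 0 := by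
    by_contra hcon
    push Not at hcon
    exact hφ0 (LinearMap.ext hcon)
  have hw : ∀ r ∈ IsLocalRing.maximalIdeal R, r • (e u c0) = 0 := fun r hr => by
    rw [← LinearMap.smul_apply, hφ r hr, LinearMap.zero_apply]
  have hlam : ∀ l : C →ₗ[R] (R ⧸ IsLocalRing.maximalIdeal R),
      ∃ r : R, (soc _ hw).comp l = r • e u := by
    intro l
    obtain ⟨r, hr⟩ := h1 (e.symm ((soc _ hw).comp l)) (fun r hr => by
      rw [← map_smul]
      rw [LinearEquiv.map_eq_zero_iff]
      ext c
      obtain ⟨a, ha⟩ := Ideal.Quotient.mk_surjective (l c)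
      simp only [LinearMap.smul_apply, LinearMap.comp_apply, ← ha, soc_mk, LinearMap.zero_apply]
      rw [smul_comm, hw r hr, smul_zero])
    refine ⟨r, ?_⟩
    rw [← map_smul, ← hr, LinearEquiv.apply_symm_apply]
  have hcm : c0 ∉ IsLocalRing.maximalIdeal R • (⊤ : Submodule R C) := by
    intro hc
    have : IsLocalRing.maximalIdeal R • (⊤ : Submodule R C) ≤ LinearMap.ker (e u) := by
      rw [Submodule.smul_le]
      intro r hr n _
      rw [LinearMap.mem_ker, map_smul, ← LinearMap.smul_apply, hφ r hr, LinearMap.zero_apply]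
    exact hc0 (this hc)
  obtain ⟨l, hl⟩ := exists_lam C c0 hcm
  obtain ⟨r, hr⟩ := hlam l
  have hru : IsUnit r := by
    by_contra hnu
    rw [hφ r ((IsLocalRing.mem_maximalIdeal r).mpr hnu)] at hr
    have h2 : soc _ hw (l c0) = 0 := LinearMap.congr_fun hr c0
    exact hl (soc_inj _ hc0 hw (h2.trans (map_zero _).symm))
  have hker : ∀ y, l y = 0 → y ∈ IsLocalRing.maximalIdeal R • (⊤ : Submodule R C) := by
    intro y hy
    by_contra hym
    obtain ⟨l', hl'⟩ := exists_lam C y hym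
    obtain ⟨r', hr'⟩ := hlam l'
    have h2 : soc _ hw (l y) = r • e u y := LinearMap.congr_fun hr y
    rw [hy, map_zero] at h2
    have h3 : e u y = 0 := (hru.smul_eq_zero).mp h2.symm
    have h4 : soc _ hw (l' y) = r' • e u y := LinearMap.congr_fun hr' y
    rw [h3, smul_zero] at h4
    exact hl' (soc_inj _ hc0 hw (h4.trans (map_zero _).symm))
  refine ⟨c0, ?_⟩
  letI : Field (R ⧸ IsLocalRing.maximalIdeal R) := Ideal.Quotient.field _
  have hle : (⊤ : Submodule R C) ≤
      Submodule.span R {c0} ⊔ IsLocalRing.maximalIdeal R • (⊤ : Submodule R C) := by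
    intro c _
    obtain ⟨a, ha⟩ := Ideal.Quotient.mk_surjective (l c * (l c0)⁻¹)
    have h5 : l (c - a • c0) = 0 := by
      rw [map_sub, map_smul, Algebra.smul_def]
      change l c - Ideal.Quotient.mk _ a * l c0 = 0
      rw [ha, inv_mul_cancel_right₀ hl, sub_self]
    have h6 : c = a • c0 + (c - a • c0) := by abel
    rw [h6]
    exact Submodule.add_mem_sup (Submodule.smul_mem _ _ (Submodule.mem_span_singleton_self _))
      (hker _ h5)
  exact top_le_iff.mp (Submodule.le_of_le_smul_of_le_jacobson_bot Module.Finite.fg_top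
    (IsLocalRing.maximalIdeal_le_jacobson _) hle)

lemma main [IsNoetherianRing R] (d e : ℕ) (hdim : ringKrullDim R = d)
    (hG : ∀ (M : ModuleCat.{0} R) (i : ℕ), e < i →
      Subsingleton (Abelian.Ext M (ModuleCat.of R R) i))
    (C : Type) [AddCommGroup C] [Module R C] [Module.Finite R C]
    (hb : Function.Bijective (LinearMap.lsmul R C))
    (hE : ∀ i : ℕ, 0 < i → i ≤ d →
      Subsingleton (Abelian.Ext (ModuleCat.of R C) (ModuleCat.of R C) i)) :
    Nonempty (C ≃ₗ[R] R) := by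
  have hann : Module.annihilator R C = ⊥ := by
    rw [eq_bot_iff]
    intro r hr
    rw [Module.mem_annihilator] at hr
    exact hb.1 (by ext c; simp [hr c])
  let E : R ≃ₗ[R] (C →ₗ[R] C) :=
    LinearEquiv.ofBijective ((LinearMap.lsmul R C) : R →ₗ[R] (C →ₗ[R] C)) hb
  obtain ⟨t, ht, S, hS, u, hu0, hu⟩ := exists_regTo d (ModuleCat.of R R)
    (inferInstanceAs (Module.Finite R R)) (inferInstanceAs (Nontrivial R))
    (by change Module.supportDim R R ≤ _; rw [Module.supportDim_self_eq_ringKrullDim, hdim])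
  obtain ⟨D, ⟨f⟩⟩ := RegTo.hom C hann hS (ModuleCat.of R C)
    (inferInstanceAs (Module.Finite R C)) ⟨E⟩ (fun j h0 h1 => hE j h0 (h1.trans ht))
  obtain ⟨c, hc⟩ := cyclic C f u hu0 hu (fun v hv => socle_one e hG hS u hu0 hu v hv)
  refine ⟨(LinearEquiv.ofBijective (LinearMap.toSpanSingleton R C c) ⟨?_, ?_⟩).symm⟩
  · rw [injective_iff_map_eq_zero]
    intro r hr
    have hr' : r • c = 0 := hr
    have : r ∈ Module.annihilator R C := by
      rw [Module.mem_annihilator]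
      intro m
      obtain ⟨a, rfl⟩ := Submodule.mem_span_singleton.mp (hc ▸ Submodule.mem_top : m ∈ _)
      rw [smul_comm, hr', smul_zero]
    rwa [hann] at this
  · intro m
    exact Submodule.mem_span_singleton.mp (hc ▸ Submodule.mem_top : m ∈ _)

end SDG

theorem d_semidualizing_free_of_local_gorenstein
    (R : Type) [CommRing R] [IsNoetherianRing R] [IsLocalRing R]
    (d : ℕ) (hdim : ringKrullDim R = d)
    (hGor : IsGorensteinRing R)
    (C : Type) [AddCommGroup C] [Module R C] [Module.Finite R C]
    (hC : IsSemidualizing R C d) :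
    Nonempty (C ≃ₗ[R] R) := by
  obtain ⟨-, e, hG⟩ := hGor
  exact SDG.main d e hdim
    (fun M i hi => SDG.ext_bridge M _ i (by omega) (hG M i hi)) C hC.2.1
    (fun i h0 h1 => SDG.ext_bridge _ _ i h0 (hC.2.2 i h0 h1))
end

section
/- Let R be a (not necessarily local) Gorenstein ring of finite Krull dimension d, and C a finitely generated d-semidualizing R-module. Then C is a projective R-module of rank 1. -/
open CategoryTheory

/-- vanishing of Ext groups -/
abbrev EV (R : Type) [CommRing R] (M N : Type) [AddCommGroup M] [Module R M]
    [AddCommGroup N] [Module R N] (i : ℕ) : Prop :=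
  Subsingleton (Abelian.Ext (ModuleCat.of R M) (ModuleCat.of R N) i)

lemma ev_of_old (R : Type) [CommRing R] (M N : ModuleCat R) (i : ℕ)
    (h : Subsingleton (((Ext R (ModuleCat R) (i+1)).obj (Opposite.op M)).obj N)) :
    Subsingleton (Abelian.Ext M N (i+1)) := by
  obtain ⟨P⟩ := (inferInstance : HasProjectiveResolution M).out
  have hz : Limits.IsZero (((Ext R (ModuleCat R) (i+1)).obj (Opposite.op M)).obj N) :=
    ModuleCat.isZero_of_subsingleton _
  have hz2 := hz.of_iso (P.isoExt (R := R) (i+1) N).symm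
  rw [← HomologicalComplex.exactAt_iff_isZero_homology,
    HomologicalComplex.exactAt_iff' _ i (i+1) (i+2) (by simp) (by simp)] at hz2
  rw [ShortComplex.moduleCat_exact_iff] at hz2
  refine subsingleton_of_forall_eq 0 fun α => ?_
  obtain ⟨f, hf, rfl⟩ := P.extMk_surjective α (i+2) rfl
  rw [P.extMk_eq_zero_iff _ _ _ _ i rfl]
  obtain ⟨g, hg⟩ := hz2 f hf
  exact ⟨g, hg⟩

section LES
variable {R : Type} [CommRing R] {M₁ M₂ M₃ N : Type}
  [AddCommGroup M₁] [Module R M₁] [AddCommGroup M₂] [Module R M₂] [AddCommGroup M₃] [Module R M₃]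
  [AddCommGroup N] [Module R N]

lemma ses_mk {f : M₁ →ₗ[R] M₂} {g : M₂ →ₗ[R] M₃}
    (hf : Function.Injective f) (hfg : Function.Exact f g) (hg : Function.Surjective g) :
    (ModuleCat.shortComplexOfCompEqZero f g hfg.linearMap_comp_eq_zero).ShortExact :=
  ModuleCat.shortComplex_shortExact _ hfg hf hg

lemma ev_mid {f : M₁ →ₗ[R] M₂} {g : M₂ →ₗ[R] M₃}
    (hf : Function.Injective f) (hfg : Function.Exact f g) (hg : Function.Surjective g)
    (i : ℕ) (h1 : EV R M₁ N i) (h3 : EV R M₃ N i) : EV R M₂ N i := by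
  refine subsingleton_of_forall_eq 0 fun x => ?_
  obtain ⟨y, rfl⟩ := Abelian.Ext.contravariant_sequence_exact₂ (ses_mk hf hfg hg) (ModuleCat.of R N) x
    (h1.elim _ _)
  rw [show y = 0 from h3.elim _ _, Abelian.Ext.comp_zero]

lemma ev_left {f : M₁ →ₗ[R] M₂} {g : M₂ →ₗ[R] M₃}
    (hf : Function.Injective f) (hfg : Function.Exact f g) (hg : Function.Surjective g)
    (i : ℕ) (h2 : EV R M₂ N i) (h3 : EV R M₃ N (i+1)) : EV R M₁ N i := by
  refine subsingleton_of_forall_eq 0 fun x => ?_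
  obtain ⟨y, rfl⟩ := Abelian.Ext.contravariant_sequence_exact₁ (ses_mk hf hfg hg) (ModuleCat.of R N) x
    (add_comm 1 i) (h3.elim _ _)
  rw [show y = 0 from h2.elim _ _, Abelian.Ext.comp_zero]

lemma ev_right {f : M₁ →ₗ[R] M₂} {g : M₂ →ₗ[R] M₃}
    (hf : Function.Injective f) (hfg : Function.Exact f g) (hg : Function.Surjective g)
    (i : ℕ) (h1 : EV R M₁ N i) (h2 : EV R M₂ N (i+1)) : EV R M₃ N (i+1) := by
  refine subsingleton_of_forall_eq 0 fun x => ?_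
  obtain ⟨y, rfl⟩ := Abelian.Ext.contravariant_sequence_exact₃ (ses_mk hf hfg hg) (ModuleCat.of R N) x
    (h2.elim _ _) (add_comm 1 i)
  rw [show y = 0 from h1.elim _ _, Abelian.Ext.comp_zero]

lemma ev_co {f : M₁ →ₗ[R] M₂} {g : M₂ →ₗ[R] M₃}
    (hf : Function.Injective f) (hfg : Function.Exact f g) (hg : Function.Surjective g)
    (i : ℕ) (h2 : EV R N M₂ i) (h1 : EV R N M₁ (i+1)) : EV R N M₃ i := by
  refine subsingleton_of_forall_eq 0 fun x => ?_
  obtain ⟨y, rfl⟩ := Abelian.Ext.covariant_sequence_exact₃ (ModuleCat.of R N) (ses_mk hf hfg hg) x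
    rfl (h1.elim _ _)
  rw [show y = 0 from h2.elim _ _, Abelian.Ext.zero_comp]

lemma ev_proj [Module.Projective R M₁] (i : ℕ) : EV R M₁ N (i+1) :=
  subsingleton_of_forall_eq 0 fun _ => Abelian.Ext.eq_zero_of_projective _

lemma ev_iso (e : M₁ ≃ₗ[R] M₂) (i : ℕ) (h : EV R M₁ N i) : EV R M₂ N i := by
  refine subsingleton_of_forall_eq 0 fun x => ?_
  have : (Abelian.Ext.mk₀ e.symm.toModuleIso.hom).comp ((Abelian.Ext.mk₀ e.toModuleIso.hom).comp x (zero_add _)) (zero_add _) = x := by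
    simp
    rw [show ModuleCat.ofHom (e.symm : M₂ →ₗ[R] M₁) ≫ ModuleCat.ofHom (e : M₁ →ₗ[R] M₂) = 𝟙 _ by
      ext; simp]
    simp
  rw [← this, show (Abelian.Ext.mk₀ e.toModuleIso.hom).comp x (zero_add _) = 0 from h.elim _ _,
    Abelian.Ext.comp_zero]

lemma ext_of_ev {f : M₁ →ₗ[R] M₂} {g : M₂ →ₗ[R] M₃}
    (hf : Function.Injective f) (hfg : Function.Exact f g) (hg : Function.Surjective g)
    (h3 : EV R M₃ N 1) (φ : M₁ →ₗ[R] N) : ∃ ψ : M₂ →ₗ[R] N, ψ ∘ₗ f = φ := by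
  obtain ⟨y, hy⟩ := Abelian.Ext.contravariant_sequence_exact₁ (ses_mk hf hfg hg) (ModuleCat.of R N)
    (Abelian.Ext.mk₀ (ModuleCat.ofHom φ)) (add_comm 1 0) (h3.elim _ _)
  obtain ⟨ψ, rfl⟩ := Abelian.Ext.mk₀_bijective _ _ |>.2 y
  rw [Abelian.Ext.mk₀_comp_mk₀] at hy
  have := (Abelian.Ext.mk₀_bijective _ _).1 hy
  exact ⟨ψ.hom, by simpa using congrArg ModuleCat.Hom.hom this⟩

lemma ev_one {f : M₁ →ₗ[R] M₂} {g : M₂ →ₗ[R] M₃}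
    (hf : Function.Injective f) (hfg : Function.Exact f g) (hg : Function.Surjective g)
    (h2 : EV R M₂ N 1)
    (h : ∀ φ : M₁ →ₗ[R] N, ∃ ψ : M₂ →ₗ[R] N, ψ ∘ₗ f = φ) : EV R M₃ N 1 := by
  refine subsingleton_of_forall_eq 0 fun x => ?_
  obtain ⟨y, rfl⟩ := Abelian.Ext.contravariant_sequence_exact₃ (ses_mk hf hfg hg) (ModuleCat.of R N) x
    (h2.elim _ _) (add_comm 1 0)
  obtain ⟨φ, rfl⟩ := Abelian.Ext.mk₀_bijective _ _ |>.2 y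
  obtain ⟨ψ, hψ⟩ := h φ.hom
  have : φ = ModuleCat.ofHom f ≫ ModuleCat.ofHom ψ := by
    ext x
    exact (LinearMap.congr_fun hψ x).symm
  rw [this, ← Abelian.Ext.mk₀_comp_mk₀]
  exact ShortComplex.ShortExact.extClass_comp_assoc (ses_mk hf hfg hg) _ (h := rfl)

lemma lift_of_ev {f : M₁ →ₗ[R] M₂} {g : M₂ →ₗ[R] M₃}
    (hf : Function.Injective f) (hfg : Function.Exact f g) (hg : Function.Surjective g)
    (h1 : EV R N M₁ 1) (φ : N →ₗ[R] M₃) : ∃ ψ : N →ₗ[R] M₂, g ∘ₗ ψ = φ := by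
  obtain ⟨y, hy⟩ := Abelian.Ext.covariant_sequence_exact₃ (ModuleCat.of R N) (ses_mk hf hfg hg)
    (Abelian.Ext.mk₀ (ModuleCat.ofHom φ)) rfl (h1.elim _ _)
  obtain ⟨ψ, rfl⟩ := Abelian.Ext.mk₀_bijective _ _ |>.2 y
  rw [Abelian.Ext.mk₀_comp_mk₀] at hy
  have := (Abelian.Ext.mk₀_bijective _ _).1 hy
  exact ⟨ψ.hom, by simpa using congrArg ModuleCat.Hom.hom this⟩

end LES

/-- all higher Ext from finite modules vanish in degree i -/
def FV (R : Type) [CommRing R] (i : ℕ) : Prop :=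
  ∀ (M : Type) [AddCommGroup M] [Module R M] [Module.Finite R M], EV R M R i

lemma ext_smul_surj {R : Type} [CommRing R] {M N : Type} [AddCommGroup M] [Module R M]
    [AddCommGroup N] [Module R N] (x : R) (hx : Function.Injective (LinearMap.lsmul R M x)) (i : ℕ)
    (h : EV R (M ⧸ LinearMap.range (LinearMap.lsmul R M x)) N (i+1))
    (e : Abelian.Ext (ModuleCat.of R M) (ModuleCat.of R N) i) : ∃ e', e = x • e' := by
  have hs := ses_mk hx (LinearMap.exact_map_mkQ_range _) (Submodule.mkQ_surjective _)
  obtain ⟨y, hy⟩ := Abelian.Ext.contravariant_sequence_exact₁ hs (ModuleCat.of R N) e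
    (add_comm 1 i) (h.elim _ _)
  refine ⟨y, ?_⟩
  rw [← hy]
  have : ModuleCat.ofHom (LinearMap.lsmul R M x) = x • 𝟙 (ModuleCat.of R M) := by
    ext; simp
  change (Abelian.Ext.mk₀ (ModuleCat.ofHom (LinearMap.lsmul R M x))).comp y _ = _
  rw [this]
  simp [Abelian.Ext.mk₀_smul]

lemma fv_step (R : Type) [CommRing R] [IsNoetherianRing R] [IsLocalRing R] (a : R) (ha : a ≠ 0)
    (hma : ∀ r ∈ IsLocalRing.maximalIdeal R, r * a = 0) (r : ℕ) (h : FV R (r+2)) : FV R (r+1) := by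
  have key : ∀ (I : Ideal R), I.IsPrime → EV R (R ⧸ I) R (r+1) := by
    intro I hI
    by_cases hIm : I = IsLocalRing.maximalIdeal R
    · -- k embeds in R
      let f : (R ⧸ I) →ₗ[R] R := I.liftQ (LinearMap.toSpanSingleton R R a) (by
        intro y hy
        rw [hIm] at hy
        simpa using hma y hy)
      have hf : Function.Injective f := by
        rw [← LinearMap.ker_eq_bot, LinearMap.ker_eq_bot']
        intro y hy
        obtain ⟨y, rfl⟩ := Submodule.Quotient.mk_surjective _ y
        simp only [f, Submodule.liftQ_apply, LinearMap.toSpanSingleton_apply, smul_eq_mul] at hy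
        rw [Submodule.Quotient.mk_eq_zero, hIm]
        by_contra hc
        have : IsUnit y := by simpa using hc
        exact ha (by simpa [this.mul_right_eq_zero] using hy)
      exact ev_left hf (LinearMap.exact_map_mkQ_range _) (Submodule.mkQ_surjective _) (r+1)
        (ev_proj r) (h _)
    · obtain ⟨x, hxm, hxI⟩ : ∃ x ∈ IsLocalRing.maximalIdeal R, x ∉ I := by
        by_contra! hc
        exact hIm (le_antisymm (IsLocalRing.le_maximalIdeal hI.ne_top) hc)
      have hinj : Function.Injective (LinearMap.lsmul R (R ⧸ I) x) := by
        rw [← LinearMap.ker_eq_bot, LinearMap.ker_eq_bot']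
        intro y hy
        obtain ⟨y, rfl⟩ := Submodule.Quotient.mk_surjective _ y
        rw [LinearMap.lsmul_apply, ← Submodule.Quotient.mk_smul, Submodule.Quotient.mk_eq_zero] at hy
        rw [Submodule.Quotient.mk_eq_zero]
        exact (hI.mem_or_mem hy).resolve_left hxI
      have hsurj := ext_smul_surj (N := R) x hinj (r+1) (h _)
      have hfin : Module.Finite R (Abelian.Ext (ModuleCat.of R (R ⧸ I)) (ModuleCat.of R R) (r+1)) :=
        inferInstance
      have := Submodule.eq_bot_of_le_smul_of_le_jacobson_bot (IsLocalRing.maximalIdeal R)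
        (⊤ : Submodule R (Abelian.Ext (ModuleCat.of R (R ⧸ I)) (ModuleCat.of R R) (r+1)))
        hfin.fg_top (by
          intro e _
          obtain ⟨e', rfl⟩ := hsurj e
          exact Submodule.smul_mem_smul hxm trivial)
        (by rw [IsLocalRing.jacobson_eq_maximalIdeal _ bot_ne_top])
      refine subsingleton_of_forall_eq 0 fun e => ?_
      have he : e ∈ (⊤ : Submodule R (Abelian.Ext (ModuleCat.of R (R ⧸ I)) (ModuleCat.of R R) (r+1))) := trivial
      rw [this] at he
      simpa using he
  intro M _ _ hM
  refine IsNoetherianRing.induction_on_isQuotientEquivQuotientPrime R hM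
    (motive := fun N _ _ _ => EV R N R (r+1)) ?_ ?_ ?_
  · intro N _ _ _ _
    exact ev_proj r
  · intro N _ _ _ p e
    exact ev_iso e.symm _ (key p.1 p.2)
  · intro N₁ _ _ _ N₂ _ _ _ N₃ _ _ _ f g hf hg hfg h1 h3
    exact ev_mid hf hfg hg _ h1 h3

lemma fv_one (R : Type) [CommRing R] [IsNoetherianRing R] [IsLocalRing R] (a : R) (ha : a ≠ 0)
    (hma : ∀ r ∈ IsLocalRing.maximalIdeal R, r * a = 0) (n : ℕ) (h : FV R (n+1)) : FV R 1 := by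
  induction n with
  | zero => exact h
  | succ n ih => exact ih (fv_step R a ha hma n h)

/-- cyclicity in the depth zero case. -/
lemma cyclic_depth_zero (R : Type) [CommRing R] [IsLocalRing R] (a : R) (ha : a ≠ 0)
    (hma : ∀ r ∈ IsLocalRing.maximalIdeal R, r * a = 0) (h : FV R 1)
    (C : Type) [AddCommGroup C] [Module R C] [Module.Finite R C]
    (hC : Function.Bijective (LinearMap.lsmul R C)) : ∃ c : C, ∀ y : C, ∃ r : R, y = r • c := by
  obtain ⟨c, hc⟩ : ∃ c : C, a • c ≠ 0 := by
    by_contra! hcon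
    apply ha
    apply hC.1
    ext y
    simpa using hcon y
  -- the embedding of the cyclic module spanned by a c
  have hker : LinearMap.ker (LinearMap.toSpanSingleton R C (a • c)) = IsLocalRing.maximalIdeal R := by
    apply le_antisymm
    · apply IsLocalRing.le_maximalIdeal
      intro htop
      have : (1 : R) ∈ LinearMap.ker (LinearMap.toSpanSingleton R C (a • c)) := by
        rw [htop]; trivial
      exact hc (by simpa using this)
    · intro r hr
      simp [smul_smul, hma r hr]
  let f : (R ⧸ IsLocalRing.maximalIdeal R) →ₗ[R] C :=
    (IsLocalRing.maximalIdeal R).liftQ (LinearMap.toSpanSingleton R C (a • c)) hker.ge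
  have hf : Function.Injective f := by
    rw [← LinearMap.ker_eq_bot]
    exact Submodule.ker_liftQ_eq_bot _ _ _ hker.le
  let φ : (R ⧸ IsLocalRing.maximalIdeal R) →ₗ[R] R :=
    (IsLocalRing.maximalIdeal R).liftQ (LinearMap.toSpanSingleton R R a) (by
        intro y hy
        simpa using hma y hy)
  obtain ⟨ψ, hψ⟩ := ext_of_ev hf (LinearMap.exact_map_mkQ_range f) (Submodule.mkQ_surjective _) (h _) φ
  have h1 : a * ψ c = a := by
    have := LinearMap.congr_fun hψ (Submodule.Quotient.mk 1)
    change ψ ((1 : R) • (a • c)) = (1 : R) • a at this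
    simpa using this
  have hu : IsUnit (ψ c) := by
    by_contra hn
    have := hma (ψ c) (by simpa using hn)
    rw [mul_comm, h1] at this
    exact ha this
  obtain ⟨u, hu⟩ := hu
  -- projection onto R c
  let π : C →ₗ[R] C := (LinearMap.toSpanSingleton R C ((↑u⁻¹ : R) • c)) ∘ₗ ψ
  obtain ⟨r, hr⟩ := hC.2 π
  have hrc : r • c = c := by
    have := LinearMap.congr_fun hr c
    simpa [π, smul_smul, ← hu] using this
  have hrr : IsUnit r := by
    have h2 : (r - 1) * ψ c = 0 := by
      have := congrArg ψ hrc
      rw [map_smul, smul_eq_mul] at this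
      rw [sub_mul, this]; simp
    rw [← hu] at h2
    have : r - 1 = 0 := by simpa using h2
    rw [sub_eq_zero] at this
    rw [this]; exact isUnit_one
  obtain ⟨v, rfl⟩ := hrr
  refine ⟨c, fun y => ⟨(↑v⁻¹ : R) * (ψ y * (↑u⁻¹ : R)), ?_⟩⟩
  have := LinearMap.congr_fun hr y
  simp only [LinearMap.lsmul_apply, π, LinearMap.comp_apply, LinearMap.toSpanSingleton_apply] at this
  rw [mul_smul, mul_smul, ← this, smul_smul]; simp

lemma lsmul_injective_of {R M : Type} [CommRing R] [AddCommGroup M] [Module R M] {x : R}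
    (h : ∀ m : M, x • m = 0 → m = 0) : Function.Injective (LinearMap.lsmul R M x) := by
  rw [← LinearMap.ker_eq_bot, LinearMap.ker_eq_bot']
  exact h

section ModX
variable {R A : Type} [CommRing R] [CommRing A] [Algebra R A] (x : R)

lemma x_smul_eq_zero (hker : ∀ r, algebraMap R A r = 0 ↔ ∃ s, r = x * s)
    {M : Type} [AddCommGroup M] [Module R M] [Module A M] [IsScalarTower R A M]
    (m : M) : x • m = 0 := by
  rw [← algebraMap_smul A x m, (hker x).2 ⟨1, by simp⟩, zero_smul]

lemma finsupp_modx (hsurj : Function.Surjective (algebraMap R A))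
    (hker : ∀ r, algebraMap R A r = 0 ↔ ∃ s, r = x * s)
    (X : Type) :
    Function.Surjective (Finsupp.mapRange.linearMap (α := X) (Algebra.linearMap R A)) ∧
    ∀ z : X →₀ R, Finsupp.mapRange.linearMap (Algebra.linearMap R A) z = 0 ↔ ∃ w, z = x • w := by
  refine ⟨Finsupp.mapRange_surjective _ (map_zero _) hsurj, fun z => ⟨fun h => ?_, ?_⟩⟩
  · have h1 : ∀ i, ∃ s, z i = x * s := fun i => (hker _).1 (by simpa using DFunLike.congr_fun h i)
    classical
    choose s hs using h1
    refine ⟨Finsupp.onFinset z.support (fun i => if i ∈ z.support then s i else 0) ?_, ?_⟩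
    · intro i hi
      by_contra hc
      simp [hc] at hi
    · ext i
      by_cases hi : i ∈ z.support
      · simp only [Finsupp.smul_apply, Finsupp.onFinset_apply, if_pos hi, smul_eq_mul, hs i]
      · simp only [Finsupp.smul_apply, Finsupp.onFinset_apply, if_neg hi, smul_zero]
        simpa using hi
  · rintro ⟨w, rfl⟩
    rw [map_smul]
    exact x_smul_eq_zero x hker _

lemma ev_modx (hsurj : Function.Surjective (algebraMap R A))
    (hker : ∀ r, algebraMap R A r = 0 ↔ ∃ s, r = x * s)
    (hx : ∀ r : R, x * r = 0 → r = 0) (N : Type) [AddCommGroup N] [Module R N] [Module A N]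
    [IsScalarTower R A N] (i : ℕ) : ∀ (M M' : Type) [AddCommGroup M] [Module R M]
    [AddCommGroup M'] [Module R M'] [Module A M'] [IsScalarTower R A M']
    (_ : ∀ m : M, x • m = 0 → m = 0) (q : M →ₗ[R] M') (_ : Function.Surjective q)
    (_ : ∀ m, q m = 0 ↔ ∃ m', m = x • m') (_ : EV R M N (i+1)), EV A M' N (i+1) := by
  induction i with
  | zero =>
    intro M M' _ _ _ _ _ _ hM q hq hqk h
    let p : (M →₀ R) →ₗ[R] M := Finsupp.linearCombination R id
    have hp : Function.Surjective p := Finsupp.linearCombination_id_surjective R M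
    let p' : (M →₀ A) →ₗ[A] M' := Finsupp.linearCombination A q
    let Q : (M →₀ R) →ₗ[R] (M →₀ A) := Finsupp.mapRange.linearMap (Algebra.linearMap R A)
    obtain ⟨hQ, hQk⟩ := finsupp_modx x hsurj hker M
    have hcomm : ∀ z, p' (Q z) = q (p z) := by
      intro z
      have : (p'.restrictScalars R) ∘ₗ Q = q ∘ₗ p := by
        ext m; simp [p', p, Q]
      exact LinearMap.congr_fun this z
    have hp' : Function.Surjective p' := by
      intro y
      obtain ⟨m, rfl⟩ := hq y
      obtain ⟨z, rfl⟩ := hp m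
      exact ⟨Q z, hcomm z⟩
    refine ev_one (R := A) (M₁ := LinearMap.ker p') (M₂ := M →₀ A) (f := (LinearMap.ker p').subtype) (g := p') (Submodule.injective_subtype (LinearMap.ker p')) (LinearMap.exact_subtype_ker_map p')
      hp' (ev_proj 0) ?_
    intro φ
    let qK : LinearMap.ker p →ₗ[R] LinearMap.ker p' :=
      { toFun := fun z => ⟨Q z, by simp [hcomm]⟩
        map_add' := fun a b => by ext1; simp
        map_smul' := fun r a => by ext1; simp }
    let φq : LinearMap.ker p →ₗ[R] N :=
      { toFun := fun z => φ (qK z)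
        map_add' := fun a b => by rw [map_add, map_add]
        map_smul' := fun r a => by
          rw [map_smul, ← algebraMap_smul A r (qK a), map_smul, algebraMap_smul]; rfl }
    obtain ⟨ψ, hψ⟩ := ext_of_ev (M₁ := LinearMap.ker p) (Submodule.injective_subtype (LinearMap.ker p))
      (LinearMap.exact_subtype_ker_map p) hp h φq
    let ψ' : (M →₀ A) →ₗ[A] N := Finsupp.linearCombination A (fun m => ψ (Finsupp.single m 1))
    have hψ' : ∀ z, ψ' (Q z) = ψ z := by
      intro z
      have : (ψ'.restrictScalars R) ∘ₗ Q = ψ := by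
        ext m; simp [ψ', Q]
      exact LinearMap.congr_fun this z
    refine ⟨ψ', ?_⟩
    ext ⟨y, hy⟩
    obtain ⟨z, rfl⟩ := hQ y
    obtain ⟨m, hm⟩ := (hqk _).1 ((hcomm z).symm.trans hy)
    obtain ⟨w, rfl⟩ := hp m
    have hQw : Q (x • w) = 0 := (hQk _).2 ⟨w, rfl⟩
    have hk : z - x • w ∈ LinearMap.ker p := by simp [hm]
    have := LinearMap.congr_fun hψ ⟨z - x • w, hk⟩
    simp only [LinearMap.comp_apply, Submodule.subtype_apply] at this ⊢
    rw [← hψ', map_sub, hQw, sub_zero] at this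
    refine this.trans (congrArg φ ?_)
    ext1
    change Q (z - x • w) = Q z
    rw [map_sub, hQw, sub_zero]
  | succ i ih =>
    intro M M' _ _ _ _ _ _ hM q hq hqk h
    let p : (M →₀ R) →ₗ[R] M := Finsupp.linearCombination R id
    have hp : Function.Surjective p := Finsupp.linearCombination_id_surjective R M
    let p' : (M →₀ A) →ₗ[A] M' := Finsupp.linearCombination A q
    let Q : (M →₀ R) →ₗ[R] (M →₀ A) := Finsupp.mapRange.linearMap (Algebra.linearMap R A)
    obtain ⟨hQ, hQk⟩ := finsupp_modx x hsurj hker M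
    have hcomm : ∀ z, p' (Q z) = q (p z) := by
      intro z
      have : (p'.restrictScalars R) ∘ₗ Q = q ∘ₗ p := by
        ext m; simp [p', p, Q]
      exact LinearMap.congr_fun this z
    have hp' : Function.Surjective p' := by
      intro y
      obtain ⟨m, rfl⟩ := hq y
      obtain ⟨z, rfl⟩ := hp m
      exact ⟨Q z, hcomm z⟩
    let qK : LinearMap.ker p →ₗ[R] LinearMap.ker p' :=
      { toFun := fun z => ⟨Q z, by simp [hcomm]⟩
        map_add' := fun a b => by ext1; simp
        map_smul' := fun r a => by ext1; simp }
    refine ev_right (R := A) (M₁ := LinearMap.ker p') (M₂ := M →₀ A) (f := (LinearMap.ker p').subtype) (g := p') (Submodule.injective_subtype (LinearMap.ker p')) (LinearMap.exact_subtype_ker_map p')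
      hp' (i+1) ?_ (ev_proj _)
    refine ih (LinearMap.ker p) (LinearMap.ker p') ?_ qK ?_ ?_ ?_
    · rintro ⟨z, hz⟩ h0
      ext j
      refine hx _ ?_
      have := DFunLike.congr_fun (congrArg Subtype.val h0) j
      simpa using this
    · rintro ⟨y, hy⟩
      obtain ⟨z, rfl⟩ := hQ y
      obtain ⟨m, hm⟩ := (hqk _).1 ((hcomm z).symm.trans hy)
      obtain ⟨w, rfl⟩ := hp m
      have hQw : Q (x • w) = 0 := (hQk _).2 ⟨w, rfl⟩
      have hk : z - x • w ∈ LinearMap.ker p := by simp [hm]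
      refine ⟨⟨_, hk⟩, ?_⟩
      ext1
      change Q (z - x • w) = Q z
      rw [map_sub, hQw, sub_zero]
    · rintro ⟨z, hz⟩
      constructor
      · intro h0
        obtain ⟨w, rfl⟩ := (hQk z).1 (congrArg Subtype.val h0)
        refine ⟨⟨w, hM _ ?_⟩, rfl⟩
        simpa using hz
      · rintro ⟨w, hw⟩
        rw [hw, map_smul]
        exact x_smul_eq_zero (A := A) x hker (M := LinearMap.ker p') (qK w)
    · exact ev_left (Submodule.injective_subtype (LinearMap.ker p)) (LinearMap.exact_subtype_ker_map p)
        hp (i+1) (ev_proj _) h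

lemma ev_free_modx (hsurj : Function.Surjective (algebraMap R A))
    (hker : ∀ r, algebraMap R A r = 0 ↔ ∃ s, r = x * s)
    (hx : ∀ r : R, x * r = 0 → r = 0) (X N : Type) [AddCommGroup N] [Module R N] (i : ℕ) :
    EV R (X →₀ A) N (i+2) := by
  obtain ⟨hQ, hQk⟩ := finsupp_modx x hsurj hker X
  refine ev_right (f := LinearMap.lsmul R (X →₀ R) x)
    (g := Finsupp.mapRange.linearMap (α := X) (Algebra.linearMap R A)) ?_ ?_ hQ (i+1)
    (ev_proj _) (ev_proj _)
  · refine lsmul_injective_of fun z hz => ?_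
    ext j
    exact hx _ (by simpa using DFunLike.congr_fun hz j)
  · intro z
    rw [hQk]
    constructor
    · rintro ⟨w, rfl⟩; exact ⟨w, rfl⟩
    · rintro ⟨w, rfl⟩; exact ⟨w, rfl⟩

lemma ev_rees (hsurj : Function.Surjective (algebraMap R A))
    (hker : ∀ r, algebraMap R A r = 0 ↔ ∃ s, r = x * s)
    (hx : ∀ r : R, x * r = 0 → r = 0) (i : ℕ) : ∀ (M : Type) [AddCommGroup M]
    [Module R M] [Module A M] [IsScalarTower R A M] (_ : EV R M R (i+2)), EV A M A (i+1) := by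
  induction i with
  | zero =>
    intro M _ _ _ _ h
    let p' : (M →₀ A) →ₗ[A] M := Finsupp.linearCombination A id
    have hp' : Function.Surjective p' := Finsupp.linearCombination_id_surjective A M
    refine ev_one (R := A) (M₁ := LinearMap.ker p') (M₂ := M →₀ A) (f := (LinearMap.ker p').subtype) (g := p') (Submodule.injective_subtype (LinearMap.ker p')) (LinearMap.exact_subtype_ker_map p')
      hp' (ev_proj 0) ?_
    intro g
    have hs := ses_mk (R := R) (f := LinearMap.lsmul R R x) (g := Algebra.linearMap R A)
      (lsmul_injective_of hx) (by
        intro r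
        rw [Algebra.linearMap_apply, hker]
        constructor
        · rintro ⟨w, rfl⟩; exact ⟨w, rfl⟩
        · rintro ⟨w, rfl⟩; exact ⟨w, rfl⟩) hsurj
    have hK := ses_mk (R := R) (M₁ := LinearMap.ker p') (M₂ := M →₀ A) (M₃ := M) (f := (LinearMap.ker p').subtype.restrictScalars R)
      (g := p'.restrictScalars R) (Submodule.injective_subtype (LinearMap.ker p'))
      (LinearMap.exact_subtype_ker_map p') hp'
    obtain ⟨e, he⟩ := Abelian.Ext.contravariant_sequence_exact₁ hK (ModuleCat.of R R)
      ((Abelian.Ext.mk₀ (ModuleCat.ofHom (g.restrictScalars R))).comp hs.extClass (zero_add 1))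
      (n₁ := 2) rfl (h.elim _ _)
    have hxid : ModuleCat.ofHom (LinearMap.lsmul R R x) = x • 𝟙 (ModuleCat.of R R) := by
      ext; simp
    have hxF : x • 𝟙 (ModuleCat.of R (M →₀ A)) = 0 := by
      ext : 1
      refine LinearMap.ext fun z => ?_
      exact x_smul_eq_zero x hker z
    have hex : e.comp (Abelian.Ext.mk₀ (ModuleCat.ofHom (LinearMap.lsmul R R x))) (add_zero 1) = 0 := by
      rw [hxid]
      have h1 : x • e = (Abelian.Ext.mk₀ (x • 𝟙 (ModuleCat.of R (M →₀ A)))).comp e (zero_add 1) := by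
        simp [Abelian.Ext.mk₀_smul]
      rw [hxF, Abelian.Ext.mk₀_zero, Abelian.Ext.zero_comp] at h1
      simpa [Abelian.Ext.mk₀_smul] using h1
    obtain ⟨h0, hh0⟩ := Abelian.Ext.covariant_sequence_exact₁ _ hs e hex (zero_add 1)
    obtain ⟨h', rfl⟩ := (Abelian.Ext.mk₀_bijective _ _).2 h0
    let γ : ModuleCat.of R (LinearMap.ker p') ⟶ ModuleCat.of R A :=
      ModuleCat.ofHom (g.restrictScalars R)
    let ι : ModuleCat.of R (LinearMap.ker p') ⟶ ModuleCat.of R (M →₀ A) :=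
      ModuleCat.ofHom ((LinearMap.ker p').subtype.restrictScalars R)
    have hd : (Abelian.Ext.mk₀ (ι ≫ h' - γ)).comp hs.extClass (zero_add 1) = 0 := by
      rw [← hh0] at he
      have hsub : Abelian.Ext.mk₀ (ι ≫ h' - γ) = Abelian.Ext.mk₀ (ι ≫ h') - Abelian.Ext.mk₀ γ :=
        map_sub Abelian.Ext.addEquiv₀.symm (ι ≫ h') γ
      rw [hsub]
      refine (map_sub (hs.extClass.postcomp (ModuleCat.of R (LinearMap.ker p')) (zero_add 1)) _ _).trans ?_
      refine sub_eq_zero.2 (Eq.trans ?_ he)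
      rw [← Abelian.Ext.mk₀_comp_mk₀]
      exact Abelian.Ext.comp_assoc_of_second_deg_zero _ _ _ _
    obtain ⟨l, hl⟩ := Abelian.Ext.covariant_sequence_exact₃ _ hs _ _ hd
    obtain ⟨l', rfl⟩ := (Abelian.Ext.mk₀_bijective _ _).2 l
    rw [Abelian.Ext.mk₀_comp_mk₀] at hl
    have hl2 := (Abelian.Ext.mk₀_bijective _ _).1 hl
    have hl0 : l' = 0 := by
      ext : 1
      refine LinearMap.ext fun z => hx _ ?_
      have : l'.hom (x • z) = x * l'.hom z := by rw [map_smul]; rfl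
      rw [← this, x_smul_eq_zero (A := A) x hker (M := LinearMap.ker p') z, map_zero]
    rw [hl0, Limits.zero_comp, eq_comm, sub_eq_zero] at hl2
    refine ⟨LinearMap.extendScalarsOfSurjective hsurj h'.hom, ?_⟩
    ext1 z
    have := LinearMap.congr_fun (congrArg ModuleCat.Hom.hom hl2) z
    exact this
  | succ i ih =>
    intro M _ _ _ _ h
    let p' : (M →₀ A) →ₗ[A] M := Finsupp.linearCombination A id
    have hp' : Function.Surjective p' := Finsupp.linearCombination_id_surjective A M
    refine ev_right (R := A) (M₁ := LinearMap.ker p') (M₂ := M →₀ A) (f := (LinearMap.ker p').subtype) (g := p') (Submodule.injective_subtype (LinearMap.ker p')) (LinearMap.exact_subtype_ker_map p')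
      hp' (i+1) (ih _ ?_) (ev_proj _)
    exact ev_left (M₁ := LinearMap.ker p') (M₂ := M →₀ A) (M₃ := M) (f := (LinearMap.ker p').subtype.restrictScalars R)
      (g := p'.restrictScalars R) (Submodule.injective_subtype (LinearMap.ker p'))
      (LinearMap.exact_subtype_ker_map p') hp' (i+2) (ev_free_modx x hsurj hker hx M R i) h

lemma fv_modx (hsurj : Function.Surjective (algebraMap R A))
    (hker : ∀ r, algebraMap R A r = 0 ↔ ∃ s, r = x * s)
    (hx : ∀ r : R, x * r = 0 → r = 0) (i : ℕ) (h : FV R (i+2)) : FV A (i+1) := by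
  intro M _ _ _
  let _ : Module R M := Module.compHom M (algebraMap R A)
  have : IsScalarTower R A M := ⟨fun r a m => by
    rw [Algebra.smul_def, mul_smul]; rfl⟩
  have : Module.Finite R A := Module.Finite.of_surjective (Algebra.linearMap R A) hsurj
  have : Module.Finite R M := Module.Finite.trans A M
  exact ev_rees x hsurj hker hx i M (h M)

end ModX

lemma exists_regular_of_no_socle (R : Type) [CommRing R] [IsNoetherianRing R] [IsLocalRing R]
    (h : ∀ a : R, a ≠ 0 → ∃ r ∈ IsLocalRing.maximalIdeal R, r * a ≠ 0) :
    ∃ x ∈ IsLocalRing.maximalIdeal R, ∀ r : R, x * r = 0 → r = 0 := by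
  have : Subsingleton ((R ⧸ IsLocalRing.maximalIdeal R) →ₗ[R] R) := by
    refine subsingleton_of_forall_eq 0 fun φ => ?_
    have h1 : φ (Submodule.Quotient.mk 1) = 0 := by
      by_contra hc
      obtain ⟨r, hr, hra⟩ := h _ hc
      apply hra
      rw [← smul_eq_mul, ← map_smul, ← Submodule.Quotient.mk_smul, smul_eq_mul, mul_one,
        (Submodule.Quotient.mk_eq_zero _).2 hr, map_zero]
    ext
    simpa using h1
  rw [IsSMulRegular.subsingleton_linearMap_iff] at this
  obtain ⟨r, hr, hreg⟩ := this
  refine ⟨r, by simpa [Ideal.annihilator_quotient] using hr, fun s hs => hreg ?_⟩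
  simpa using hs

lemma regular_of_semidualizing {R : Type} [CommRing R] [IsNoetherianRing R]
    (C : Type) [AddCommGroup C] [Module R C] [Module.Finite R C]
    (hC : Function.Bijective (LinearMap.lsmul R C)) (x : R) (hx : ∀ r : R, x * r = 0 → r = 0) :
    ∀ c : C, x • c = 0 → c = 0 := by
  have : Subsingleton (C →ₗ[R] LinearMap.ker (LinearMap.lsmul R C x)) := by
    refine subsingleton_of_forall_eq 0 fun φ => ?_
    obtain ⟨r, hr⟩ := hC.2 ((LinearMap.ker (LinearMap.lsmul R C x)).subtype ∘ₗ φ)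
    have h0 : r = 0 := by
      apply hx
      apply hC.1
      ext c
      have := LinearMap.congr_fun hr c
      simp only [LinearMap.lsmul_apply, LinearMap.comp_apply, Submodule.subtype_apply] at this
      simp only [LinearMap.lsmul_apply, mul_smul, this, map_zero, LinearMap.zero_apply]
      exact (φ c).2
    subst h0
    ext c
    have := LinearMap.congr_fun hr c
    simpa using this.symm
  rw [IsSMulRegular.subsingleton_linearMap_iff] at this
  obtain ⟨r, hr, hreg⟩ := this
  have h0 : r = 0 := by
    apply hC.1
    ext c
    simpa using Module.mem_annihilator.1 hr c
  subst h0
  intro c hc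
  have : (⟨c, hc⟩ : LinearMap.ker (LinearMap.lsmul R C x)) = 0 := hreg (by simp)
  exact congrArg Subtype.val this

set_option maxHeartbeats 1000000 in
/-- The local case. -/
lemma local_cyclic (d : ℕ) : ∀ (R : Type) [CommRing R] [IsNoetherianRing R] [IsLocalRing R]
    (_ : ringKrullDim R ≤ d) (n : ℕ) (_ : ∀ i, n < i → FV R i)
    (C : Type) [AddCommGroup C] [Module R C] [Module.Finite R C]
    (_ : Function.Bijective (LinearMap.lsmul R C)) (_ : ∀ i, 0 < i → i ≤ d → EV R C C i),
    ∃ c : C, ∀ y : C, ∃ r : R, y = r • c := by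
  induction d with
  | zero =>
    intro R _ _ _ hd n hn C _ _ _ hC hE
    obtain ⟨a, ha, hma⟩ : ∃ a : R, a ≠ 0 ∧ ∀ r ∈ IsLocalRing.maximalIdeal R, r * a = 0 := by
      by_contra! hcon
      obtain ⟨x, hxm, hx⟩ := exists_regular_of_no_socle R hcon
      have := ringKrullDim_quotient_succ_le_of_nonZeroDivisor (R := R) (r := x)
        (mem_nonZeroDivisors_iff_left.2 hx)
      have hnt : Nontrivial (R ⧸ Ideal.span {x}) := Ideal.Quotient.nontrivial_iff.2 (by
        rw [Ne, Ideal.span_singleton_eq_top]; simpa using hxm)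
      have h2 := ringKrullDim_nonneg_of_nontrivial (R := R ⧸ Ideal.span {x})
      have h3 := this.trans hd
      have : (1 : WithBot ℕ∞) ≤ 0 := le_trans (by simpa using add_le_add_left h2 1) h3
      exact absurd this (by decide)
    exact cyclic_depth_zero R a ha hma (fv_one R a ha hma n (hn _ (Nat.lt_succ_self n))) C hC
  | succ d ih =>
    intro R _ _ _ hd n hn C _ _ _ hC hE
    by_cases hcon : ∃ a : R, a ≠ 0 ∧ ∀ r ∈ IsLocalRing.maximalIdeal R, r * a = 0
    · obtain ⟨a, ha, hma⟩ := hcon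
      exact cyclic_depth_zero R a ha hma (fv_one R a ha hma n (hn _ (Nat.lt_succ_self n))) C hC
    push Not at hcon
    obtain ⟨x, hxm, hx⟩ := exists_regular_of_no_socle R hcon
    have hxC := regular_of_semidualizing C hC x hx
    have hdim := ringKrullDim_quotient_succ_le_of_nonZeroDivisor (R := R) (r := x)
        (mem_nonZeroDivisors_iff_left.2 hx)
    have hnt : Nontrivial (R ⧸ Ideal.span {x}) := Ideal.Quotient.nontrivial_iff.2 (by
        rw [Ne, Ideal.span_singleton_eq_top]; simpa using hxm)
    have hloc : IsLocalRing (R ⧸ Ideal.span {x}) :=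
      IsLocalRing.of_surjective' (Ideal.Quotient.mk (Ideal.span {x})) Ideal.Quotient.mk_surjective
    have hsurj : Function.Surjective (algebraMap R (R ⧸ Ideal.span {x})) :=
      Ideal.Quotient.mk_surjective
    have hker : ∀ r, algebraMap R (R ⧸ Ideal.span {x}) r = 0 ↔ ∃ s, r = x * s := by
      intro r
      rw [Ideal.Quotient.algebraMap_eq, Ideal.Quotient.eq_zero_iff_mem, Ideal.mem_span_singleton]
      rfl
    have hdA : ringKrullDim (R ⧸ Ideal.span {x}) ≤ d := by
      have h3 := hdim.trans hd
      push_cast at h3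
      exact ENat.WithBot.add_le_add_one_right_iff.1 h3
    have hnA : ∀ i, n < i → FV (R ⧸ Ideal.span {x}) i := by
      intro i hi
      obtain ⟨j, rfl⟩ : ∃ j, i = j + 1 := ⟨i - 1, by omega⟩
      exact fv_modx x hsurj hker hx j (hn _ (by omega))
    let C' := C ⧸ (Ideal.span {x} • (⊤ : Submodule R C))
    let q : C →ₗ[R] C' := Submodule.mkQ _
    have hq : Function.Surjective q := Submodule.mkQ_surjective _
    have hqk : ∀ c, q c = 0 ↔ ∃ c', c = x • c' := by
      intro c
      rw [Submodule.mkQ_apply, Submodule.Quotient.mk_eq_zero, Submodule.ideal_span_singleton_smul,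
        Submodule.mem_smul_pointwise_iff_exists]
      simp [eq_comm]
    have hinj : Function.Injective (LinearMap.lsmul R C x) := lsmul_injective_of hxC
    have hexact : Function.Exact (LinearMap.lsmul R C x) q := by
      intro c
      rw [hqk]
      constructor
      · rintro ⟨w, rfl⟩; exact ⟨w, rfl⟩
      · rintro ⟨w, rfl⟩; exact ⟨w, rfl⟩
    have hE' : ∀ i, 0 < i → i ≤ d → EV (R ⧸ Ideal.span {x}) C' C' i := by
      intro i hi hid
      obtain ⟨j, rfl⟩ : ∃ j, i = j + 1 := ⟨i - 1, by omega⟩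
      refine ev_modx x hsurj hker hx C' j C C' hxC q hq hqk ?_
      exact ev_co hinj hexact hq (j+1) (hE _ (by omega) (by omega)) (hE _ (by omega) (by omega))
    have hfin : Module.Finite (R ⧸ Ideal.span {x}) C' :=
      Module.Finite.of_restrictScalars_finite R _ _
    have hC' : Function.Bijective (LinearMap.lsmul (R ⧸ Ideal.span {x}) C') := by
      constructor
      · rw [injective_iff_map_eq_zero]
        intro a ha
        obtain ⟨r, rfl⟩ := hsurj a
        have h1 : ∀ c : C, ∃ c', r • c = x • c' := by
          intro c
          rw [← hqk, map_smul, ← algebraMap_smul (R ⧸ Ideal.span {x}) r (q c)]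
          exact LinearMap.congr_fun ha (q c)
        choose s hs using h1
        let ψ : C →ₗ[R] C :=
          { toFun := s
            map_add' := fun a b => hinj (by
              simp only [LinearMap.lsmul_apply, smul_add, ← hs])
            map_smul' := fun t a => hinj (by
              simp only [LinearMap.lsmul_apply, RingHom.id_apply, smul_comm x t, ← hs]
              rw [smul_comm]) }
        obtain ⟨t, ht⟩ := hC.2 ψ
        rw [hker]
        refine ⟨t, hC.1 ?_⟩
        ext c
        have := LinearMap.congr_fun ht c
        change t • c = s c at this
        simp only [LinearMap.lsmul_apply, hs, mul_smul, this]
      · intro φ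
        obtain ⟨ψ, hψ⟩ := lift_of_ev hinj hexact hq (hE 1 (by omega) (by omega))
          ((φ.restrictScalars R) ∘ₗ q)
        obtain ⟨r, rfl⟩ := hC.2 ψ
        refine ⟨algebraMap R _ r, ?_⟩
        refine LinearMap.ext fun y => ?_
        obtain ⟨c, rfl⟩ := hq y
        have := LinearMap.congr_fun hψ c
        simp only [LinearMap.comp_apply, LinearMap.lsmul_apply, map_smul] at this
        rw [LinearMap.lsmul_apply, algebraMap_smul]
        exact this
    obtain ⟨c', hc'⟩ := ih (R ⧸ Ideal.span {x}) hdA n hnA C' hC' hE'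
    obtain ⟨c, rfl⟩ := hq c'
    refine ⟨c, ?_⟩
    have htop : (⊤ : Submodule R C) ≤ Submodule.span R {c} := by
      refine Submodule.le_of_le_smul_of_le_jacobson_bot (I := IsLocalRing.maximalIdeal R)
        (Module.Finite.fg_top) (by rw [IsLocalRing.jacobson_eq_maximalIdeal _ bot_ne_top]) ?_
      intro y _
      obtain ⟨a, ha⟩ := hc' (q y)
      obtain ⟨r, rfl⟩ := hsurj a
      rw [algebraMap_smul, ← map_smul, ← sub_eq_zero, ← map_sub, hqk] at ha
      obtain ⟨z, hz⟩ := ha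
      rw [sub_eq_iff_eq_add'] at hz
      rw [hz]
      exact Submodule.add_mem_sup (Submodule.smul_mem _ _ (Submodule.mem_span_singleton_self c))
        (Submodule.smul_mem_smul hxm trivial)
    intro y
    obtain ⟨r, hr⟩ := Submodule.mem_span_singleton.1 (htop (Submodule.mem_top (x := y)))
    exact ⟨r, hr.symm⟩

lemma ev_loc {R A : Type} [CommRing R] [IsNoetherianRing R] (S : Submonoid R) [CommRing A] [Algebra R A]
    [IsLocalization S A] (N N' : Type) [AddCommGroup N] [Module R N]
    [AddCommGroup N'] [Module R N'] [Module A N'] [IsScalarTower R A N'] (g : N →ₗ[R] N')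
    [IsLocalizedModule S g] (i : ℕ) : ∀ (M M' : Type) [AddCommGroup M] [Module R M] [Module.Finite R M]
    [AddCommGroup M'] [Module R M'] [Module A M'] [IsScalarTower R A M']
    (f : M →ₗ[R] M') [IsLocalizedModule S f] (_ : EV R M N (i+1)), EV A M' N' (i+1) := by
  induction i with
  | zero =>
    intro M M' _ _ _ _ _ _ _ f _ h
    obtain ⟨n, p, hp⟩ := Module.Finite.exists_fin' R M
    let F : (Fin n → R) →ₗ[R] (Fin n → A) := LinearMap.pi fun j => Algebra.linearMap R A ∘ₗ LinearMap.proj j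
    have hF : IsLocalizedModule S F := inferInstance
    let p' : (Fin n → A) →ₗ[A] M' := IsLocalizedModule.mapExtendScalars S F f A p
    have hcomm : ∀ z, p' (F z) = f (p z) := fun z => by simp [p']
    have hp' : Function.Surjective p' := IsLocalizedModule.map_surjective S F f p hp
    let kf : LinearMap.ker p →ₗ[R] LinearMap.ker p' := 
      { toFun := fun z => ⟨F z, by simp [hcomm]⟩
        map_add' := fun a b => by ext1; simp
        map_smul' := fun r a => by ext1; simp }
    have hkf : IsLocalizedModule S kf := LinearMap.toKerLocalized_isLocalizedModule A S F f p
    refine ev_one (R := A) (M₁ := LinearMap.ker p') (M₂ := Fin n → A) (f := (LinearMap.ker p').subtype) (g := p') (Submodule.injective_subtype (LinearMap.ker p')) (LinearMap.exact_subtype_ker_map p')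
      hp' (ev_proj 0) ?_
    intro φ
    have hKfp : Module.FinitePresentation R (LinearMap.ker p) := Module.finitePresentation_of_finite _ _
    obtain ⟨⟨φ0, s⟩, hs⟩ := IsLocalizedModule.surj S (IsLocalizedModule.mapExtendScalars S kf g A) φ
    obtain ⟨ψ0, hψ⟩ := ext_of_ev (M₁ := LinearMap.ker p) (Submodule.injective_subtype (LinearMap.ker p))
      (LinearMap.exact_subtype_ker_map p) hp h φ0
    obtain ⟨u, hu⟩ := IsLocalization.map_units A s
    refine ⟨(↑u⁻¹ : A) • IsLocalizedModule.mapExtendScalars S F g A ψ0, ?_⟩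
    have h2 : IsLocalizedModule.mapExtendScalars S F g A ψ0 ∘ₗ (LinearMap.ker p').subtype = 
        IsLocalizedModule.mapExtendScalars S kf g A φ0 := by
      apply LinearMap.restrictScalars_injective R
      apply IsLocalizedModule.linearMap_ext S kf g
      ext1 z
      have e1 : IsLocalizedModule.mapExtendScalars S kf g A φ0 (kf z) = g (φ0 z) :=
        IsLocalizedModule.map_apply S kf g φ0 z
      have e2 : IsLocalizedModule.mapExtendScalars S F g A ψ0 (F z) = g (ψ0 z) :=
        IsLocalizedModule.map_apply S F g ψ0 z
      refine e2.trans (Eq.trans ?_ e1.symm)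
      rw [← hψ]
      rfl
    rw [LinearMap.smul_comp, h2, ← hs]
    refine LinearMap.ext fun z => ?_
    change (↑u⁻¹ : A) • ((s : R) • φ z) = φ z
    rw [← algebraMap_smul A (s : R) (φ z), ← hu, smul_smul, Units.inv_mul, one_smul]
  | succ i ih =>
    intro M M' _ _ _ _ _ _ _ f _ h
    obtain ⟨n, p, hp⟩ := Module.Finite.exists_fin' R M
    let F : (Fin n → R) →ₗ[R] (Fin n → A) := LinearMap.pi fun j => Algebra.linearMap R A ∘ₗ LinearMap.proj j
    have hF : IsLocalizedModule S F := inferInstance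
    let p' : (Fin n → A) →ₗ[A] M' := IsLocalizedModule.mapExtendScalars S F f A p
    have hcomm : ∀ z, p' (F z) = f (p z) := fun z => by simp [p']
    have hp' : Function.Surjective p' := IsLocalizedModule.map_surjective S F f p hp
    let kf : LinearMap.ker p →ₗ[R] LinearMap.ker p' := 
      { toFun := fun z => ⟨F z, by simp [hcomm]⟩
        map_add' := fun a b => by ext1; simp
        map_smul' := fun r a => by ext1; simp }
    have hkf : IsLocalizedModule S kf := LinearMap.toKerLocalized_isLocalizedModule A S F f p
    refine ev_right (R := A) (M₁ := LinearMap.ker p') (M₂ := Fin n → A) (f := (LinearMap.ker p').subtype) (g := p') (Submodule.injective_subtype (LinearMap.ker p')) (LinearMap.exact_subtype_ker_map p')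
      hp' (i+1) (ih (LinearMap.ker p) (LinearMap.ker p') kf ?_) (ev_proj _)
    exact ev_left (Submodule.injective_subtype (LinearMap.ker p)) (LinearMap.exact_subtype_ker_map p)
        hp (i+1) (ev_proj _) h

lemma lsmul_loc {R A : Type} [CommRing R] [IsNoetherianRing R] (S : Submonoid R) [CommRing A] [Algebra R A]
    [IsLocalization S A] (C C' : Type) [AddCommGroup C] [Module R C] [Module.Finite R C]
    [AddCommGroup C'] [Module R C'] [Module A C'] [IsScalarTower R A C'] (g : C →ₗ[R] C')
    [IsLocalizedModule S g] (hC : Function.Bijective (LinearMap.lsmul R C)) :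
    Function.Bijective (LinearMap.lsmul A C') := by
  have : Module.FinitePresentation R C := Module.finitePresentation_of_finite _ _
  have key : ∀ r : R, IsLocalizedModule.mapExtendScalars S g g A (LinearMap.lsmul R C r) =
      LinearMap.lsmul A C' (algebraMap R A r) := by
    intro r
    apply LinearMap.restrictScalars_injective R
    apply IsLocalizedModule.linearMap_ext S g g
    ext1 z
    have e1 : IsLocalizedModule.mapExtendScalars S g g A (LinearMap.lsmul R C r) (g z) = g (r • z) :=
        IsLocalizedModule.map_apply S g g _ z
    refine e1.trans ?_
    change _ = algebraMap R A r • g z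
    rw [map_smul, algebraMap_smul]
  constructor
  · rw [injective_iff_map_eq_zero]
    intro a ha
    obtain ⟨⟨r, s⟩, hrs⟩ := IsLocalization.surj S a
    have h1 : IsLocalizedModule.mapExtendScalars S g g A (LinearMap.lsmul R C r) =
        IsLocalizedModule.mapExtendScalars S g g A 0 := by
      rw [key, ← hrs, mul_comm, map_zero, ← smul_eq_mul, map_smul, ha, smul_zero]
    obtain ⟨t, ht⟩ := IsLocalizedModule.exists_of_eq (S := S) h1
    have h2 : (t : R) * r = 0 := by
      apply hC.1
      rw [map_zero, ← smul_eq_mul, map_smul]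
      rw [smul_zero] at ht
      exact ht
    have h3 := congrArg (algebraMap R A) h2
    rw [map_mul, map_zero, (IsLocalization.map_units A t).mul_right_eq_zero, ← hrs] at h3
    exact (IsLocalization.map_units A s).mul_left_eq_zero.1 h3
  · intro φ
    obtain ⟨⟨φ0, s⟩, hs⟩ := IsLocalizedModule.surj S (IsLocalizedModule.mapExtendScalars S g g A) φ
    obtain ⟨r, rfl⟩ := hC.2 φ0
    obtain ⟨u, hu⟩ := IsLocalization.map_units A s
    refine ⟨(↑u⁻¹ : A) * algebraMap R A r, ?_⟩
    rw [← smul_eq_mul, map_smul, ← key, ← hs]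
    refine LinearMap.ext fun z => ?_
    change (↑u⁻¹ : A) • ((s : R) • φ z) = φ z
    rw [← algebraMap_smul A (s : R) (φ z), ← hu, smul_smul, Units.inv_mul, one_smul]

lemma fv_loc (R : Type) [CommRing R] [IsNoetherianRing R] (S : Submonoid R) (n : ℕ)
    (h : ∀ (M : ModuleCat R) (i : ℕ), n < i → Subsingleton (Abelian.Ext M (ModuleCat.of R R) i))
    (i : ℕ) (hi : n < i) : FV (Localization S) i := by
  have h1 : HasInjectiveDimensionLE (ModuleCat.of R R) n := by
    refine HasInjectiveDimensionLT.mk ?_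
    intro i hi Y e
    exact (h Y i hi).elim _ _
  have h2 := ModuleCat.localizedModule_hasInjectiveDimensionLE n S (ModuleCat.of R R)
  have he : ∀ (M : ModuleCat R) (f : M →ₗ[R] Localization S), IsLocalizedModule S f →
      Nonempty (M.localizedModule S ≃ₗ[Localization S] Localization S) := by
    intro M f hf
    exact ⟨LinearEquiv.extendScalarsOfIsLocalization S _
      (IsLocalizedModule.linearEquiv S (M.localizedModuleMkLinearMap S) f)⟩
  obtain ⟨e⟩ := he (ModuleCat.of R R) (Algebra.linearMap R (Localization S)) inferInstance
  have h3 := (ModuleCat.hasInjectiveDimensionLE_iff_of_linearEquiv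
    (N := ModuleCat.of (Localization S) (Localization S)) e n).1 h2
  intro M _ _ _
  refine subsingleton_of_forall_eq 0 fun α => ?_
  exact α.eq_zero_of_hasInjectiveDimensionLT (n+1) hi

lemma equiv_of_cyclic (R C : Type) [CommRing R] [AddCommGroup C] [Module R C]
    (hC : Function.Bijective (LinearMap.lsmul R C)) (h : ∃ c : C, ∀ y : C, ∃ r : R, y = r • c) :
    Nonempty (C ≃ₗ[R] R) := by
  obtain ⟨c, hc⟩ := h
  refine ⟨(LinearEquiv.ofBijective (LinearMap.toSpanSingleton R C c) ⟨?_, ?_⟩).symm⟩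
  · rw [injective_iff_map_eq_zero]
    intro r hr
    apply hC.1
    ext y
    obtain ⟨s, rfl⟩ := hc y
    rw [LinearMap.toSpanSingleton_apply] at hr
    simp [hr]
  · intro y
    obtain ⟨r, rfl⟩ := hc y
    exact ⟨r, rfl⟩

theorem d_semidualizing_projective_rank_one_of_gorenstein
    (R : Type) [CommRing R] [IsNoetherianRing R]
    (d : ℕ) (hdim : ringKrullDim R = d)
    (hGor : IsGorensteinRing R)
    (C : Type) [AddCommGroup C] [Module R C] [Module.Finite R C]
    (hC : IsSemidualizing R C d) :
    Module.Projective R C ∧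
      ∀ (m : Ideal R) [m.IsMaximal],
        Nonempty (LocalizedModule m.primeCompl C ≃ₗ[Localization m.primeCompl]
          Localization m.primeCompl) := by
  obtain ⟨-, hlsmul, hext⟩ := hC
  obtain ⟨-, n, hn⟩ := hGor
  have hfp : Module.FinitePresentation R C := Module.finitePresentation_of_finite _ _
  have main : ∀ (m : Ideal R) [m.IsMaximal],
        Nonempty (LocalizedModule m.primeCompl C ≃ₗ[Localization m.primeCompl]
          Localization m.primeCompl) := by
    intro m hm
    have hloc : IsLocalRing (Localization m.primeCompl) :=
      inferInstanceAs (IsLocalRing (Localization.AtPrime m))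
    have hnoeth : IsNoetherianRing (Localization m.primeCompl) :=
      IsLocalization.isNoetherianRing m.primeCompl _ inferInstance
    have hl := lsmul_loc (A := Localization m.primeCompl) m.primeCompl C _
      (LocalizedModule.mkLinearMap m.primeCompl C) hlsmul
    refine equiv_of_cyclic _ _ hl ?_
    have hfin : Module.Finite (Localization m.primeCompl) (LocalizedModule m.primeCompl C) :=
      Module.Finite.of_isLocalizedModule m.primeCompl (LocalizedModule.mkLinearMap m.primeCompl C)
    refine local_cyclic d (Localization m.primeCompl) ?_ n ?_ (LocalizedModule m.primeCompl C) hl ?_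
    · have h1 := IsLocalization.AtPrime.ringKrullDim_eq_height m (Localization.AtPrime m)
      refine h1.le.trans ?_
      rw [← hdim]
      exact Ideal.height_le_ringKrullDim_of_ne_top hm.ne_top
    · refine fv_loc R m.primeCompl n ?_
      intro M i hi
      obtain ⟨j, rfl⟩ : ∃ j, i = j + 1 := ⟨i - 1, by omega⟩
      exact ev_of_old R M _ j (hn M _ hi)
    · intro i hi hid
      obtain ⟨j, rfl⟩ : ∃ j, i = j + 1 := ⟨i - 1, by omega⟩
      exact ev_loc m.primeCompl C _ (LocalizedModule.mkLinearMap m.primeCompl C) j C _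
        (LocalizedModule.mkLinearMap m.primeCompl C)
        (ev_of_old R (ModuleCat.of R C) (ModuleCat.of R C) j (hext _ hi hid))
  refine ⟨Module.projective_of_localization_maximal fun I hI => ?_, main⟩
  obtain ⟨e⟩ := main I
  exact Module.Projective.of_equiv e.symm
end

section
/- Let R = k[X,Y,Z]/(XY − Z^n) with k a field of characteristic 0, n ≥ 2, and 0 < m < n. Then Ext^1_R((x,z^m),(x,z^m)) ≠ 0. Consequently, the only rank-1 reflexive module over R that is 1-semidualizing is R itself. -/
open CategoryTheory MvPolynomial

lemma cocycle_of_ext {R : Type} [CommRing R] {M N : ModuleCat.{0} R}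
    (P : ProjectiveResolution M)
    (h : Subsingleton (((Ext R (ModuleCat R) 1).obj (Opposite.op M)).obj N))
    (f : P.complex.X 1 ⟶ N) (hf : P.complex.d 2 1 ≫ f = 0) :
    ∃ g : P.complex.X 0 ⟶ N, P.complex.d 1 0 ≫ g = f := by
  have hz : Limits.IsZero (((Ext R (ModuleCat R) 1).obj (Opposite.op M)).obj N) :=
    ModuleCat.isZero_of_subsingleton _
  have hz2 := hz.of_iso (P.isoExt (R := R) 1 N).symm
  rw [← HomologicalComplex.exactAt_iff_isZero_homology,
    HomologicalComplex.exactAt_iff' _ 0 1 2 (by simp) (by simp)] at hz2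
  rw [ShortComplex.moduleCat_exact_iff] at hz2
  exact hz2 f hf

lemma extend_of_ext {R : Type} [CommRing R] {M N F : Type} [AddCommGroup M] [Module R M]
    [AddCommGroup N] [Module R N] [AddCommGroup F] [Module R F] [Module.Projective R F]
    (h : Subsingleton (((Ext R (ModuleCat R) 1).obj (Opposite.op (ModuleCat.of R M))).obj
      (ModuleCat.of R N)))
    (q : F →ₗ[R] M) (hq : Function.Surjective q)
    (φ : LinearMap.ker q →ₗ[R] N) : ∃ H : F →ₗ[R] N, ∀ w : LinearMap.ker q, H w = φ w := by
  let P := ProjectiveResolution.of (ModuleCat.of R M)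
  let ε : P.complex.X 0 →ₗ[R] M := (P.π.f 0).hom
  have hε : Function.Surjective ε := (ModuleCat.epi_iff_surjective (P.π.f 0)).1 inferInstance
  let d1 : P.complex.X 1 →ₗ[R] P.complex.X 0 := (P.complex.d 1 0).hom
  let d2 : P.complex.X 2 →ₗ[R] P.complex.X 1 := (P.complex.d 2 1).hom
  have hεd (p) : ε (d1 p) = 0 := by
    have := congrArg (fun f => f.hom p) P.complex_d_comp_π_f_zero
    exact this
  have hdd (p) : d1 (d2 p) = 0 := by
    have := congrArg (fun f => f.hom p) (P.complex.d_comp_d 2 1 0)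
    exact this
  have hex (p) (hp : ε p = 0) : ∃ p', d1 p' = p := by
    have := P.exact₀
    rw [ShortComplex.moduleCat_exact_iff] at this
    exact this p hp
  have : Module.Projective R (P.complex.X 0) :=
    (IsProjective.iff_projective _).2 (P.projective 0)
  obtain ⟨t, ht⟩ := Module.projective_lifting_property q ε hq
  obtain ⟨s, hs⟩ := Module.projective_lifting_property ε q hε
  have ht' (p) : q (t p) = ε p := by rw [← ht]; rfl
  have hs' (p) : ε (s p) = q p := by rw [← hs]; rfl
  let td : P.complex.X 1 →ₗ[R] LinearMap.ker q :=
    (t ∘ₗ d1).codRestrict _ (fun p => by simp [ht', hεd])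
  obtain ⟨g, hg⟩ := cocycle_of_ext P h (ModuleCat.ofHom (φ ∘ₗ td)) (by
    ext p
    change φ (td (d2 p)) = 0
    have : td (d2 p) = 0 := by
      ext
      change t (d1 (d2 p)) = 0
      rw [hdd, map_zero]
    rw [this, map_zero])
  let g' : P.complex.X 0 →ₗ[R] N := g.hom
  have hg' (p) : g' (d1 p) = φ (td p) := congrArg (fun f => f.hom p) hg
  let r : F →ₗ[R] LinearMap.ker q :=
    (LinearMap.id - t ∘ₗ s).codRestrict _ (fun p => by simp [ht', hs'])
  refine ⟨g' ∘ₗ s + φ ∘ₗ r, fun w => ?_⟩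
  obtain ⟨p, hp⟩ := hex (s w) (by rw [hs']; exact w.2)
  change g' (s w) + φ (r w) = φ w
  rw [← hp, hg', ← map_add]
  congr 1
  ext
  change t (d1 p) + (w.1 - t (s w)) = w
  rw [hp]; abel

structure AnFacts (k : Type) [Field k] (n : ℕ) (R : Type) [CommRing R] (x y z : R) : Prop where
  rel : x * y = z ^ n
  dom : IsDomain R
  noeth : IsNoetherianRing R
  ufd : UniqueFactorizationMonoid (Localization.Away x)
  hy : ∀ m ≤ n, ∀ r, y * r ∈ Ideal.span {x, z ^ m} → r ∈ Ideal.span {x, z ^ m}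
  hzz : ∀ m ≤ n, ∀ r, z ^ m * r ∈ Ideal.span {x} → r ∈ Ideal.span {x, z ^ (n - m)}
  prime : (Ideal.span {x, z}).IsPrime
  evx : ∃ ψ : R →+* Polynomial k, ψ x = Polynomial.X ∧ ψ y = 0 ∧ ψ z = 0
  evz : ∀ m ≤ n, ∀ a < m, ∀ b c d, z ^ a ≠ b * x + c * y + d * z ^ m

section facts
variable {k : Type} [Field k]

lemma mem_span_X_Zpow (m : ℕ) (f : MvPolynomial (Fin 3) k) :
    f ∈ Ideal.span {(X 0 : MvPolynomial (Fin 3) k), X 2 ^ m} ↔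
      ∀ s ∈ f.support, 1 ≤ s 0 ∨ m ≤ s 2 := by
  have h := @mem_ideal_span_monomial_image (Fin 3) k _ f
    {Finsupp.single 0 1, Finsupp.single 2 m}
  rw [Set.image_pair] at h
  have e2 : (X 2 ^ m : MvPolynomial (Fin 3) k) = monomial (Finsupp.single 2 m) 1 := by
    rw [X_pow_eq_monomial]
  rw [e2, X, h]
  simp

variable {n : ℕ} {R : Type} [CommRing R] {π : MvPolynomial (Fin 3) k →+* R}

lemma pi_mem_span (hs : Function.Surjective π)
    (hk : RingHom.ker π = Ideal.span {(X 0 : MvPolynomial (Fin 3) k) * X 1 - X 2 ^ n})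
    {m : ℕ} (hm : m ≤ n) (f : MvPolynomial (Fin 3) k) :
    π f ∈ Ideal.span {π (X 0), π (X 2) ^ m} ↔
      f ∈ Ideal.span {(X 0 : MvPolynomial (Fin 3) k), X 2 ^ m} := by
  have e : Ideal.span {π (X 0), π (X 2) ^ m} =
      (Ideal.span {(X 0 : MvPolynomial (Fin 3) k), X 2 ^ m}).map π := by
    rw [Ideal.map_span, Set.image_pair, map_pow]
  have hle : RingHom.ker π ≤ Ideal.span {(X 0 : MvPolynomial (Fin 3) k), X 2 ^ m} := by
    rw [hk, Ideal.span_singleton_le_iff_mem]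
    refine Ideal.sub_mem _ (Ideal.mul_mem_right _ _ (Ideal.subset_span (by simp))) ?_
    exact Ideal.mem_of_dvd _ (pow_dvd_pow _ hm) (Ideal.subset_span (by simp))
  rw [e, ← Ideal.mem_comap, Ideal.comap_map_of_surjective' π hs, sup_of_le_left hle]

lemma rel_of_ker
    (hk : RingHom.ker π = Ideal.span {(X 0 : MvPolynomial (Fin 3) k) * X 1 - X 2 ^ n}) :
    π (X 0) * π (X 1) = π (X 2) ^ n := by
  have : (X 0 : MvPolynomial (Fin 3) k) * X 1 - X 2 ^ n ∈ RingHom.ker π := by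
    rw [hk]; exact Ideal.subset_span rfl
  rw [RingHom.mem_ker] at this
  simpa [sub_eq_zero] using this

lemma x_reg (hs : Function.Surjective π)
    (hk : RingHom.ker π = Ideal.span {(X 0 : MvPolynomial (Fin 3) k) * X 1 - X 2 ^ n})
    (r : R) (h : π (X 0) * r = 0) : r = 0 := by
  obtain ⟨f, rfl⟩ := hs r
  rw [← map_mul, ← RingHom.mem_ker, hk, Ideal.mem_span_singleton] at h
  obtain ⟨g, hg⟩ := h
  have hd : (X 0 : MvPolynomial (Fin 3) k) ∣ X 2 ^ n * g :=
    ⟨X 1 * g - f, by linear_combination hg⟩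
  rcases (X_prime (R := k) (i := (0 : Fin 3))).dvd_or_dvd hd with h1 | ⟨g', rfl⟩
  · have := (X_prime (R := k) (i := (0 : Fin 3))).dvd_of_dvd_pow h1
    rw [X_dvd_X] at this
    simp at this
  · rw [← RingHom.mem_ker, hk, Ideal.mem_span_singleton]
    refine ⟨g', mul_left_cancel₀ (X_ne_zero (0 : Fin 3)) ?_⟩
    linear_combination hg

lemma ex_lift (hs : Function.Surjective π)
    (hk : RingHom.ker π = Ideal.span {(X 0 : MvPolynomial (Fin 3) k) * X 1 - X 2 ^ n})
    (T : Type) [CommRing T] (φ : k →+* T) (a b c : T) (h : a * b = c ^ n) :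
    ∃ ψ : R →+* T, ψ (π (X 0)) = a ∧ ψ (π (X 1)) = b ∧ ψ (π (X 2)) = c ∧
      ∀ t, ψ (π (C t)) = φ t := by
  let θ : MvPolynomial (Fin 3) k →+* T := eval₂Hom φ ![a, b, c]
  have hθ : RingHom.ker π ≤ RingHom.ker θ := by
    rw [hk, Ideal.span_singleton_le_iff_mem, RingHom.mem_ker]
    simp [θ, h]
  refine ⟨RingHom.liftOfSurjective π hs ⟨θ, hθ⟩, ?_, ?_, ?_, ?_⟩
  all_goals
    try intro t
    rw [RingHom.liftOfRightInverse_comp_apply]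
    simp [θ]

lemma ex_pow (hs : Function.Surjective π)
    (hk : RingHom.ker π = Ideal.span {(X 0 : MvPolynomial (Fin 3) k) * X 1 - X 2 ^ n})
    (ι : MvPolynomial (Fin 2) k →+* R) (hι : ι = π.comp (rename ![0, 2]).toRingHom) (r : R) :
    ∃ N f, π (X 0) ^ N * r = ι f := by
  have h0 : ι (X 0) = π (X 0) := by simp [hι]
  have h2 : ι (X 1) = π (X 2) := by simp [hι]
  have hc (t : k) : ι (C t) = π (C t) := by simp [hι]
  have rel := rel_of_ker hk
  obtain ⟨f, rfl⟩ := hs r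
  induction f using MvPolynomial.induction_on with
  | C a => exact ⟨0, C a, by simp [hc]⟩
  | add p q hp hq =>
    obtain ⟨N, f, hf⟩ := hp
    obtain ⟨M, g, hg⟩ := hq
    refine ⟨N + M, X 0 ^ M * f + X 0 ^ N * g, ?_⟩
    simp only [map_add, map_mul, map_pow, h0, ← hf, ← hg]
    ring
  | mul_X p i hp =>
    obtain ⟨N, f, hf⟩ := hp
    fin_cases i
    · refine ⟨N, f * X 0, ?_⟩
      simp only [map_mul, h0, ← hf]
      simp [mul_assoc]
    · refine ⟨N + 1, f * X 1 ^ n, ?_⟩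
      simp only [map_mul, map_pow, h2, ← hf, ← rel]
      simp; ring
    · refine ⟨N, f * X 1, ?_⟩
      simp only [map_mul, h2, ← hf]
      simp [mul_assoc]

theorem anFacts (hn : 2 ≤ n) (hs : Function.Surjective π)
    (hk : RingHom.ker π = Ideal.span {(X 0 : MvPolynomial (Fin 3) k) * X 1 - X 2 ^ n}) :
    AnFacts k n R (π (X 0)) (π (X 1)) (π (X 2)) := by
  have hn0 : n ≠ 0 := by omega
  have rel := rel_of_ker hk
  have evx : ∃ ψ : R →+* Polynomial k, ψ (π (X 0)) = Polynomial.X ∧ ψ (π (X 1)) = 0 ∧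
      ψ (π (X 2)) = 0 := by
    obtain ⟨ψ, h0, h1, h2, -⟩ := ex_lift hs hk _ Polynomial.C Polynomial.X 0 0 (by simp [hn0])
    exact ⟨ψ, h0, h1, h2⟩
  have evz : ∀ m ≤ n, ∀ a < m, ∀ b c d,
      π (X 2) ^ a ≠ b * π (X 0) + c * π (X 1) + d * π (X 2) ^ m := by
    intro m hm a ha b c d h
    let J : Ideal (Polynomial k) := Ideal.span {Polynomial.X ^ m}
    have hT : (Ideal.Quotient.mk J Polynomial.X) ^ m = 0 := by
      rw [← map_pow, Ideal.Quotient.eq_zero_iff_mem]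
      exact Ideal.subset_span rfl
    obtain ⟨ψ, h0, h1, h2, -⟩ := ex_lift hs hk (Polynomial k ⧸ J)
      ((Ideal.Quotient.mk J).comp Polynomial.C) 0 0 (Ideal.Quotient.mk J Polynomial.X)
      (by rw [pow_eq_zero_of_le hm hT, zero_mul])
    have := congrArg ψ h
    simp only [map_add, map_mul, map_pow, h0, h1, h2, hT, mul_zero, add_zero] at this
    rw [← map_pow, Ideal.Quotient.eq_zero_iff_mem, Ideal.mem_span_singleton,
      pow_dvd_pow_iff Polynomial.X_ne_zero Polynomial.not_isUnit_X] at this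
    omega
  let ι : MvPolynomial (Fin 2) k →+* R := π.comp (rename ![0, 2]).toRingHom
  have h0 : ι (X 0) = π (X 0) := by simp [ι]
  have h2 : ι (X 1) = π (X 2) := by simp [ι]
  let S := MvPolynomial (Fin 2) k
  let K := FractionRing S
  have hX : algebraMap S K (X 0) ≠ 0 := by
    rw [Ne, FaithfulSMul.algebraMap_eq_zero_iff]; exact X_ne_zero _
  obtain ⟨ψ, p0, p1, p2, pc⟩ := ex_lift hs hk K ((algebraMap S K).comp C) (algebraMap S K (X 0))
    (algebraMap S K (X 1) ^ n / algebraMap S K (X 0)) (algebraMap S K (X 1)) (by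
      rw [mul_div_assoc', mul_div_cancel_left₀ _ hX])
  have hψι : ψ.comp ι = algebraMap S K := by
    apply MvPolynomial.ringHom_ext
    · intro r; simp [ι, pc]
    · intro i; fin_cases i
      · simp [h0, p0]
      · simp [h2, p2]
  have hιinj : Function.Injective ι := by
    intro a b hab
    apply FaithfulSMul.algebraMap_injective S K
    rw [← hψι]; simp [hab]
  have xpow (N : ℕ) (r : R) (h : π (X 0) ^ N * r = 0) : r = 0 := by
    induction N with
    | zero => simpa using h
    | succ N ih =>
      apply ih; apply x_reg hs hk; rw [← h]; ring
  have hψinj : Function.Injective ψ := by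
    rw [injective_iff_map_eq_zero]
    intro r hr
    obtain ⟨N, f, hf⟩ := ex_pow hs hk ι rfl r
    apply xpow N
    have := congrArg ψ hf
    rw [map_mul, hr, mul_zero, ← RingHom.comp_apply, hψι] at this
    have hf0 : f = 0 := (FaithfulSMul.algebraMap_eq_zero_iff S K).1 this.symm
    rw [hf, hf0, map_zero]
  have dom : IsDomain R := hψinj.isDomain ψ
  have hx0 : π (X 0) ≠ 0 := by
    obtain ⟨ψ, h, -⟩ := evx
    intro h'; rw [h', map_zero] at h; exact Polynomial.X_ne_zero h.symm
  refine ⟨rel, dom, isNoetherianRing_of_surjective _ _ π hs, ?_, ?_, ?_, ?_, evx, evz⟩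
  · let A := Localization.Away (π (X 0))
    let j : S →+* A := (algebraMap R A).comp ι
    let _ : Algebra S A := j.toAlgebra
    have hj (f : S) : algebraMap S A f = algebraMap R A (ι f) := rfl
    have hRA : Function.Injective (algebraMap R A) :=
      IsLocalization.injective A (powers_le_nonZeroDivisors_of_noZeroDivisors hx0)
    have hu : IsUnit (algebraMap R A (π (X 0))) :=
      IsLocalization.Away.algebraMap_isUnit (S := A) (π (X 0))
    have : IsLocalization (Submonoid.powers (X 0 : S)) A := by
      constructor
      · constructor
        · rintro ⟨_, N, rfl⟩
          change IsUnit (algebraMap R A (ι (X 0 ^ N)))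
          rw [map_pow, map_pow, h0]
          exact hu.pow N
        · intro a
          obtain ⟨N, r, hr⟩ := IsLocalization.Away.surj (S := A) (π (X 0)) a
          obtain ⟨M, f, hf⟩ := ex_pow hs hk ι rfl r
          refine ⟨⟨f, ⟨X 0 ^ (N + M), _, rfl⟩⟩, ?_⟩
          change a * algebraMap R A (ι (X 0 ^ (N + M))) = algebraMap R A (ι f)
          rw [← hf, map_pow, map_pow, h0, map_mul, map_pow, ← hr]; ring
        · intro a b hab
          refine ⟨1, ?_⟩
          rw [hj, hj] at hab
          rw [hιinj (hRA hab)]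
    exact UniqueFactorizationMonoid.of_isLocalization (Submonoid.powers (X 0 : S)) A
  · intro m hm r hr
    obtain ⟨f, rfl⟩ := hs r
    rw [← map_mul, pi_mem_span hs hk hm, mem_span_X_Zpow] at hr
    rw [pi_mem_span hs hk hm, mem_span_X_Zpow]
    intro s hsf
    have := hr (Finsupp.single 1 1 + s) (by
      rw [mem_support_iff, coeff_X_mul]; exact mem_support_iff.1 hsf)
    simpa using this
  · intro m hm r hr
    obtain ⟨f, rfl⟩ := hs r
    have hr' : π (X 2) ^ m * π f ∈ Ideal.span {π (X 0), π (X 2) ^ n} :=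
      Ideal.span_mono (by simp) hr
    rw [← map_pow π _ m, ← map_mul, pi_mem_span hs hk le_rfl, mem_span_X_Zpow] at hr'
    rw [pi_mem_span hs hk (by omega), mem_span_X_Zpow]
    intro s hsf
    have := hr' (Finsupp.single 2 m + s) (by
      rw [mem_support_iff, X_pow_eq_monomial, coeff_monomial_mul, one_mul]
      exact mem_support_iff.1 hsf)
    simp at this
    omega
  · let θ : MvPolynomial (Fin 3) k →+* Polynomial k :=
      eval₂Hom Polynomial.C ![0, Polynomial.X, 0]
    let J : Ideal (MvPolynomial (Fin 3) k) := Ideal.span {X 0, X 2 ^ 1}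
    let σ : Polynomial k →+* MvPolynomial (Fin 3) k := Polynomial.eval₂RingHom C (X 1)
    have hJ : J = RingHom.ker θ := by
      apply le_antisymm
      · rw [Ideal.span_le]
        rintro _ (rfl | rfl) <;> simp [θ]
      · intro f hf
        have : (Ideal.Quotient.mk J) = ((Ideal.Quotient.mk J).comp σ).comp θ := by
          apply MvPolynomial.ringHom_ext
          · intro r; simp [θ, σ]
          · intro i; fin_cases i
            · simp [θ, σ]
              exact Ideal.Quotient.eq_zero_iff_mem.2 (Ideal.subset_span (by simp))
            · simp [θ, σ]
            · simp [θ, σ]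
              exact Ideal.Quotient.eq_zero_iff_mem.2 (Ideal.subset_span (by simp))
        rw [← Ideal.Quotient.eq_zero_iff_mem, this, RingHom.comp_apply, hf, map_zero]
    have hJp : J.IsPrime := by rw [hJ]; exact RingHom.ker_isPrime θ
    have key (f) : π f ∈ Ideal.span {π (X 0), π (X 2)} ↔ f ∈ J := by
      have := pi_mem_span hs hk (m := 1) (by omega) f
      rwa [pow_one] at this
    refine ⟨fun h => hJp.ne_top ?_, ?_⟩
    · rw [Ideal.eq_top_iff_one] at h ⊢
      rwa [← key, map_one]
    · intro a b hab
      obtain ⟨f, rfl⟩ := hs a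
      obtain ⟨g, rfl⟩ := hs b
      rw [← map_mul, key] at hab
      rw [key, key]
      exact hJp.mem_or_mem hab
end facts

section main
variable {k : Type} [Field k] {n : ℕ} {R : Type} [CommRing R] {x y z : R}

lemma ext_not_subsingleton (H : AnFacts k n R x y z) {m : ℕ} (hm0 : 0 < m) (hmn : m < n)
    {C : Type} [AddCommGroup C] [Module R C] (e : C ≃ₗ[R] (Ideal.span {x, z ^ m} : Ideal R))
    (h : Subsingleton (((Ext R (ModuleCat R) 1).obj
        (Opposite.op (ModuleCat.of R C))).obj (ModuleCat.of R C))) : False := by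
  have := H.dom
  let I : Ideal R := Ideal.span {x, z ^ m}
  have hxI : x ∈ I := Ideal.subset_span (by simp)
  have hzI : z ^ m ∈ I := Ideal.subset_span (by simp)
  have hx0 : x ≠ 0 := by
    obtain ⟨ψ, h, -⟩ := H.evx
    intro h'; rw [h', map_zero] at h; exact Polynomial.X_ne_zero h.symm
  let q₀ : R × R →ₗ[R] I :=
    (LinearMap.toSpanSingleton R I ⟨x, hxI⟩).coprod (LinearMap.toSpanSingleton R I ⟨z ^ m, hzI⟩)
  have hq₀ (a b : R) : (q₀ (a, b) : R) = a * x + b * z ^ m := by simp [q₀]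
  have hq₀s : Function.Surjective q₀ := by
    rintro ⟨r, hr⟩
    obtain ⟨a, b, rfl⟩ := Ideal.mem_span_pair.1 hr
    exact ⟨(a, b), Subtype.ext (hq₀ a b)⟩
  let q : R × R →ₗ[R] C := e.symm.toLinearMap ∘ₗ q₀
  have hqs : Function.Surjective q := e.symm.surjective.comp hq₀s
  have hker (w : R × R) (hw : w ∈ LinearMap.ker q) : w.1 * x + w.2 * z ^ m = 0 := by
    have h1 : q₀ w = 0 := by
      have : e.symm (q₀ w) = 0 := hw
      simpa using this
    rw [← hq₀ w.1 w.2]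
    rw [Prod.mk.eta, h1]; rfl
  have hker2 (w : R × R) (hw : w.1 * x + w.2 * z ^ m = 0) : w ∈ LinearMap.ker q := by
    have h1 : q₀ w = 0 := by
      ext
      have := hq₀ w.1 w.2
      rw [Prod.mk.eta] at this
      rw [this, hw]; rfl
    change e.symm (q₀ w) = 0
    rw [h1, map_zero]
  have hb (w : R × R) (hw : w ∈ LinearMap.ker q) : w.2 ∈ Ideal.span {x, z ^ (n - m)} := by
    apply H.hzz m hmn.le
    rw [Ideal.mem_span_singleton]
    exact ⟨-w.1, by linear_combination hker w hw⟩
  have hmem (w : R × R) (hw : w ∈ LinearMap.ker q) : -(w.2 * z ^ (2 * m - n)) ∈ I := by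
    obtain ⟨a, b, hab⟩ := Ideal.mem_span_pair.1 (hb w hw)
    rw [← hab]
    have : -((a * x + b * z ^ (n - m)) * z ^ (2 * m - n)) =
      (-(a * z ^ (2 * m - n))) * x + (-b) * z ^ (n - m + (2 * m - n)) := by ring
    rw [this]
    refine I.add_mem (I.mul_mem_left _ hxI) (I.mul_mem_left _ ?_)
    exact Ideal.mem_of_dvd _ (pow_dvd_pow z (by omega)) hzI
  let φ₀ : LinearMap.ker q →ₗ[R] I :=
    { toFun := fun w => ⟨_, hmem w.1 w.2⟩
      map_add' := fun a b => by ext; simp; ring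
      map_smul' := fun a b => by ext; simp; ring }
  obtain ⟨G, hG⟩ := extend_of_ext h q hqs (e.symm.toLinearMap ∘ₗ φ₀)
  let w : LinearMap.ker q := ⟨(z ^ m, -x), hker2 _ (by ring)⟩
  have h1 : e (G (z ^ m, -x)) = φ₀ w := by
    have := hG w
    change G (z ^ m, -x) = e.symm (φ₀ w) at this
    rw [this, LinearEquiv.apply_symm_apply]
  have h2 : (z ^ m, -x) = z ^ m • ((1, 0) : R × R) + (-x) • ((0, 1) : R × R) := by simp
  have h3 : z ^ m * (e (G (1, 0))).1 - x * (e (G (0, 1))).1 = x * z ^ (2 * m - n) := by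
    have h4 := congrArg (fun i : I => (i : R)) h1
    simp only [h2, map_add, map_smul] at h4
    have h5 : (φ₀ w : R) = x * z ^ (2 * m - n) := by
      change -(-x * z ^ (2 * m - n)) = _
      ring
    rw [h5] at h4
    rw [← h4]
    simp [sub_eq_add_neg]
  obtain ⟨a, b, hab⟩ := Ideal.mem_span_pair.1 (e (G (1, 0))).2
  obtain ⟨c, d, hcd⟩ := Ideal.mem_span_pair.1 (e (G (0, 1))).2
  rw [← hab, ← hcd] at h3
  by_cases h2m : 2 * m ≤ n
  · rw [show 2 * m - n = 0 by omega] at h3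
    obtain ⟨ψ, p1, p2, p3⟩ := H.evx
    have := congrArg ψ h3
    simp only [map_sub, map_add, map_mul, map_pow, p1, p3, zero_pow hm0.ne', mul_zero, zero_mul,
      add_zero, zero_sub, pow_zero, mul_one] at this
    have h6 := congrArg (fun p => Polynomial.coeff p 1) this
    simp [Polynomial.coeff_X_mul] at h6
  · have h7 : z ^ m * z ^ m = x * y * z ^ (2 * m - n) := by
      rw [H.rel, ← pow_add, ← pow_add]; congr 1; omega
    have h8 : z ^ (2 * m - n) = (-c) * x + (b * z ^ (2 * m - n)) * y + (a - d) * z ^ m := by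
      apply mul_left_cancel₀ hx0
      linear_combination -h3 + b * h7
    exact H.evz m hmn.le _ (by omega) _ _ _ h8

lemma PP_mem (H : AnFacts k n R x y z) {m : ℕ} (hm : m ≤ n) (s t : ℕ) (r c : R)
    (h : y ^ t * r = z ^ (n * s + m) * c) : ∃ r' ∈ Ideal.span {x, z ^ m}, r = x ^ s * r' := by
  have := H.dom
  have hyt (m : ℕ) (hm : m ≤ n) (t : ℕ) (r : R) (h : y ^ t * r ∈ Ideal.span {x, z ^ m}) :
      r ∈ Ideal.span {x, z ^ m} := by
    induction t with
    | zero => simpa using h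
    | succ t ih =>
      apply ih; apply H.hy m hm; convert h using 1; ring
  have hx0 : x ≠ 0 := by
    obtain ⟨ψ, h, -⟩ := H.evx
    intro h'; rw [h', map_zero] at h; exact Polynomial.X_ne_zero h.symm
  induction s generalizing r c with
  | zero =>
    refine ⟨r, hyt m hm t r ?_, by simp⟩
    rw [h]
    exact Ideal.mul_mem_right _ _ (Ideal.subset_span (by simp))
  | succ s ih =>
    have e1 : z ^ (n * (s + 1) + m) = x * y * z ^ (n * s + m) := by rw [H.rel]; ring
    rw [e1] at h
    have h1 : r ∈ Ideal.span {x, z ^ n} := by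
      apply hyt n le_rfl t
      rw [h, mul_assoc, mul_assoc]
      exact Ideal.mul_mem_right _ _ (Ideal.subset_span (by simp))
    obtain ⟨a, b, rfl⟩ := Ideal.mem_span_pair.1 h1
    obtain ⟨r', hr', h2⟩ := ih (a + b * y) (y * c) (by
      apply mul_left_cancel₀ hx0
      linear_combination h + y ^ t * b * H.rel)
    refine ⟨r', hr', ?_⟩
    linear_combination x * h2 - b * H.rel

lemma mem_PP (H : AnFacts k n R x y z) {m : ℕ} (hm : m ≤ n) (s : ℕ) (r' : R)
    (h : r' ∈ Ideal.span {x, z ^ m}) : ∃ t c, y ^ t * (x ^ s * r') = z ^ (n * s + m) * c := by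
  obtain ⟨a, b, rfl⟩ := Ideal.mem_span_pair.1 h
  refine ⟨s + 1, a * z ^ (n - m) + y * b, ?_⟩
  have h1 : z ^ (n * s + m) = x ^ s * y ^ s * z ^ m := by
    rw [pow_add, pow_mul, ← H.rel]; ring
  have h2 : z ^ m * z ^ (n - m) = x * y := by rw [H.rel, ← pow_add]; congr 1; omega
  rw [h1]
  linear_combination - x ^ s * y ^ s * a * h2

lemma PP_unit (H : AnFacts k n R x y z) (hn : 2 ≤ n) {u : R} (hu : u ∉ Ideal.span {x, z})
    (a : ℕ) (c : R) (h : ∃ t d, y ^ t * (u * c) = z ^ a * d) : ∃ t d, y ^ t * c = z ^ a * d := by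
  have := H.dom
  have hz0 : z ≠ 0 := fun h' => H.evz 2 hn 1 (by omega) 0 0 0 (by simp [h'])
  have hp := H.prime
  have hyp : y ∉ Ideal.span {x, z} := fun h' => hp.ne_top (by
    rw [Ideal.eq_top_iff_one]
    have := H.hy 1 (by omega) 1
    rw [pow_one, mul_one] at this
    exact this h')
  induction a with
  | zero => exact ⟨0, c, by simp⟩
  | succ a ih =>
    obtain ⟨t, d, h1⟩ := h
    obtain ⟨t', e, h2⟩ := ih ⟨t, z * d, by rw [h1]; ring⟩
    have h3 : u * y ^ t * e = y ^ t' * z * d := by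
      apply mul_left_cancel₀ (pow_ne_zero a hz0)
      linear_combination - u * y ^ t * h2 + y ^ t' * h1
    have h4 : e ∈ Ideal.span {x, z} := by
      have h5 : u * y ^ t * e ∈ Ideal.span {x, z} := by
        rw [h3]
        exact Ideal.mul_mem_right _ _ (Ideal.mul_mem_left _ _ (Ideal.subset_span (by simp)))
      rcases hp.mem_or_mem h5 with h6 | h6
      · rcases hp.mem_or_mem h6 with h7 | h7
        · exact absurd h7 hu
        · exact absurd (hp.mem_of_pow_mem _ h7) hyp
      · exact h6
    obtain ⟨α, β, rfl⟩ := Ideal.mem_span_pair.1 h4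
    refine ⟨t' + 1, α * z ^ (n - 1) + y * β, ?_⟩
    have h8 : z * z ^ (n - 1) = x * y := by
      rw [H.rel, ← pow_succ']; congr 1; omega
    linear_combination y * h2 - z ^ a * α * h8

lemma reflexive_ideal (H : AnFacts k n R x y z) (hn : 2 ≤ n) (J : Ideal R) (hJ : J ≠ ⊥)
    (hr : Module.IsReflexive R J)
    (hG : ∀ d c : R, d ≠ 0 → (∀ j ∈ J, ∃ N : ℕ, d ∣ x ^ N * (c * j)) → ∃ N : ℕ, d ∣ x ^ N * c) :
    ∃ s m : ℕ, m < n ∧ ∀ r, r ∈ J ↔ ∃ r' ∈ Ideal.span {x, z ^ m}, r = x ^ s * r' := by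
  have := H.dom
  have := H.noeth
  have hx0 : x ≠ 0 := by
    obtain ⟨ψ, h, -⟩ := H.evx
    intro h'; rw [h', map_zero] at h; exact Polynomial.X_ne_zero h.symm
  have hxu : ¬ IsUnit x := by
    intro h'
    apply H.prime.ne_top
    exact Ideal.eq_top_of_isUnit_mem _ (Ideal.subset_span (by simp)) h'
  obtain ⟨j0, hj0, hj00⟩ := Submodule.exists_mem_ne_zero_of_ne_bot hJ
  let Q : ℕ → R → Prop := fun a r => ∃ t c, y ^ t * r = z ^ a * c
  have hex : ∃ b, ¬ ∀ j ∈ J, Q b j := by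
    obtain ⟨s, hs⟩ := FiniteMultiplicity.of_not_isUnit hxu hj00
    refine ⟨n * (s + 1), fun h => hs ?_⟩
    obtain ⟨t, c, h1⟩ := h j0 hj0
    obtain ⟨r', -, h2⟩ := PP_mem H (m := 0) (by omega) (s + 1) t j0 c h1
    exact ⟨r', h2⟩
  classical
  obtain ⟨a, ha1, ha2⟩ : ∃ a, (∀ j ∈ J, Q a j) ∧ ¬ ∀ j ∈ J, Q (a + 1) j := by
    have h0 : Nat.find hex ≠ 0 := by
      intro h
      apply Nat.find_spec hex
      rw [h]
      exact fun j _ => ⟨0, j, by simp⟩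
    obtain ⟨a, ha⟩ := Nat.exists_eq_succ_of_ne_zero h0
    refine ⟨a, ?_, ?_⟩
    · by_contra h
      have := Nat.find_min' hex h
      omega
    · have := Nat.find_spec hex
      rwa [ha] at this
  push Not at ha2
  obtain ⟨j', hj', hj'2⟩ := ha2
  obtain ⟨t, u, hu⟩ := ha1 j' hj'
  have hup : u ∉ Ideal.span {x, z} := by
    intro h
    apply hj'2
    obtain ⟨α, β, rfl⟩ := Ideal.mem_span_pair.1 h
    refine ⟨t + 1, α * z ^ (n - 1) + y * β, ?_⟩
    have h8 : z * z ^ (n - 1) = x * y := by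
      rw [H.rel, ← pow_succ']; congr 1; omega
    linear_combination y * hu - z ^ a * α * h8
  have key : ∀ h, Q a h → h ∈ J := by
    rintro h ⟨t', h', hh⟩
    have ex (f : Module.Dual R J) : ∃ c, f ⟨j0, hj0⟩ * h = j0 * c := by
      have hf (j) (hj : j ∈ J) : f ⟨j0, hj0⟩ * j = f ⟨j, hj⟩ * j0 := by
        have e1 : j • (⟨j0, hj0⟩ : J) = j0 • (⟨j, hj⟩ : J) := by
          ext; simp [mul_comm]
        have := congrArg f e1
        simp only [map_smul, smul_eq_mul] at this
        linear_combination this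
      obtain ⟨N, c1, hc1⟩ := hG j0 (f ⟨j0, hj0⟩) hj00
        (fun j hj => ⟨0, f ⟨j, hj⟩, by rw [hf j hj]; ring⟩)
      set F := f ⟨j0, hj0⟩
      have h1 : u * y ^ t' * (c1 * h) = x ^ N * (y ^ t * f ⟨j', hj'⟩ * h') := by
        apply mul_left_cancel₀ hj00
        linear_combination - u * y ^ t' * h * hc1 + x ^ N * (y ^ t * h') * hf j' hj'
          + u * x ^ N * F * hh - x ^ N * h' * F * hu
      obtain ⟨T, D, hT⟩ := PP_unit H hn hup (n * N) (c1 * h)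
        ⟨N + t', y ^ t * f ⟨j', hj'⟩ * h', by
          rw [pow_mul, ← H.rel]
          linear_combination y ^ N * h1⟩
      obtain ⟨r', -, h2⟩ := PP_mem H (m := 0) (by omega) N T (c1 * h) D hT
      refine ⟨r', mul_left_cancel₀ (pow_ne_zero N hx0) ?_⟩
      linear_combination h * hc1 + j0 * h2
    choose Φ hΦ using ex
    let Φ' : Module.Dual R (Module.Dual R J) :=
      { toFun := Φ
        map_add' := fun f g => by
          apply mul_left_cancel₀ hj00
          rw [mul_add, ← hΦ, ← hΦ, ← hΦ, LinearMap.add_apply]; ring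
        map_smul' := fun r f => by
          apply mul_left_cancel₀ hj00
          rw [← hΦ, LinearMap.smul_apply, smul_eq_mul, smul_eq_mul, RingHom.id_apply]
          linear_combination r * hΦ f }
    obtain ⟨j, hj⟩ := (Module.bijective_dual_eval R J).2 Φ'
    have h1 : (j : R) = Φ J.subtype := congrArg (fun g => g J.subtype) hj
    have h2 : h = Φ J.subtype := mul_left_cancel₀ hj00 (hΦ J.subtype)
    rw [h2, ← h1]
    exact j.2
  have hmod : n * (a / n) + a % n = a := Nat.div_add_mod a n
  have hlt : a % n < n := Nat.mod_lt _ (by omega)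
  refine ⟨a / n, a % n, hlt, fun r => ⟨fun hr => ?_, ?_⟩⟩
  · obtain ⟨t, c, h⟩ := ha1 r hr
    exact PP_mem H hlt.le (a / n) t r c (by rw [hmod]; exact h)
  · rintro ⟨r', hr', rfl⟩
    apply key
    have := mem_PP H hlt.le (a / n) r' hr'
    rwa [hmod] at this

lemma ideal_equiv [IsDomain R] (I J : Ideal R) (a b : R) (ha : a ≠ 0) (hb : b ≠ 0)
    (h1 : ∀ i ∈ I, ∃ j ∈ J, a * i = b * j) (h2 : ∀ j ∈ J, ∃ i ∈ I, a * i = b * j) :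
    Nonempty (I ≃ₗ[R] J) := by
  have h3 (i : I) : ∃ j : J, a * i = b * j := by
    obtain ⟨j, hj, h⟩ := h1 i i.2
    exact ⟨⟨j, hj⟩, h⟩
  choose F hF using h3
  let F' : I →ₗ[R] J :=
    { toFun := F
      map_add' := fun i j => by
        ext
        apply mul_left_cancel₀ hb
        rw [← hF, Submodule.coe_add, Submodule.coe_add, mul_add, mul_add, hF, hF]
      map_smul' := fun r j => by
        ext
        apply mul_left_cancel₀ hb
        rw [← hF, Submodule.coe_smul, Submodule.coe_smul, RingHom.id_apply, smul_eq_mul,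
          smul_eq_mul]
        linear_combination r * hF j }
  refine ⟨LinearEquiv.ofBijective F' ⟨fun i i' h => ?_, fun j => ?_⟩⟩
  · ext
    apply mul_left_cancel₀ ha
    rw [hF, hF]
    exact congrArg (fun j : J => b * (j : R)) h
  · obtain ⟨i, hi, h⟩ := h2 j j.2
    refine ⟨⟨i, hi⟩, ?_⟩
    ext
    apply mul_left_cancel₀ hb
    rw [← h]
    exact (hF ⟨i, hi⟩).symm

lemma normalize_ideal (H : AnFacts k n R x y z) (I : Ideal R) (hI : I ≠ ⊥) :
    ∃ J : Ideal R, J ≠ ⊥ ∧ Nonempty (I ≃ₗ[R] J) ∧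
    ∀ d c : R, d ≠ 0 → (∀ j ∈ J, ∃ N : ℕ, d ∣ x ^ N * (c * j)) → ∃ N : ℕ, d ∣ x ^ N * c := by
  have := H.dom
  have := H.noeth
  have := H.ufd
  have hx0 : x ≠ 0 := by
    obtain ⟨ψ, h, -⟩ := H.evx
    intro h'; rw [h', map_zero] at h; exact Polynomial.X_ne_zero h.symm
  let A := Localization.Away x
  let α : R →+* A := algebraMap R A
  have hα : Function.Injective α :=
    IsLocalization.injective A (powers_le_nonZeroDivisors_of_noZeroDivisors hx0)
  have hu : IsUnit (α x) := IsLocalization.Away.algebraMap_isUnit (S := A) x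
  have : IsDomain A := IsLocalization.Away.isDomain (x := x) A hx0
  have hdvd (d c : R) : α d ∣ α c ↔ ∃ N : ℕ, d ∣ x ^ N * c := by
    constructor
    · rintro ⟨e, he⟩
      obtain ⟨N, r, hr⟩ := IsLocalization.Away.surj (S := A) x e
      refine ⟨N, r, hα ?_⟩
      rw [map_mul, map_mul, map_pow, he]
      change α x ^ N * (α d * e) = α d * algebraMap R A r
      rw [← hr]; change _ = α d * (e * α x ^ N); ring
    · rintro ⟨N, h⟩
      have := map_dvd α h
      rw [map_mul, map_pow] at this
      exact (hu.pow N).dvd_mul_left.1 this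
  obtain ⟨i0, hi0, hi00⟩ := Submodule.exists_mem_ne_zero_of_ne_bot hI
  have hαi0 : α i0 ≠ 0 := by rwa [Ne, map_eq_zero_iff α hα]
  let S : Set A := {c | ∃ f, α i0 = f * c ∧ ∀ i ∈ I, f ∣ α i}
  have hwf : WellFounded (DvdNotUnit : A → A → Prop) := wellFounded_dvdNotUnit
  obtain ⟨c₀, ⟨f, hfc, hfI⟩, hmin⟩ := hwf.has_min S
    ⟨α i0, 1, by simp, fun i _ => one_dvd _⟩
  have hf0 : f ≠ 0 := by rintro rfl; apply hαi0; rw [hfc, zero_mul]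
  have hc0 : c₀ ≠ 0 := by rintro rfl; apply hαi0; rw [hfc, mul_zero]
  have noprime (q : A) (hq : Prime q) : ∃ i ∈ I, ¬ f * q ∣ α i := by
    by_contra hcon
    push Not at hcon
    obtain ⟨c', hc'⟩ := hcon i0 hi0
    have : c₀ = q * c' := mul_left_cancel₀ hf0 (by rw [← hfc, hc']; ring)
    refine hmin c' ⟨f * q, hc', hcon⟩ ⟨?_, q, hq.not_isUnit, by rw [this]; ring⟩
    rintro rfl
    exact hc0 (by rw [this, mul_zero])
  have hGA (d : A) (hd : d ≠ 0) : ∀ c : A, (∀ i ∈ I, f * d ∣ c * α i) → d ∣ c := by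
    induction d using UniqueFactorizationMonoid.induction_on_prime with
    | h₁ => exact absurd rfl hd
    | h₂ d hd' => intro c _; exact hd'.dvd
    | h₃ d q hd0 hq ih =>
      intro c hc
      obtain ⟨i, hi, hqi⟩ := noprime q hq
      have hqc : q ∣ c := by
        obtain ⟨i', hi'⟩ := hfI i hi
        obtain ⟨e, he⟩ := hc i hi
        have : q ∣ c * i' := ⟨d * e, mul_left_cancel₀ hf0 (by
          rw [hi'] at he; linear_combination he)⟩
        rcases hq.dvd_or_dvd this with h | ⟨w, rfl⟩
        · exact h
        · exact absurd ⟨w, by rw [hi']; ring⟩ hqi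
      obtain ⟨c', rfl⟩ := hqc
      apply mul_dvd_mul_left
      apply ih hd0
      intro i hi
      obtain ⟨e, he⟩ := hc i hi
      exact ⟨e, mul_left_cancel₀ hq.ne_zero (by linear_combination he)⟩
  obtain ⟨M, f0, hf0M⟩ := IsLocalization.Away.surj (S := A) x f
  replace hf0M : f * α x ^ M = α f0 := hf0M
  have hfas (w : A) : α f0 ∣ w ↔ f ∣ w := by
    rw [← hf0M]; exact (hu.pow M).mul_right_dvd
  have hf00 : f0 ≠ 0 := by
    rintro rfl
    rw [map_zero] at hf0M
    rcases mul_eq_zero.1 hf0M with h | h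
    · exact hf0 h
    · exact (hu.pow M).ne_zero h
  -- uniform power
  let K : ℕ →o Ideal R :=
    { toFun := fun N => Submodule.comap (LinearMap.mulLeft R (x ^ N)) (Ideal.span {f0})
      monotone' := by
        intro N N' h r hr
        simp only [Submodule.mem_comap, LinearMap.mulLeft_apply, Ideal.mem_span_singleton] at hr ⊢
        obtain ⟨p, rfl⟩ := Nat.exists_eq_add_of_le h
        rw [pow_add, mul_comm (x ^ N), mul_assoc]
        exact hr.mul_left _ }
  have hK (N : ℕ) (r : R) : r ∈ K N ↔ f0 ∣ x ^ N * r := by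
    change r ∈ Submodule.comap (LinearMap.mulLeft R (x ^ N)) (Ideal.span {f0}) ↔ _
    simp only [Submodule.mem_comap, LinearMap.mulLeft_apply, Ideal.mem_span_singleton]
  obtain ⟨N, hN⟩ := monotone_stabilizes_iff_noetherian.2 H.noeth K
  have hIN (i : R) (hi : i ∈ I) : f0 ∣ x ^ N * i := by
    obtain ⟨N', h⟩ := (hdvd f0 i).1 ((hfas _).2 (hfI i hi))
    rw [← hK] at h ⊢
    rcases le_total N N' with h' | h'
    · rw [hN N' h']; exact h
    · exact K.monotone h' h
  let J : Ideal R := (Submodule.map (LinearMap.mulLeft R (x ^ N)) I).comap (LinearMap.mulLeft R f0)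
  have hJ (j : R) : j ∈ J ↔ ∃ i ∈ I, x ^ N * i = f0 * j := by
    simp [J]
  have hIJ (i) (hi : i ∈ I) : ∃ j ∈ J, x ^ N * i = f0 * j := by
    obtain ⟨j, hj⟩ := hIN i hi
    exact ⟨j, (hJ j).2 ⟨i, hi, hj⟩, hj⟩
  refine ⟨J, ?_, ideal_equiv I J (x ^ N) f0 (pow_ne_zero _ hx0) hf00 hIJ
    (fun j hj => (hJ j).1 hj), ?_⟩
  · obtain ⟨j, hj, h⟩ := hIJ i0 hi0
    intro hb
    rw [hb, Ideal.mem_bot] at hj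
    rw [hj, mul_zero] at h
    exact mul_ne_zero (pow_ne_zero _ hx0) hi00 h
  · intro d c hd hdc
    rw [← hdvd]
    apply hGA (α d) (by rwa [Ne, map_eq_zero_iff α hα])
    intro i hi
    obtain ⟨j, hj, h⟩ := hIJ i hi
    obtain ⟨e, he⟩ := (hdvd d (c * j)).2 (hdc j hj)
    have h' := congrArg α h
    rw [map_mul, map_mul, map_pow, ← hf0M] at h'
    rw [map_mul] at he
    rw [← (hu.pow N).dvd_mul_left]
    refine ⟨α x ^ M * e, ?_⟩
    linear_combination α c * h' + f * α x ^ M * he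

lemma classify (H : AnFacts k n R x y z) (hn : 2 ≤ n) {C : Type} [AddCommGroup C] [Module R C]
    (hr : Module.IsReflexive R C) (I : Ideal R) (hI : I ≠ ⊥) (e : C ≃ₗ[R] I) :
    ∃ m < n, Nonempty (C ≃ₗ[R] (Ideal.span {x, z ^ m} : Ideal R)) := by
  have := H.dom
  have hx0 : x ≠ 0 := by
    obtain ⟨ψ, h, -⟩ := H.evx
    intro h'; rw [h', map_zero] at h; exact Polynomial.X_ne_zero h.symm
  obtain ⟨J, hJ, ⟨e'⟩, hG⟩ := normalize_ideal H I hI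
  obtain ⟨s, m, hm, h⟩ := reflexive_ideal H hn J hJ (Module.equiv (e.trans e')) hG
  obtain ⟨e''⟩ := ideal_equiv J (Ideal.span {x, z ^ m}) 1 (x ^ s) one_ne_zero (pow_ne_zero _ hx0)
    (fun i hi => by
      obtain ⟨r', h1, h2⟩ := (h i).1 hi
      exact ⟨r', h1, by rw [one_mul, h2]⟩)
    (fun j hj => ⟨x ^ s * j, (h _).2 ⟨j, hj, rfl⟩, by rw [one_mul]⟩)
  exact ⟨m, hm, ⟨(e.trans e').trans e''⟩⟩

end main

/-- In `R = k[X,Y,Z]/(XY - Zⁿ)` (char k = 0, n ≥ 2), `Ext¹_R((x,zᵐ),(x,zᵐ)) ≠ 0` for all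
`0 < m < n`.  Consequently the only finitely generated rank-one reflexive (i.e. isomorphic to
a nonzero ideal and reflexive) `R`-module `C` with `Hom_R(C,C) ≅ R` naturally and
`Ext¹_R(C,C) = 0` is `R` itself. -/
theorem ext_one_ne_zero_and_trivial_one_semidualizing
    (k : Type) [Field k] [CharZero k] (n : ℕ) (hn : 2 ≤ n)
    (R : Type) [CommRing R]
    (e : (MvPolynomial (Fin 3) k ⧸
        Ideal.span {(X 0 : MvPolynomial (Fin 3) k) * X 1 - X 2 ^ n}) ≃+* R)
    (x y z : R)
    (hx : x = e (Ideal.Quotient.mk _ (X 0))) (hy : y = e (Ideal.Quotient.mk _ (X 1)))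
    (hz : z = e (Ideal.Quotient.mk _ (X 2))) :
    (∀ m : ℕ, 0 < m → m < n →
      ¬ Subsingleton (((Ext R (ModuleCat R) 1).obj
          (Opposite.op (ModuleCat.of R (Ideal.span {x, z ^ m})))).obj
        (ModuleCat.of R (Ideal.span {x, z ^ m})))) ∧
    (∀ (C : Type) (_ : AddCommGroup C) (_ : Module R C) (_ : Module.Finite R C),
      Module.IsReflexive R C →
      (∃ I : Ideal R, I ≠ ⊥ ∧ Nonempty (C ≃ₗ[R] I)) →
      Function.Bijective (LinearMap.lsmul R C) →
      Subsingleton (((Ext R (ModuleCat R) 1).obj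
        (Opposite.op (ModuleCat.of R C))).obj (ModuleCat.of R C)) →
      Nonempty (C ≃ₗ[R] R)) := by
  let π : MvPolynomial (Fin 3) k →+* R := e.toRingHom.comp (Ideal.Quotient.mk _)
  have hs : Function.Surjective π := e.surjective.comp Ideal.Quotient.mk_surjective
  have hk : RingHom.ker π = Ideal.span {(X 0 : MvPolynomial (Fin 3) k) * X 1 - X 2 ^ n} := by
    ext f
    rw [RingHom.mem_ker]
    change e (Ideal.Quotient.mk _ f) = 0 ↔ _
    rw [map_eq_zero_iff e e.injective, Ideal.Quotient.eq_zero_iff_mem]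
  have H : AnFacts k n R x y z := by
    rw [hx, hy, hz]
    exact anFacts hn hs hk
  refine ⟨fun m hm0 hmn h => ext_not_subsingleton H hm0 hmn (LinearEquiv.refl R _) h, ?_⟩
  rintro C _ _ _ hr ⟨I, hI, ⟨eI⟩⟩ - hE
  obtain ⟨m, hmn, ⟨e'⟩⟩ := classify H hn hr I hI eI
  rcases Nat.eq_zero_or_pos m with rfl | hm0
  · have ht : (Ideal.span {x, z ^ 0} : Ideal R) = ⊤ := by
      rw [Ideal.eq_top_iff_one]
      exact Ideal.subset_span (by simp)
    exact ⟨(e'.trans (LinearEquiv.ofEq _ _ ht)).trans Submodule.topEquiv⟩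
  · exact (ext_not_subsingleton H hm0 hmn e' hE).elim
end
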